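/- arXiv:2401.09611 — 2 statements merged into one kernel-verified Lean document; each statement's English description precedes it below -/
import Mathlib

section
/- Let n ≥ 2, 0 < α < 1, and let Ω ∈ L(log L)^{1/n'}(𝕊^{n−1}) have mean zero. Let n < p < n/α, 1/q = 1/p − α/n, and α − n/p < λ < 1 − n/p. Then there is C such that for all f ∈ C_c^∞(ℝ^n), (∫_{ℝ^n} (|x|^λ |T_{Ω,α}f(x)|)^q dx)^{1/q} ≤ C (∫_{ℝ^n} (|x|^λ |∇f(x)|)^p dx)^{1/p}. -/
open MeasureTheory Metric Set Filter
open scoped ENNReal NNReal Topology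

noncomputable section

abbrev Rn (n : ℕ) := EuclideanSpace ℝ (Fin n)

/-- An axis-parallel half-open cube in `ℝⁿ`. -/
structure Cube (n : ℕ) where
  corner : Fin n → ℝ
  side : ℝ
  side_pos : 0 < side

/-- The set of points of a cube. -/
def Cube.carrier {n : ℕ} (Q : Cube n) : Set (Rn n) :=
  {x | ∀ i, Q.corner i ≤ x i ∧ x i < Q.corner i + Q.side}

/-- Surface measure on the unit sphere `𝕊^{n-1} ⊆ ℝⁿ`. -/
def sphereMeasure (n : ℕ) : Measure (Rn n) :=
  (MeasureTheory.Measure.hausdorffMeasure ((n : ℝ) - 1)).restrict (sphere (0 : Rn n) 1)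

/-- `f ∈ C_c^∞(ℝⁿ)`. -/
def IsCcSmooth {n : ℕ} (f : Rn n → ℝ) : Prop :=
  ContDiff ℝ (⊤ : ℕ∞) f ∧ HasCompactSupport f

/-- Truncated rough fractional singular integral. -/
def roughOpTrunc (n : ℕ) (α : ℝ) (Ω f : Rn n → ℝ) (x : Rn n) (ε : ℝ) : ℝ :=
  ∫ y in {y : Rn n | ε < ‖y‖}, (Ω (‖y‖⁻¹ • y) / ‖y‖ ^ ((n : ℝ) + 1 - α)) * f (x - y)

/-- The rough fractional singular integral `T_{Ω,α} f`, as a principal value. -/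
def roughOp (n : ℕ) (α : ℝ) (Ω f : Rn n → ℝ) (x : Rn n) : ℝ :=
  limUnder (𝓝[>] (0 : ℝ)) (roughOpTrunc n α Ω f x)

/-- Riesz potential (modulo its normalizing constant) of a nonnegative function. -/
def rieszPot (n : ℕ) (α : ℝ) (g : Rn n → ℝ) (x : Rn n) : ℝ≥0∞ :=
  ∫⁻ y, ENNReal.ofReal (g y) / ENNReal.ofReal (‖x - y‖ ^ ((n : ℝ) - α))

/-- `|∇f|`. -/
def gradNorm {n : ℕ} (f : Rn n → ℝ) (y : Rn n) : ℝ := ‖gradient f y‖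

/-- Weak Lorentz norm `‖Ω‖_{L^{r,∞}(𝕊^{n-1})}`. -/
def weakLorentzSphere (n : ℕ) (r : ℝ) (Ω : Rn n → ℝ) : ℝ≥0∞ :=
  ⨆ (t : ℝ) (_ : 0 < t), ENNReal.ofReal t * sphereMeasure n {y | t < |Ω y|} ^ (1 / r)

/-- Lorentz norm `‖Ω‖_{L^{r,q}(𝕊^{n-1})}`. -/
def lorentzSphere (n : ℕ) (r q : ℝ) (Ω : Rn n → ℝ) : ℝ≥0∞ :=
  (ENNReal.ofReal r *
      ∫⁻ t in Ioi (0 : ℝ),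
        ENNReal.ofReal t ^ q * sphereMeasure n {y | t < |Ω y|} ^ (q / r) / ENNReal.ofReal t) ^ (1 / q)

/-- The Young function `Φ(t) = t log(1+t)^{1/n'}`, `1/n' = (n-1)/n`. -/
def orliczYoung (n : ℕ) (t : ℝ) : ℝ := t * Real.log (1 + t) ^ (((n : ℝ) - 1) / n)

/-- Admissible Orlicz levels for the `L(log L)^{1/n'}` norm w.r.t. normalized surface measure. -/
def orliczSet (n : ℕ) (Ω : Rn n → ℝ) : Set ℝ :=
  {lam | 0 < lam ∧ ⨍ y, orliczYoung n (|Ω y| / lam) ∂sphereMeasure n ≤ 1}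

/-- Orlicz norm `‖Ω‖_{L(log L)^{1/n'}(𝕊^{n-1})}`. -/
def orliczSphereNorm (n : ℕ) (Ω : Rn n → ℝ) : ℝ := sInf (orliczSet n Ω)

/-- A sparse family of cubes. -/
def IsSparse {n : ℕ} (𝒮 : Set (Cube n)) : Prop :=
  ∃ E : Cube n → Set (Rn n),
    (∀ Q ∈ 𝒮, E Q ⊆ Q.carrier ∧ volume Q.carrier ≤ 2 * volume (E Q)) ∧
    𝒮.Pairwise fun Q P => Disjoint (E Q) (E P)

/-- A dyadic grid of cubes. -/
def IsDyadicGrid {n : ℕ} (𝒟 : Set (Cube n)) : Prop :=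
  (∀ Q ∈ 𝒟, ∃ k : ℤ, Q.side = (2 : ℝ) ^ k) ∧
  (∀ (k : ℤ) (x : Rn n), ∃! Q : Cube n, Q ∈ 𝒟 ∧ Q.side = (2 : ℝ) ^ k ∧ x ∈ Q.carrier) ∧
  (∀ Q ∈ 𝒟, ∀ P ∈ 𝒟, Disjoint Q.carrier P.carrier ∨ Q.carrier ⊆ P.carrier ∨ P.carrier ⊆ Q.carrier)

/-- The shifted dyadic grid `𝒟_t = {2^k([0,1)^n + m + (-1)^k t)}`. -/
def shiftedGrid (n : ℕ) (t : Fin n → ℝ) : Set (Cube n) :=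
  {Q | ∃ (k : ℤ) (m : Fin n → ℤ),
      Q.side = (2 : ℝ) ^ k ∧ Q.corner = fun i => (2 : ℝ) ^ k * ((m i : ℝ) + (-1 : ℝ) ^ k * t i)}

/-- `(⨍_Q |g|^s)^{1/s}` as an extended nonnegative real. -/
def avgLs (n : ℕ) (s : ℝ) (Q : Cube n) (g : Rn n → ℝ) : ℝ≥0∞ :=
  ((volume Q.carrier)⁻¹ * ∫⁻ y in Q.carrier, ENNReal.ofReal |g y| ^ s) ^ (1 / s)

/-- The `L^s` sparse (or dyadic) fractional operator `I^𝒮_{α,L^s}`. -/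
def sparseOpLs (n : ℕ) (α s : ℝ) (𝒮 : Set (Cube n)) (g : Rn n → ℝ) (x : Rn n) : ℝ≥0∞ :=
  ∑' Q : 𝒮, Set.indicator (Q : Cube n).carrier
      (fun _ => ENNReal.ofReal ((Q : Cube n).side ^ α) * avgLs n s (Q : Cube n) g) x

/-- The `L^s` fractional maximal operator `M_{α,L^s}`. -/
def maxOpLs (n : ℕ) (α s : ℝ) (g : Rn n → ℝ) (x : Rn n) : ℝ≥0∞ :=
  ⨆ (Q : Cube n) (_ : x ∈ Q.carrier), ENNReal.ofReal (Q.side ^ α) * avgLs n s Q g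

/-- The measure `w dx` associated with a weight `w`. -/
def wMeasure (n : ℕ) (w : Rn n → ℝ) : Measure (Rn n) :=
  volume.withDensity fun x => ENNReal.ofReal (w x)

/-- Muckenhoupt `A_∞` (via the standard fair-proportion characterization). -/
def IsAinfty {n : ℕ} (w : Rn n → ℝ) : Prop :=
  ∃ C > (0 : ℝ), ∃ δ > (0 : ℝ), ∀ Q : Cube n, ∀ S ⊆ Q.carrier, MeasurableSet S →
    wMeasure n w S ≤
      ENNReal.ofReal C * (volume S / volume Q.carrier) ^ δ * wMeasure n w Q.carrier

/-- `‖g‖_{L^p(w)}` for an `ℝ≥0∞`-valued `g`. -/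
def lpNormW (n : ℕ) (p : ℝ) (w : Rn n → ℝ) (g : Rn n → ℝ≥0∞) : ℝ≥0∞ :=
  (∫⁻ x, g x ^ p ∂wMeasure n w) ^ (1 / p)

/-- `‖g‖_{L^{p,∞}(w)}` for an `ℝ≥0∞`-valued `g`. -/
def weakNormW (n : ℕ) (p : ℝ) (w : Rn n → ℝ) (g : Rn n → ℝ≥0∞) : ℝ≥0∞ :=
  ⨆ (lam : ℝ) (_ : 0 < lam),
    ENNReal.ofReal lam * wMeasure n w {x | ENNReal.ofReal lam < g x} ^ (1 / p)

/-- Unweighted `L^p` "norm" of an `ℝ≥0∞`-valued function. -/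
def lqNorm (n : ℕ) (p : ℝ) (g : Rn n → ℝ≥0∞) : ℝ≥0∞ :=
  (∫⁻ x, g x ^ p) ^ (1 / p)

/-- Unweighted weak `L^p` norm of an `ℝ≥0∞`-valued function. -/
def weakNorm (n : ℕ) (p : ℝ) (g : Rn n → ℝ≥0∞) : ℝ≥0∞ :=
  ⨆ (lam : ℝ) (_ : 0 < lam),
    ENNReal.ofReal lam * volume {x | ENNReal.ofReal lam < g x} ^ (1 / p)

/-- Maximal function of a measure over cubes. -/
def measMax (n : ℕ) (μ : Measure (Rn n)) (x : Rn n) : ℝ≥0∞ :=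
  ⨆ (Q : Cube n) (_ : x ∈ Q.carrier), μ Q.carrier / volume Q.carrier

/-- The rough fractional maximal operator `M_{Ω,α}`. -/
def roughMax (n : ℕ) (α : ℝ) (Ω f : Rn n → ℝ) (x : Rn n) : ℝ≥0∞ :=
  ⨆ (t : ℝ) (_ : 0 < t),
    ENNReal.ofReal (t ^ (α - 1)) * ((volume (ball (0 : Rn n) t))⁻¹ *
      ∫⁻ y in ball (0 : Rn n) t, ENNReal.ofReal |Ω (‖y‖⁻¹ • y) * f (x - y)|)

/-- Average of `f` over the ball `B(x,t)`. -/
def ballAvg {n : ℕ} (f : Rn n → ℝ) (x : Rn n) (t : ℝ) : ℝ :=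
  ⨍ y in ball x t, f y

/-- The sharp rough fractional maximal operator `M^#_{Ω,α}`. -/
def roughMaxSharp (n : ℕ) (α : ℝ) (Ω f : Rn n → ℝ) (x : Rn n) : ℝ≥0∞ :=
  ⨆ (t : ℝ) (_ : 0 < t),
    ENNReal.ofReal (t ^ (α - 1)) * ((volume (ball (0 : Rn n) t))⁻¹ *
      ∫⁻ y in ball (0 : Rn n) t,
        ENNReal.ofReal (|Ω (‖y‖⁻¹ • y)| * |f (x - y) - ballAvg f x t|))

/-- The natural rough maximal operator `M^♮_Ω` (with `α = 1`). -/
def roughMaxNatural (n : ℕ) (Ω f : Rn n → ℝ) (x : Rn n) : ℝ≥0∞ :=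
  ⨆ (t : ℝ) (_ : 0 < t),
    ENNReal.ofReal |⨍ y in ball (0 : Rn n) t, Ω (‖y‖⁻¹ • y) * f (x - y)|

/-- The fractional spherical maximal operator `𝒮_β`. -/
def sphMax (n : ℕ) (β : ℝ) (f : Rn n → ℝ) (x : Rn n) : ℝ≥0∞ :=
  ⨆ (r : ℝ) (_ : 0 < r),
    ENNReal.ofReal (r ^ β) *
      ((MeasureTheory.Measure.hausdorffMeasure ((n : ℝ) - 1) (sphere x r))⁻¹ *
        ∫⁻ y in sphere x r, ENNReal.ofReal |f y|
          ∂(MeasureTheory.Measure.hausdorffMeasure ((n : ℝ) - 1)))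


/-- The measure `w^q dx`. -/
def wqMeasure (n : ℕ) (q : ℝ) (w : Rn n → ℝ) : Measure (Rn n) :=
  volume.withDensity fun x => ENNReal.ofReal (w x) ^ q

/-- Weak norm `‖g‖_{L^{q,∞}(w^q)}` for `ℝ≥0∞`-valued `g`. -/
def weakNormWq (n : ℕ) (q : ℝ) (w : Rn n → ℝ) (g : Rn n → ℝ≥0∞) : ℝ≥0∞ :=
  ⨆ (lam : ℝ) (_ : 0 < lam),
    ENNReal.ofReal lam * wqMeasure n q w {x | ENNReal.ofReal lam < g x} ^ (1 / q)

theorem unif_aux {X : Type*} [MetricSpace X] [CompactSpace X] [MeasurableSpace X] [BorelSpace X]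
    (μ ν : Measure X) [IsFiniteMeasure μ] [IsFiniteMeasure ν] (φ ψ : ℝ → ℝ≥0∞)
    (hφ : ∀ x r, μ (ball x r) = φ r) (hψ : ∀ x r, ν (ball x r) = ψ r)
    (hφ0 : ∀ r, 0 < r → φ r ≠ 0) (K : Set X) (hK : IsClosed K) :
    μ K * ν univ ≤ μ univ * ν K := by
  rcases isEmpty_or_nonempty X with hX | hX
  · simp [Set.eq_empty_of_isEmpty K]
  have hsym : ∀ (r : ℝ) (A : Set X), IsClosed A →
      ψ r * μ A = ∫⁻ y, μ (A ∩ ball y r) ∂ν := by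
    intro r A hA
    have hmeas : MeasurableSet {z : X × X | z.1 ∈ A ∧ dist z.1 z.2 < r} :=
      (hA.measurableSet.preimage measurable_fst).inter
        (isOpen_lt continuous_dist continuous_const).measurableSet
    have h1 := Measure.prod_apply (μ := μ) (ν := ν) hmeas
    have h2 := Measure.prod_apply_symm (μ := μ) (ν := ν) hmeas
    have e1 : ∀ x, ν (Prod.mk x ⁻¹' {z : X × X | z.1 ∈ A ∧ dist z.1 z.2 < r})
        = A.indicator (fun _ => ψ r) x := by
      intro x
      by_cases hx : x ∈ A
      · rw [indicator_of_mem hx, ← hψ x r]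
        congr 1; ext y; simp [hx, dist_comm]
      · rw [indicator_of_notMem hx]
        convert measure_empty (μ := ν)
        ext y; simp [hx]
    have e2 : ∀ y, μ ((fun x => (x, y)) ⁻¹' {z : X × X | z.1 ∈ A ∧ dist z.1 z.2 < r})
        = μ (A ∩ ball y r) := by
      intro y; congr 1
    simp only [e1] at h1
    simp only [e2] at h2
    rw [← h2, h1, lintegral_indicator hA.measurableSet, setLIntegral_const]
  have hfin : ∀ r, φ r ≠ ∞ := fun r => by
    rw [← hφ (Classical.arbitrary X) r]; exact measure_ne_top _ _
  have huniv : ∀ r, ψ r * μ univ = φ r * ν univ := by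
    intro r
    rw [hsym r univ isClosed_univ]
    simp [hφ]
  have hle : ∀ r, ψ r * μ K ≤ φ r * ν (thickening r K) := by
    intro r
    rw [hsym r K hK, ← setLIntegral_const, ← lintegral_indicator isOpen_thickening.measurableSet]
    apply lintegral_mono
    intro y
    by_cases hy : y ∈ thickening r K
    · simp only [indicator_of_mem hy]
      rw [← hφ y r]; exact measure_mono inter_subset_right
    · simp only [indicator_of_notMem hy]
      have : K ∩ ball y r = ∅ := by
        ext z; simp only [mem_inter_iff, mem_ball, mem_empty_iff_false, iff_false, not_and]
        intro hz hd
        exact hy (mem_thickening_iff.2 ⟨z, hz, by rwa [dist_comm]⟩)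
      simp [this]
  have hle2 : ∀ r, 0 < r → μ K * ν univ ≤ μ univ * ν (thickening r K) := by
    intro r hr
    have : φ r * (μ K * ν univ) ≤ φ r * (μ univ * ν (thickening r K)) := by
      calc φ r * (μ K * ν univ) = (ψ r * μ K) * μ univ := by
            rw [mul_comm (μ K), ← mul_assoc, ← huniv]; ring
        _ ≤ (φ r * ν (thickening r K)) * μ univ := mul_le_mul' (hle r) le_rfl
        _ = _ := by ring
    exact (ENNReal.mul_le_mul_iff_right (hφ0 r hr) (hfin r)).1 this
  have ht := tendsto_measure_thickening_of_isClosed (μ := ν) (s := K)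
    ⟨1, one_pos, measure_ne_top _ _⟩ hK
  have ht2 := ENNReal.Tendsto.const_mul (a := μ univ) ht (Or.inr (measure_ne_top _ _))
  refine ge_of_tendsto ht2 ?_
  filter_upwards [self_mem_nhdsWithin] with r hr using hle2 r hr

theorem unif_pos {X : Type*} [MetricSpace X] [CompactSpace X] [MeasurableSpace X] [BorelSpace X]
    (μ : Measure X) (φ : ℝ → ℝ≥0∞)
    (hφ : ∀ x r, μ (ball x r) = φ r) (h0 : μ univ ≠ 0) (r : ℝ) (hr : 0 < r) : φ r ≠ 0 := by
  intro h
  apply h0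
  obtain ⟨t, -, htf, ht⟩ := finite_cover_balls_of_compact (isCompact_univ (X := X)) hr
  refine measure_mono_null ht ((measure_biUnion_null_iff htf.countable).2 ?_)
  intro x _
  rw [hφ, h]

theorem unif_eq {X : Type*} [MetricSpace X] [CompactSpace X] [MeasurableSpace X] [BorelSpace X]
    (μ ν : Measure X) [IsFiniteMeasure μ] [IsFiniteMeasure ν] (φ ψ : ℝ → ℝ≥0∞)
    (hφ : ∀ x r, μ (ball x r) = φ r) (hψ : ∀ x r, ν (ball x r) = ψ r)
    (hμ : μ univ ≠ 0) (hν : ν univ ≠ 0) :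
    ∃ c : ℝ≥0∞, c ≠ ∞ ∧ μ = c • ν := by
  have hc : μ univ / ν univ ≠ ∞ := ENNReal.div_ne_top (measure_ne_top _ _) hν
  refine ⟨μ univ / ν univ, hc, ?_⟩
  have : IsFiniteMeasure ((μ univ / ν univ) • ν) := ν.smul_finite hc
  have hK : ∀ K, IsClosed K → μ K = (μ univ / ν univ) * ν K := by
    intro K hK
    have h1 := unif_aux μ ν φ ψ hφ hψ (unif_pos μ φ hφ hμ) K hK
    have h2 := unif_aux ν μ ψ φ hψ hφ (unif_pos ν ψ hψ hν) K hK
    have h3 : μ K * ν univ = μ univ * ν K := le_antisymm h1 (by rw [mul_comm, mul_comm (μ K)]; exact h2)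
    rw [ENNReal.div_eq_inv_mul, mul_assoc, ← h3, mul_comm (μ K), ← mul_assoc,
      ENNReal.inv_mul_cancel hν (measure_ne_top _ _), one_mul]
  refine ext_of_generate_finite {s | IsClosed s} ?_ isPiSystem_isClosed ?_ ?_
  · rw [← borel_eq_generateFrom_isClosed]; exact BorelSpace.measurable_eq
  · intro s hs; simp [hK s hs]
  · rw [Measure.smul_apply, smul_eq_mul]; exact hK univ isClosed_univ



theorem finrank_hyp (n : ℕ) (hn : 2 ≤ n) (v : Rn n) (hv : ‖v‖ = 1) :
    (Module.finrank ℝ (Submodule.span ℝ {v})ᗮ : ℝ) = (n : ℝ) - 1 := by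
  have hv0 : v ≠ 0 := by intro h; simp [h] at hv
  obtain ⟨m, rfl⟩ : ∃ m, n = m + 1 := ⟨n - 1, by omega⟩
  have : Fact (Module.finrank ℝ (Rn (m+1)) = m + 1) := ⟨by simp⟩
  rw [Submodule.finrank_orthogonal_span_singleton (n := m) hv0]
  push_cast; ring

theorem haus_half_fin (n : ℕ) (hn : 2 ≤ n) (v : Rn n) (hv : ‖v‖ = 1) :
    Measure.hausdorffMeasure ((n : ℝ) - 1) {x : Rn n | ‖x‖ = 1 ∧ inner ℝ v x ≤ 0} ≠ ∞ := by
  have hn1 : (0:ℝ) ≤ (n:ℝ) - 1 := by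
    have : (2:ℝ) ≤ n := by exact_mod_cast hn
    linarith
  set H := (Submodule.span ℝ {v})ᗮ
  set F : H → Rn n := fun w => stereoInvFunAux v (w : Rn n) with hF
  have hFc : ContDiff ℝ 1 F := contDiff_stereoInvFunAux.comp H.subtypeL.contDiff
  obtain ⟨K, hK⟩ : ∃ K, LipschitzOnWith K F (closedBall 0 2) :=
    hFc.contDiffOn.exists_lipschitzOnWith one_ne_zero (convex_closedBall _ _)
      (isCompact_closedBall _ _)
  have h1 := hK.hausdorffMeasure_image_le hn1
  have h2 : Measure.hausdorffMeasure ((n : ℝ) - 1) (closedBall (0:H) 2) ≠ ∞ := by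
    rw [← finrank_hyp n hn v hv]
    exact (isCompact_closedBall _ _).measure_lt_top.ne
  refine ne_top_of_le_ne_top ?_ ((measure_mono ?_).trans h1)
  · exact ENNReal.mul_ne_top (ENNReal.rpow_ne_top_of_nonneg hn1 (by simp)) h2
  · rintro x ⟨hx, hx2⟩
    refine ⟨stereoToFun v x, ?_, ?_⟩
    · rw [mem_closedBall_zero_iff, stereoToFun_apply, norm_smul, innerSL_apply_apply]
      have : ‖(Submodule.span ℝ {v})ᗮ.orthogonalProjectionOnto x‖ ≤ 1 := by
        rw [← hx]; exact Submodule.norm_orthogonalProjectionOnto_apply_le _ _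
      have h3 : ‖2 / (1 - inner ℝ v x)‖ ≤ 2 := by
        rw [Real.norm_of_nonneg (by apply div_nonneg <;> linarith), div_le_iff₀ (by linarith)]
        linarith
      nlinarith [norm_nonneg ((Submodule.span ℝ {v})ᗮ.orthogonalProjectionOnto x)]
    · have := stereo_left_inv hv (x := ⟨x, by simp [hx]⟩) (by
        intro h
        have : x = v := h
        rw [this, real_inner_self_eq_norm_sq, hv] at hx2
        norm_num at hx2)
      exact congrArg Subtype.val this

theorem exists_unit (n : ℕ) (hn : 2 ≤ n) : ∃ v : Rn n, ‖v‖ = 1 :=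
  ⟨EuclideanSpace.single ⟨0, by omega⟩ 1, by simp⟩

theorem haus_sphere_fin (n : ℕ) (hn : 2 ≤ n) :
    Measure.hausdorffMeasure ((n : ℝ) - 1) (sphere (0 : Rn n) 1) ≠ ∞ := by
  obtain ⟨v, hv⟩ := exists_unit n hn
  have h1 := haus_half_fin n hn v hv
  have h2 := haus_half_fin n hn (-v) (by simpa using hv)
  refine ne_top_of_le_ne_top (ENNReal.add_ne_top.2 ⟨h1, h2⟩)
    ((measure_mono ?_).trans (measure_union_le _ _))
  intro x hx
  have hx : ‖x‖ = 1 := by simpa using hx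
  rcases le_total (inner ℝ v x) 0 with h | h
  · left; exact ⟨hx, h⟩
  · right; exact ⟨hx, by rw [inner_neg_left]; linarith⟩

theorem haus_sphere_pos (n : ℕ) (hn : 2 ≤ n) :
    Measure.hausdorffMeasure ((n : ℝ) - 1) (sphere (0 : Rn n) 1) ≠ 0 := by
  have hn1 : (0:ℝ) ≤ (n:ℝ) - 1 := by
    have : (2:ℝ) ≤ n := by exact_mod_cast hn
    linarith
  obtain ⟨v, hv⟩ := exists_unit n hn
  set H := (Submodule.span ℝ {v})ᗮ
  have hlip : LipschitzWith 1 (fun x : Rn n => H.orthogonalProjectionOnto x) :=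
    LipschitzWith.of_dist_le_mul fun x y => by
      rw [dist_eq_norm, dist_eq_norm, ← map_sub]
      simpa using Submodule.norm_orthogonalProjectionOnto_apply_le H (x - y)
  have h1 := hlip.hausdorffMeasure_image_le hn1 (sphere (0 : Rn n) 1)
  intro h0
  rw [h0, mul_zero] at h1
  have h2 : Measure.hausdorffMeasure ((n : ℝ) - 1) (ball (0:H) 1) ≠ 0 := by
    rw [← finrank_hyp n hn v hv]
    exact (measure_ball_pos _ _ one_pos).ne'
  apply h2
  refine measure_mono_null ?_ (le_antisymm h1 (zero_le))
  intro w hw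
  have hw : ‖(w : Rn n)‖ < 1 := by simpa using hw
  have hort : inner ℝ (w : Rn n) v = 0 := by
    have := Submodule.mem_orthogonal_singleton_iff_inner_left.1 w.2
    exact this
  refine ⟨(w : Rn n) + Real.sqrt (1 - ‖(w : Rn n)‖ ^ 2) • v, ?_, ?_⟩
  · have : ‖(w : Rn n) + Real.sqrt (1 - ‖(w : Rn n)‖ ^ 2) • v‖ ^ 2 = 1 := by
      rw [norm_add_sq_real, inner_smul_right, hort, norm_smul, hv, mul_one, Real.norm_eq_abs, sq_abs,
        Real.sq_sqrt (by nlinarith [norm_nonneg (w : Rn n)])]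
      ring
    rw [mem_sphere_zero_iff_norm]
    nlinarith [norm_nonneg ((w : Rn n) + Real.sqrt (1 - ‖(w : Rn n)‖ ^ 2) • v)]
  · have hv' : H.orthogonalProjectionOnto v = 0 :=
      Submodule.orthogonalProjectionOnto_orthogonal_apply_eq_zero
        (Submodule.mem_span_singleton_self v)
    simp [hv']

open scoped Pointwise in
theorem sphere_prop (n : ℕ) (hn : 2 ≤ n) :
    ∃ c : ℝ≥0∞, c ≠ ∞ ∧
      Measure.map ((↑) : sphere (0 : Rn n) 1 → Rn n) (volume : Measure (Rn n)).toSphere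
        = c • sphereMeasure n := by
  have hn1 : (0:ℝ) ≤ (n:ℝ) - 1 := by
    have : (2:ℝ) ≤ n := by exact_mod_cast hn
    linarith
  obtain ⟨v, hv⟩ := exists_unit n hn
  have : Nontrivial (Rn n) := ⟨v, 0, by intro h; simp [h] at hv⟩
  set X := sphere (0 : Rn n) 1
  let ι : X → Rn n := (↑)
  have hι : Isometry ι := isometry_subtype_coe
  have himg : ∀ A : Set X, Measure.hausdorffMeasure ((n : ℝ) - 1) A =
      Measure.hausdorffMeasure ((n : ℝ) - 1) (ι '' A) := fun A =>
    (hι.hausdorffMeasure_image (Or.inl hn1) A).symm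
  let μ : Measure X := (volume : Measure (Rn n)).toSphere
  let ν : Measure X := Measure.hausdorffMeasure ((n : ℝ) - 1)
  have hνu : ν univ = Measure.hausdorffMeasure ((n : ℝ) - 1) (sphere (0 : Rn n) 1) := by
    rw [himg univ, image_univ]; congr 1; exact Subtype.range_coe
  have : IsFiniteMeasure ν := ⟨by rw [hνu]; exact (haus_sphere_fin n hn).lt_top⟩
  have hrot : ∀ x y : X, ∃ L : Rn n ≃ₗᵢ[ℝ] Rn n, ∀ r, L '' (ι '' ball x r) = ι '' ball y r := by
    intro x y
    have hx : ‖(x : Rn n)‖ = 1 := by simpa using x.2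
    have hy : ‖(y : Rn n)‖ = 1 := by simpa using y.2
    refine ⟨(Submodule.span ℝ {(x : Rn n) - y})ᗮ.reflection, fun r => ?_⟩
    set L := (Submodule.span ℝ {(x : Rn n) - y})ᗮ.reflection
    have hL : L x = y := Submodule.reflection_sub (by rw [hx, hy])
    have hball : ∀ z : X, ι '' ball z r = {w : Rn n | ‖w‖ = 1 ∧ dist w z < r} := by
      intro z; ext w
      constructor
      · rintro ⟨u, hu, rfl⟩
        exact ⟨mem_sphere_zero_iff_norm.1 u.2, hu⟩
      · rintro ⟨h1, h2⟩
        exact ⟨⟨w, by simpa [X] using h1⟩, h2, rfl⟩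
    rw [hball, hball, LinearIsometryEquiv.image_eq_preimage_symm]
    ext w
    simp only [mem_preimage, mem_ofPred_eq, LinearIsometryEquiv.norm_map]
    rw [← L.dist_map, L.apply_symm_apply, hL]
  let x0 : X := ⟨v, by simp [X, hv]⟩
  have hψ : ∀ x r, ν (ball x r) = ν (ball x0 r) := by
    intro x r
    obtain ⟨L, hL⟩ := hrot x0 x
    rw [himg, himg, ← hL r]
    exact L.toIsometryEquiv.hausdorffMeasure_image _ _
  have hφ : ∀ x r, μ (ball x r) = μ (ball x0 r) := by
    intro x r
    obtain ⟨L, hL⟩ := hrot x0 x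
    simp only [μ]
    rw [Measure.toSphere_apply' _ measurableSet_ball, Measure.toSphere_apply' _ measurableSet_ball]
    congr 1
    change volume (Ioo (0:ℝ) 1 • (ι '' ball x r)) = volume (Ioo (0:ℝ) 1 • (ι '' ball x0 r))
    rw [← hL r]
    have : Ioo (0:ℝ) 1 • (L '' (ι '' ball x0 r)) = L '' (Ioo (0:ℝ) 1 • (ι '' ball x0 r)) := by
      ext w
      simp only [Set.mem_smul, mem_image]
      constructor
      · rintro ⟨t, ht, -, ⟨u, hu, rfl⟩, rfl⟩
        exact ⟨t • u, ⟨t, ht, u, hu, rfl⟩, by simp⟩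
      · rintro ⟨-, ⟨t, ht, u, hu, rfl⟩, rfl⟩
        exact ⟨t, ht, L u, ⟨u, hu, rfl⟩, by simp⟩
    rw [this, LinearIsometryEquiv.image_eq_preimage_symm]
    exact L.symm.measurePreserving.measure_preimage_equiv (f := L.symm.toMeasurableEquiv) _
  obtain ⟨c, hc, h⟩ := unif_eq μ ν _ _ hφ hψ
    (by intro h; exact Measure.toSphere_ne_zero (volume : Measure (Rn n)) (Measure.measure_univ_eq_zero.1 h))
    (by rw [hνu]; exact haus_sphere_pos n hn)
  refine ⟨c, hc, ?_⟩
  change Measure.map ι μ = _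
  rw [h, Measure.map_smul, hι.map_hausdorffMeasure (Or.inl hn1)]
  have : range ι = sphere (0 : Rn n) 1 := Subtype.range_coe
  rw [this]; rfl


theorem lintegral_volumeIoiPow (m : ℕ) (G : ℝ → ℝ≥0∞) (hG : Measurable G) :
    ∫⁻ r : Ioi (0:ℝ), G r ∂(Measure.volumeIoiPow m) =
      ∫⁻ r in Ioi (0:ℝ), ENNReal.ofReal (r ^ m) * G r := by
  rw [Measure.volumeIoiPow, lintegral_withDensity_eq_lintegral_mul]
  · exact lintegral_subtype_comap measurableSet_Ioi (fun r => ENNReal.ofReal (r ^ m) * G r)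
  · fun_prop
  · fun_prop

theorem polar_lintegral (n : ℕ) (hn : 2 ≤ n) (F : Rn n → ℝ≥0∞) (hF : Measurable F)
    (G : ℝ → ℝ≥0∞) (hG : Measurable G) :
    ∫⁻ y : Rn n, F (‖y‖⁻¹ • y) * G ‖y‖ =
      (∫⁻ θ : sphere (0 : Rn n) 1, F θ ∂(volume : Measure (Rn n)).toSphere) *
        ∫⁻ r in Ioi (0:ℝ), ENNReal.ofReal (r ^ (n-1)) * G r := by
  have : Nontrivial (Rn n) :=
    ⟨EuclideanSpace.single ⟨0, by omega⟩ 1, 0, by intro h; simpa using congrArg norm h⟩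
  calc ∫⁻ y : Rn n, F (‖y‖⁻¹ • y) * G ‖y‖
      = ∫⁻ y in ({0}ᶜ : Set (Rn n)), F (‖y‖⁻¹ • y) * G ‖y‖ := by
        rw [restrict_compl_singleton]
    _ = ∫⁻ y : ({0}ᶜ : Set (Rn n)), F (‖(y:Rn n)‖⁻¹ • (y:Rn n)) * G ‖(y:Rn n)‖ ∂(volume.comap Subtype.val) :=
        (lintegral_subtype_comap (measurableSet_singleton _).compl
          (fun y : Rn n => F (‖y‖⁻¹ • y) * G ‖y‖)).symm
    _ = ∫⁻ z : sphere (0 : Rn n) 1 × Ioi (0:ℝ), F z.1 * G z.2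
          ∂(volume.toSphere.prod (.volumeIoiPow (Module.finrank ℝ (Rn n) - 1))) := by
        have := (volume : Measure (Rn n)).measurePreserving_homeomorphUnitSphereProd.lintegral_comp
          (f := fun z : sphere (0 : Rn n) 1 × Ioi (0:ℝ) => F z.1 * G z.2) (by fun_prop)
        rw [← this]
        simp
    _ = _ := by
        rw [lintegral_prod_mul (f := fun z : sphere (0 : Rn n) 1 => F z)
          (g := fun r : Ioi (0:ℝ) => G r) (by fun_prop) (by fun_prop),
          lintegral_volumeIoiPow _ _ hG]
        simp

theorem polar_integral_zero (n : ℕ) (hn : 2 ≤ n) (Ω : Rn n → ℝ) 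
    (G : ℝ → ℝ) 
    (h0 : ∫ θ : sphere (0 : Rn n) 1, Ω θ ∂(volume : Measure (Rn n)).toSphere = 0) :
    ∫ y : Rn n, Ω (‖y‖⁻¹ • y) * G ‖y‖ = 0 := by
  have : Nontrivial (Rn n) :=
    ⟨EuclideanSpace.single ⟨0, by omega⟩ 1, 0, by intro h; simpa using congrArg norm h⟩
  calc ∫ y : Rn n, Ω (‖y‖⁻¹ • y) * G ‖y‖
      = ∫ y : ({0}ᶜ : Set (Rn n)), Ω (‖(y:Rn n)‖⁻¹ • (y:Rn n)) * G ‖(y:Rn n)‖ ∂(volume.comap Subtype.val) := by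
        rw [integral_subtype_comap (measurableSet_singleton _).compl
          (fun y : Rn n => Ω (‖y‖⁻¹ • y) * G ‖y‖), restrict_compl_singleton]
    _ = ∫ z : sphere (0 : Rn n) 1 × Ioi (0:ℝ), Ω z.1 * G z.2
          ∂(volume.toSphere.prod (.volumeIoiPow (Module.finrank ℝ (Rn n) - 1))) := by
        have := (volume : Measure (Rn n)).measurePreserving_homeomorphUnitSphereProd.integral_comp
          (Homeomorph.measurableEmbedding _)
          (fun z : sphere (0 : Rn n) 1 × Ioi (0:ℝ) => Ω z.1 * G z.2)
        rw [← this]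
        simp
    _ = _ := by
        rw [integral_prod_mul (f := fun z : sphere (0 : Rn n) 1 => Ω z)
          (g := fun r : Ioi (0:ℝ) => G r), h0, zero_mul]

theorem omega_transfer (n : ℕ) (hn : 2 ≤ n) (Ω : Rn n → ℝ)
    (hΩint : Integrable Ω (sphereMeasure n))
    (hΩmean : ∫ y, Ω y ∂sphereMeasure n = 0) :
    ∫⁻ θ : sphere (0 : Rn n) 1, ENNReal.ofReal |Ω θ| ∂(volume : Measure (Rn n)).toSphere ≠ ∞ ∧
    ∫ θ : sphere (0 : Rn n) 1, Ω θ ∂(volume : Measure (Rn n)).toSphere = 0 := by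
  obtain ⟨c, hc, h⟩ := sphere_prop n hn
  have hemb : MeasurableEmbedding ((↑) : sphere (0 : Rn n) 1 → Rn n) :=
    MeasurableEmbedding.subtype_coe isClosed_sphere.measurableSet
  have hi : Integrable Ω (Measure.map ((↑) : sphere (0 : Rn n) 1 → Rn n)
      (volume : Measure (Rn n)).toSphere) := by
    rw [h]; exact hΩint.smul_measure hc
  constructor
  · have := (hemb.integrable_map_iff.1 hi).2
    rw [hasFiniteIntegral_iff_norm] at this
    exact this.ne
  · rw [← hemb.integral_map, h, integral_smul_measure, hΩmean, smul_zero]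

theorem lip_of_cc {n : ℕ} (f : Rn n → ℝ) (hf : ContDiff ℝ (⊤ : ℕ∞) f) (hc : HasCompactSupport f) :
    ∃ L : ℝ, 0 ≤ L ∧ ∀ x y, |f (x - y) - f x| ≤ L * ‖y‖ := by
  have h1 : ContDiff ℝ 1 f := hf.of_le (by exact_mod_cast le_top)
  obtain ⟨K, hK⟩ := ContDiff.lipschitzWith_of_hasCompactSupport hc h1 one_ne_zero
  refine ⟨K, K.2, fun x y => ?_⟩
  have := hK.dist_le_mul (x - y) x
  simpa [Real.dist_eq, dist_eq_norm] using this

/-- pointwise bound by absolutely convergent integral -/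
theorem rough_bound (n : ℕ) (hn : 2 ≤ n) (α : ℝ) (hα0 : 0 < α) (hα1 : α < 1)
    (Ω : Rn n → ℝ) (hΩmeas : Measurable Ω)
    (hΩfin : ∫⁻ θ : sphere (0 : Rn n) 1, ENNReal.ofReal |Ω θ| ∂(volume : Measure (Rn n)).toSphere ≠ ∞)
    (hΩ0 : ∫ θ : sphere (0 : Rn n) 1, Ω θ ∂(volume : Measure (Rn n)).toSphere = 0)
    (f : Rn n → ℝ) (hf : ContDiff ℝ (⊤ : ℕ∞) f) (hc : HasCompactSupport f) (x : Rn n) :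
    ENNReal.ofReal |limUnder (𝓝[>] (0 : ℝ)) (fun ε => ∫ y in {y : Rn n | ε < ‖y‖},
      (Ω (‖y‖⁻¹ • y) / ‖y‖ ^ ((n : ℝ) + 1 - α)) * f (x - y))| ≤
    ∫⁻ y : Rn n, ENNReal.ofReal (|Ω (‖y‖⁻¹ • y)| * (‖y‖ ^ ((n : ℝ) + 1 - α))⁻¹ * |f (x - y) - f x|) := by
  obtain ⟨L, hL0, hL⟩ := lip_of_cc f hf hc
  obtain ⟨B, hB⟩ := hf.continuous.bounded_above_of_compact_support hc
  have hB0 : 0 ≤ B := (norm_nonneg _).trans (hB 0)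
  have hfm : Measurable f := hf.continuous.measurable
  set k : Rn n → ℝ := fun y => Ω (‖y‖⁻¹ • y) / ‖y‖ ^ ((n : ℝ) + 1 - α) with hk
  have hkm : Measurable k := by
    apply Measurable.div
    · exact hΩmeas.comp (by fun_prop)
    · fun_prop
  -- general integrability
  have hint : ∀ G : ℝ → ℝ, Measurable G → (∀ r, 0 ≤ G r) →
      IntegrableOn (fun r => r ^ (α - 2) * G r) (Ioi 0) →
      Integrable (fun y : Rn n => k y * G ‖y‖) := by
    intro G hG hG0 hi
    refine ⟨(hkm.mul (hG.comp measurable_norm)).aestronglyMeasurable, ?_⟩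
    rw [hasFiniteIntegral_iff_norm]
    have e : ∀ y : Rn n, ENNReal.ofReal ‖k y * G ‖y‖‖ = ENNReal.ofReal |Ω (‖y‖⁻¹ • y)| *
        (fun r : ℝ => ENNReal.ofReal ((r ^ ((n : ℝ) + 1 - α))⁻¹ * G r)) ‖y‖ := by
      intro y
      rw [← ENNReal.ofReal_mul (abs_nonneg _)]
      congr 1
      rw [norm_mul, Real.norm_of_nonneg (hG0 _), hk, norm_div, Real.norm_eq_abs,
        Real.norm_of_nonneg (by positivity)]
      ring
    simp_rw [e]
    rw [polar_lintegral n hn (fun θ => ENNReal.ofReal |Ω θ|) (by fun_prop)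
      (fun r : ℝ => ENNReal.ofReal ((r ^ ((n : ℝ) + 1 - α))⁻¹ * G r)) (by fun_prop)]
    refine ENNReal.mul_lt_top hΩfin.lt_top ?_
    have h2 := hi.2
    rw [hasFiniteIntegral_iff_norm] at h2
    refine lt_of_le_of_lt (le_of_eq ?_) h2
    apply setLIntegral_congr_fun measurableSet_Ioi
    intro r hr
    have hr : 0 < r := hr
    simp only
    rw [← ENNReal.ofReal_mul (by positivity)]
    congr 1
    rw [Real.norm_of_nonneg (mul_nonneg (by positivity) (hG0 r)), ← Real.rpow_neg hr.le,
      ← Real.rpow_natCast, ← mul_assoc, ← Real.rpow_add hr]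
    congr 2
    rw [Nat.cast_sub (by omega)]; push_cast; ring
  have hIoi : ∀ ε > 0, IntegrableOn (fun r : ℝ => r ^ (α - 2)) (Ioi ε) := fun ε hε =>
    integrableOn_Ioi_rpow_of_lt (by linarith) hε
  have hmin : IntegrableOn (fun r : ℝ => r ^ (α - 2) * min (L * r) (2 * B)) (Ioi 0) := by
    rw [← Ioc_union_Ioi_eq_Ioi (zero_le_one (α := ℝ))]
    apply IntegrableOn.union
    · have h1 : IntegrableOn (fun r : ℝ => r ^ (α - 1) * L) (Ioc 0 1) := by
        apply Integrable.mul_const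
        exact (intervalIntegrable_iff_integrableOn_Ioc_of_le zero_le_one).1
          (intervalIntegral.intervalIntegrable_rpow' (by linarith))
      refine Integrable.mono' h1 (by fun_prop) ?_
      refine (ae_restrict_iff' measurableSet_Ioc).2 (Eventually.of_forall fun r hr => ?_)
      have hr0 : 0 < r := hr.1
      rw [Real.norm_of_nonneg (by positivity), show α - 1 = (α - 2) + 1 by ring,
        Real.rpow_add_one hr0.ne', mul_assoc, mul_comm r]
      gcongr
      exact min_le_left _ _
    · have h1 : IntegrableOn (fun r : ℝ => r ^ (α - 2) * (2 * B)) (Ioi 1) :=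
        (hIoi 1 one_pos).mul_const _
      refine Integrable.mono' h1 (by fun_prop) ?_
      refine (ae_restrict_iff' measurableSet_Ioi).2 (Eventually.of_forall fun r hr => ?_)
      have hr0 : 0 < r := lt_trans one_pos hr
      rw [Real.norm_of_nonneg (by positivity)]
      gcongr
      exact min_le_right _ _
  have hdiff : ∀ y, |f (x - y) - f x| ≤ min (L * ‖y‖) (2 * B) := by
    intro y
    refine le_min (hL x y) ?_
    have h1 := hB (x - y)
    have h2 := hB x
    rw [Real.norm_eq_abs] at h1 h2
    have := abs_sub (f (x - y)) (f x)
    linarith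
  have hfull : Integrable (fun y => k y * (f (x - y) - f x)) := by
    -- use max with 0 to get nonneg everywhere
    have h1 := hint (fun r => |min (L * r) (2 * B)|) (by fun_prop) (fun r => abs_nonneg _) (by
      refine hmin.congr_fun ?_ measurableSet_Ioi
      intro r hr
      have hr : 0 < r := hr
      simp only
      rw [abs_of_nonneg (by positivity)])
    refine Integrable.mono h1 (by fun_prop) (Eventually.of_forall fun y => ?_)
    rw [norm_mul, norm_mul]
    gcongr
    simp only [Real.norm_eq_abs, abs_abs]
    exact (hdiff y).trans (le_abs_self _)
  have htr : ∀ ε > 0, ∫ y in {y : Rn n | ε < ‖y‖}, k y * f (x - y) =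
      ∫ y in {y : Rn n | ε < ‖y‖}, k y * (f (x - y) - f x) := by
    intro ε hε
    have hms : MeasurableSet {y : Rn n | ε < ‖y‖} := measurableSet_lt measurable_const measurable_norm
    have hki : IntegrableOn k {y : Rn n | ε < ‖y‖} := by
      rw [← integrable_indicator_iff hms]
      have h1 := hint (fun r => (Ioi ε).indicator (fun _ => 1) r)
        (measurable_const.indicator measurableSet_Ioi)
        (fun r => indicator_nonneg (by simp) _) (by
          have : IntegrableOn ((Ioi ε).indicator (fun r : ℝ => r ^ (α - 2))) (Ioi 0) :=
            ((integrable_indicator_iff measurableSet_Ioi).2 (hIoi ε hε)).integrableOn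
          refine this.congr_fun ?_ measurableSet_Ioi
          intro r _
          by_cases h : r ∈ Ioi ε <;> simp [h])
      refine h1.congr (Eventually.of_forall fun y => ?_)
      by_cases h : ε < ‖y‖ <;> simp [indicator, h]
    have hkz : ∫ y in {y : Rn n | ε < ‖y‖}, k y = 0 := by
      rw [← integral_indicator hms]
      rw [← polar_integral_zero n hn Ω (fun r => (Ioi ε).indicator
        (fun r => (r ^ ((n : ℝ) + 1 - α))⁻¹) r) hΩ0]
      congr 1; ext y
      by_cases h : ε < ‖y‖ <;> simp [indicator, h, hk, div_eq_mul_inv]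
    have : ∫ y in {y : Rn n | ε < ‖y‖}, k y * (f (x - y) - f x) =
        ∫ y in {y : Rn n | ε < ‖y‖}, (k y * f (x - y) - k y * f x) := by
      congr 1; ext y; ring
    rw [this, integral_sub, integral_mul_const, hkz, zero_mul, sub_zero]
    · refine hki.mul_bdd (c := B) (by fun_prop) (Eventually.of_forall fun y => hB _)
    · exact hki.mul_const _
  have htend : Tendsto (fun ε => ∫ y in {y : Rn n | ε < ‖y‖}, k y * f (x - y)) (𝓝[>] 0)
      (𝓝 (∫ y, k y * (f (x - y) - f x))) := by
    have h1 : Tendsto (fun ε : ℝ => ∫ y, {y : Rn n | ε < ‖y‖}.indicator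
        (fun y => k y * (f (x - y) - f x)) y) (𝓝[>] 0) (𝓝 (∫ y, k y * (f (x - y) - f x))) := by
      refine tendsto_integral_filter_of_dominated_convergence
        (fun y => ‖k y * (f (x - y) - f x)‖) ?_ ?_ hfull.norm ?_
      · refine Eventually.of_forall fun ε => ?_
        exact hfull.aestronglyMeasurable.indicator (measurableSet_lt measurable_const measurable_norm)
      · refine Eventually.of_forall fun ε => Eventually.of_forall fun y => ?_
        exact norm_indicator_le_norm_self _ _
      · refine Eventually.of_forall fun y => ?_
        by_cases hy : y = 0
        · subst hy
          simp [indicator]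
        · have hy' : 0 < ‖y‖ := norm_pos_iff.2 hy
          refine tendsto_const_nhds.congr' ?_
          filter_upwards [mem_nhdsWithin_of_mem_nhds (Iio_mem_nhds hy')] with ε hε
          have hε : ε < ‖y‖ := hε
          simp [indicator, hε]
    refine h1.congr' ?_
    filter_upwards [self_mem_nhdsWithin] with ε hε
    rw [htr ε hε, integral_indicator (measurableSet_lt measurable_const measurable_norm)]
  rw [htend.limUnder_eq]
  have := enorm_integral_le_lintegral_enorm (μ := (volume : Measure (Rn n))) (fun y => k y * (f (x - y) - f x))
  rw [Real.enorm_eq_ofReal_abs] at this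
  refine this.trans (le_of_eq ?_)
  congr 1; ext y
  rw [Real.enorm_eq_ofReal_abs, abs_mul, hk, abs_div, abs_of_nonneg (a := ‖y‖ ^ _) (by positivity),
    div_eq_mul_inv]


def Av (n : ℕ) (s : ℝ) (g : Rn n → ℝ≥0∞) (x : Rn n) (r : ℝ) : ℝ≥0∞ :=
  (ENNReal.ofReal r ^ (-(n:ℝ)) * ∫⁻ w in closedBall x r, g w ^ s) ^ (1 / s)

theorem vol_ball (n : ℕ) (x : Rn n) (r : ℝ) (hr : 0 ≤ r) :
    volume (closedBall x r) = ENNReal.ofReal r ^ (n:ℝ) * volume (ball (0 : Rn n) 1) := by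
  rw [Measure.addHaar_closedBall _ _ hr, finrank_euclideanSpace_fin, ENNReal.ofReal_pow hr,
    ENNReal.rpow_natCast]

theorem lintegral_dil (n : ℕ) (F : Rn n → ℝ≥0∞) (hF : Measurable F) (z : Rn n) (t : ℝ) (ht : 0 < t) :
    ∫⁻ w, F (z + t • (w - z)) = ENNReal.ofReal t ^ (-(n:ℝ)) * ∫⁻ w, F w := by
  have h1 : ∀ w, z + t • (w - z) = (z - t • z) + t • w := fun w => by rw [smul_sub]; abel
  simp_rw [h1]
  have h2 : ∫⁻ w, F ((z - t • z) + t • w) =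
      ∫⁻ w, F ((z - t • z) + w) ∂(Measure.map (t • ·) (volume : Measure (Rn n))) := by
    rw [lintegral_map (by fun_prop) (by fun_prop)]
  rw [h2, Measure.map_addHaar_smul _ ht.ne', lintegral_smul_measure,
    lintegral_add_left_eq_self (fun w => F w), finrank_euclideanSpace_fin, smul_eq_mul]
  congr 1
  rw [abs_of_pos (by positivity), ENNReal.ofReal_inv_of_pos (by positivity), ENNReal.rpow_neg,
    ENNReal.rpow_natCast, ENNReal.ofReal_pow ht.le]

theorem dil_holder (n : ℕ) (s : ℝ) (hs : 1 < s) (g : Rn n → ℝ≥0∞) (hg : Measurable g)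
    (x z : Rn n) (r : ℝ) (hz : z ∈ closedBall x r) (t : ℝ) (ht : 0 < t) (ht1 : t ≤ 1) :
    ∫⁻ w in closedBall x r, g (z + t • (w - z)) ≤
      ENNReal.ofReal t ^ (-(n:ℝ) / s) * (volume (closedBall x r) ^ (1 - 1 / s) *
        (∫⁻ w in closedBall x r, g w ^ s) ^ (1 / s)) := by
  have hs0 : 0 < s := by linarith
  have hconj : s.HolderConjugate (s / (s - 1)) := Real.HolderConjugate.conjExponent hs
  have h1 := ENNReal.lintegral_mul_le_Lp_mul_Lq (volume.restrict (closedBall x r)) hconj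
    (f := fun w => g (z + t • (w - z))) (g := fun _ => 1) (by fun_prop) (by fun_prop)
  simp only [Pi.mul_apply, mul_one, ENNReal.one_rpow, lintegral_const,
    one_mul, Measure.restrict_apply_univ] at h1
  refine h1.trans ?_
  have h2 : ∫⁻ w in closedBall x r, g (z + t • (w - z)) ^ s ≤
      ENNReal.ofReal t ^ (-(n:ℝ)) * ∫⁻ w in closedBall x r, g w ^ s := by
    rw [← lintegral_indicator measurableSet_closedBall, ← lintegral_indicator measurableSet_closedBall,
      ← lintegral_dil n _ ((hg.pow_const s).indicator measurableSet_closedBall) z t ht]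
    apply lintegral_mono
    intro w
    by_cases hw : w ∈ closedBall x r
    · have : z + t • (w - z) ∈ closedBall x r :=
        (convex_closedBall x r).add_smul_sub_mem hz hw ⟨ht.le, ht1⟩
      simp [indicator_of_mem hw, indicator_of_mem this]
    · simp [indicator_of_notMem hw]
  calc _ ≤ (ENNReal.ofReal t ^ (-(n:ℝ)) * ∫⁻ w in closedBall x r, g w ^ s) ^ (1 / s) *
        volume (closedBall x r) ^ (1 / (s / (s - 1))) := by gcongr
    _ = _ := by
      rw [ENNReal.mul_rpow_of_nonneg _ _ (by positivity), ← ENNReal.rpow_mul]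
      have e1 : -(n:ℝ) * (1 / s) = -(n:ℝ) / s := by ring
      have e2 : 1 / (s / (s - 1)) = 1 - 1 / s := by field_simp
      rw [e1, e2]; ring

theorem ftc_bound (n : ℕ) (f : Rn n → ℝ) (hf : ContDiff ℝ 1 f) (z w : Rn n) :
    ENNReal.ofReal |f w - f z| ≤ ENNReal.ofReal ‖w - z‖ *
      ∫⁻ t in Ioc (0:ℝ) 1, ENNReal.ofReal ‖fderiv ℝ f (z + t • (w - z))‖ := by
  have hd : ∀ t : ℝ, HasDerivAt (fun t : ℝ => f (z + t • (w - z)))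
      (fderiv ℝ f (z + t • (w - z)) (w - z)) t := by
    intro t
    have h1 : HasDerivAt (fun t : ℝ => z + t • (w - z)) (w - z) t := by
      simpa using ((hasDerivAt_id t).smul_const (w - z)).const_add z
    exact ((hf.differentiable one_ne_zero _).hasFDerivAt).comp_hasDerivAt t h1
  have hcont : Continuous (fun t : ℝ => fderiv ℝ f (z + t • (w - z))) :=
    (hf.continuous_fderiv one_ne_zero).comp (by fun_prop)
  have h := intervalIntegral.integral_eq_sub_of_hasDerivAt (a := (0:ℝ)) (b := 1)
    (fun t _ => hd t) (Continuous.intervalIntegrable (by fun_prop) _ _)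
  simp only [one_smul, add_sub_cancel, zero_smul, add_zero] at h
  rw [← h, ← Real.enorm_eq_ofReal_abs, intervalIntegral.integral_of_le zero_le_one]
  refine (enorm_integral_le_lintegral_enorm _).trans ?_
  rw [← lintegral_const_mul _ (by fun_prop)]
  apply lintegral_mono
  intro t
  simp only
  rw [← ENNReal.ofReal_mul (norm_nonneg _), mul_comm, ← ofReal_norm]
  exact ENNReal.ofReal_le_ofReal (ContinuousLinearMap.le_opNorm _ _)

theorem morrey_half (n : ℕ) (s : ℝ) (hs : 1 < s) (f : Rn n → ℝ) (hf : ContDiff ℝ 1 f)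
    (x z : Rn n) (r : ℝ) (hz : z ∈ closedBall x r) :
    ∫⁻ w in closedBall x r, ENNReal.ofReal |f w - f z| ≤
      ENNReal.ofReal (2 * r) * ((∫⁻ t in Ioc (0:ℝ) 1, ENNReal.ofReal t ^ (-(n:ℝ) / s)) *
       (volume (closedBall x r) ^ (1 - 1 / s) *
        (∫⁻ w in closedBall x r, ENNReal.ofReal ‖fderiv ℝ f w‖ ^ s) ^ (1 / s))) := by
  have hc : Continuous (fderiv ℝ f) := hf.continuous_fderiv one_ne_zero
  calc _ ≤ ∫⁻ w in closedBall x r, ENNReal.ofReal (2 * r) *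
        ∫⁻ t in Ioc (0:ℝ) 1, ENNReal.ofReal ‖fderiv ℝ f (z + t • (w - z))‖ := by
        apply setLIntegral_mono' measurableSet_closedBall
        intro w hw
        refine (ftc_bound n f hf z w).trans ?_
        gcongr
        rw [← dist_eq_norm]
        have h1 := mem_closedBall.1 hw
        have h2 := mem_closedBall.1 hz
        have := dist_triangle_right w z x
        linarith
    _ = ENNReal.ofReal (2 * r) * ∫⁻ t in Ioc (0:ℝ) 1, ∫⁻ w in closedBall x r, 
          ENNReal.ofReal ‖fderiv ℝ f (z + t • (w - z))‖ := by
        rw [lintegral_const_mul' _ _ ENNReal.ofReal_ne_top, lintegral_lintegral_swap]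
        have : Continuous (fun p : Rn n × ℝ => fderiv ℝ f (z + p.2 • (p.1 - z))) :=
          hc.comp (by fun_prop)
        exact (ENNReal.continuous_ofReal.comp this.norm).measurable.aemeasurable
    _ ≤ _ := by
        gcongr
        rw [← lintegral_mul_const _ (by fun_prop)]
        apply setLIntegral_mono' measurableSet_Ioc
        intro t ht
        exact dil_holder n s hs (fun w => ENNReal.ofReal ‖fderiv ℝ f w‖)
          (ENNReal.continuous_ofReal.comp hc.norm).measurable x z r hz t ht.1 ht.2

theorem lint_Ioc_fin (a : ℝ) (ha : -1 < a) : ∫⁻ t in Ioc (0:ℝ) 1, ENNReal.ofReal t ^ a ≠ ∞ := by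
  have h := (intervalIntegrable_iff_integrableOn_Ioc_of_le zero_le_one).1
          (intervalIntegral.intervalIntegrable_rpow' (a := 0) (b := 1) ha)
  have h2 := h.2
  rw [hasFiniteIntegral_iff_norm] at h2
  refine ne_of_lt (lt_of_le_of_lt (le_of_eq ?_) h2)
  apply setLIntegral_congr_fun measurableSet_Ioc
  intro t ht
  simp only
  rw [ENNReal.ofReal_rpow_of_pos ht.1, Real.norm_of_nonneg (Real.rpow_nonneg ht.1.le _)]

theorem morrey (n : ℕ) (hn : 2 ≤ n) (s : ℝ) (hs : (n:ℝ) < s) :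
    ∃ C : ℝ≥0∞, C ≠ ∞ ∧ ∀ f : Rn n → ℝ, ContDiff ℝ 1 f → ∀ x y : Rn n, y ≠ 0 →
      ENNReal.ofReal |f (x - y) - f x| ≤ C * (ENNReal.ofReal ‖y‖ *
        Av n s (fun w => ENNReal.ofReal ‖fderiv ℝ f w‖) x ‖y‖) := by
  have hn2 : (2:ℝ) ≤ n := by exact_mod_cast hn
  have hs1 : 1 < s := by linarith
  set I := ∫⁻ t in Ioc (0:ℝ) 1, ENNReal.ofReal t ^ (-(n:ℝ) / s) with hI
  have hIf : I ≠ ∞ := lint_Ioc_fin _ (by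
    rw [neg_div, neg_lt_neg_iff, div_lt_one (by linarith)]; exact hs)
  set V := volume (ball (0 : Rn n) 1) with hV
  have hV0 : V ≠ 0 := (measure_ball_pos _ _ one_pos).ne'
  have hVf : V ≠ ∞ := measure_ball_lt_top.ne
  refine ⟨4 * I * V ^ (-(1/s)), ?_, ?_⟩
  · refine ENNReal.mul_ne_top (ENNReal.mul_ne_top (by simp) hIf) (ENNReal.rpow_ne_top_of_ne_zero hV0 hVf)
  intro f hf x y hy
  set r := ‖y‖ with hr
  have hr0 : 0 < r := norm_pos_iff.2 hy
  set B := closedBall x r with hB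
  set D := (∫⁻ w in B, ENNReal.ofReal ‖fderiv ℝ f w‖ ^ s) with hD
  have hvol : volume B = ENNReal.ofReal r ^ (n:ℝ) * V := vol_ball n x r hr0.le
  have hR0 : ENNReal.ofReal r ≠ 0 := by simpa using hr0
  have hRf : ENNReal.ofReal r ≠ ∞ := ENNReal.ofReal_ne_top
  have hB0 : volume B ≠ 0 := (measure_closedBall_pos _ _ hr0).ne'
  have hBf : volume B ≠ ∞ := measure_closedBall_lt_top.ne
  have h1 := morrey_half n s hs1 f hf x (x - y) r (by simp [hr])
  have h2 := morrey_half n s hs1 f hf x x r (by simp [hr])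
  have h3 : volume B * ENNReal.ofReal |f (x - y) - f x| ≤
      volume B * (4 * I * V ^ (-(1/s)) * (ENNReal.ofReal r * (ENNReal.ofReal r ^ (-(n:ℝ)) * D) ^ (1/s))) := by
    calc volume B * ENNReal.ofReal |f (x - y) - f x| 
        = ∫⁻ w in B, ENNReal.ofReal |f (x - y) - f x| := by
          rw [setLIntegral_const, mul_comm]
      _ ≤ ∫⁻ w in B, (ENNReal.ofReal |f w - f (x - y)| + ENNReal.ofReal |f w - f x|) := by
          apply lintegral_mono
          intro w
          simp only
          rw [← ENNReal.ofReal_add (abs_nonneg _) (abs_nonneg _)]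
          apply ENNReal.ofReal_le_ofReal
          rw [abs_sub_comm (f w) (f (x - y))]
          exact abs_sub_le _ _ _
      _ = (∫⁻ w in B, ENNReal.ofReal |f w - f (x - y)|) + ∫⁻ w in B, ENNReal.ofReal |f w - f x| := by
          have := hf.continuous
          rw [lintegral_add_left]; fun_prop
      _ ≤ _ := add_le_add h1 h2
      _ = 4 * ENNReal.ofReal r * I * (volume B ^ (1 - 1/s) * D ^ (1/s)) := by
          rw [ENNReal.ofReal_mul (by norm_num), ENNReal.ofReal_ofNat]; ring
      _ = _ := by
          have e : volume B ^ (1 - 1/s) = volume B * (V ^ (-(1/s)) * (ENNReal.ofReal r ^ (-(n:ℝ))) ^ (1/s)) := by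
            rw [sub_eq_add_neg, ENNReal.rpow_add _ _ hB0 hBf, ENNReal.rpow_one, hvol,
              ENNReal.mul_rpow_of_ne_zero (by simp [hr0]) hV0, ← ENNReal.rpow_mul, ← ENNReal.rpow_mul]
            rw [show (n:ℝ) * -(1/s) = -(n:ℝ) * (1/s) by ring]
            ring
          rw [e, ENNReal.mul_rpow_of_nonneg _ _ (by positivity)]
          ring
  exact (ENNReal.mul_le_mul_iff_right hB0 hBf).1 h3


theorem pow_int_Ioc (β : ℝ) (hβ : 0 < β) (R : ℝ) (hR : 0 ≤ R) :
    ∫⁻ t in Ioc 0 R, ENNReal.ofReal t ^ (β - 1) = ENNReal.ofReal (1/β) * ENNReal.ofReal R ^ β := by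
  have hi : IntegrableOn (fun t : ℝ => t ^ (β - 1)) (Ioc 0 R) :=
    (intervalIntegrable_iff_integrableOn_Ioc_of_le hR).1
          (intervalIntegral.intervalIntegrable_rpow' (by linarith))
  have h1 : ∫⁻ t in Ioc 0 R, ENNReal.ofReal t ^ (β - 1) =
      ∫⁻ t in Ioc 0 R, ENNReal.ofReal (t ^ (β - 1)) := by
    apply setLIntegral_congr_fun measurableSet_Ioc
    intro t ht
    simp only
    rw [ENNReal.ofReal_rpow_of_pos ht.1]
  rw [h1, ← ofReal_integral_eq_lintegral_ofReal hi, ← intervalIntegral.integral_of_le hR,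
    integral_rpow (Or.inl (by linarith)), ENNReal.ofReal_rpow_of_nonneg hR hβ.le,
    ← ENNReal.ofReal_mul (by positivity)]
  · congr 1
    rw [sub_add_cancel, Real.zero_rpow hβ.ne']; ring
  · refine (ae_restrict_iff' measurableSet_Ioc).2 (Eventually.of_forall fun r hr => ?_)
    exact Real.rpow_nonneg hr.1.le _

theorem pow_int_Ioi (κ : ℝ) (hκ : 0 < κ) (R : ℝ) (hR : 0 < R) :
    ∫⁻ t in Ioi R, ENNReal.ofReal t ^ (-κ - 1) = ENNReal.ofReal (1/κ) * ENNReal.ofReal R ^ (-κ) := by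
  have hi : IntegrableOn (fun t : ℝ => t ^ (-κ - 1)) (Ioi R) :=
    integrableOn_Ioi_rpow_of_lt (by linarith) hR
  have h1 : ∫⁻ t in Ioi R, ENNReal.ofReal t ^ (-κ - 1) =
      ∫⁻ t in Ioi R, ENNReal.ofReal (t ^ (-κ - 1)) := by
    apply setLIntegral_congr_fun measurableSet_Ioi
    intro t ht
    simp only
    rw [ENNReal.ofReal_rpow_of_pos (hR.trans ht)]
  rw [h1, ← ofReal_integral_eq_lintegral_ofReal hi,
    integral_Ioi_rpow_of_lt (by linarith) hR, ENNReal.ofReal_rpow_of_pos hR,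
    ← ENNReal.ofReal_mul (by positivity)]
  · congr 1
    rw [sub_add_cancel]; field_simp
  · refine (ae_restrict_iff' measurableSet_Ioi).2 (Eventually.of_forall fun r hr => ?_)
    exact Real.rpow_nonneg (hR.trans hr).le _

theorem layer (β : ℝ) (hβ : 0 < β) (a : ℝ≥0∞) :
    ∫⁻ t in Ioi (0:ℝ), {t : ℝ | ENNReal.ofReal t < a}.indicator
      (fun t => ENNReal.ofReal t ^ (β - 1)) t = ENNReal.ofReal (1/β) * a ^ β := by
  have hm : ∀ a : ℝ≥0∞, MeasurableSet {t : ℝ | ENNReal.ofReal t < a} := fun a =>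
    measurableSet_lt (by fun_prop) measurable_const
  have key : ∀ R : ℝ, 0 ≤ R → ∫⁻ t in Ioi (0:ℝ), {t : ℝ | ENNReal.ofReal t < ENNReal.ofReal R}.indicator
      (fun t => ENNReal.ofReal t ^ (β - 1)) t = ENNReal.ofReal (1/β) * ENNReal.ofReal R ^ β := by
    intro R hR
    rw [← pow_int_Ioc β hβ R hR, setLIntegral_indicator (hm _)]
    apply setLIntegral_congr
    have : {t : ℝ | ENNReal.ofReal t < ENNReal.ofReal R} ∩ Ioi 0 = Ioo 0 R := by
      ext t
      constructor
      · rintro ⟨h1, h2⟩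
        exact ⟨h2, (ENNReal.ofReal_lt_ofReal_iff_of_nonneg (le_of_lt h2)).1 h1⟩
      · rintro ⟨h1, h2⟩
        exact ⟨(ENNReal.ofReal_lt_ofReal_iff_of_nonneg h1.le).2 h2, h1⟩
    rw [this]
    exact Ioo_ae_eq_Ioc
  by_cases ha : a = ∞
  · subst ha
    rw [ENNReal.top_rpow_of_pos hβ, ENNReal.mul_top (by simpa using hβ)]
    have hle : ∀ R : ℝ, 0 ≤ R → ENNReal.ofReal (1/β) * ENNReal.ofReal R ^ β ≤
        ∫⁻ t in Ioi (0:ℝ), {t : ℝ | ENNReal.ofReal t < ∞}.indicator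
          (fun t => ENNReal.ofReal t ^ (β - 1)) t := by
      intro R hR
      rw [← key R hR]
      apply lintegral_mono
      intro t
      apply indicator_le_indicator_of_subset
      · intro t _; exact ENNReal.ofReal_lt_top
      · intro t; exact zero_le
    apply ENNReal.eq_top_of_forall_nnreal_le
    intro c
    have h := hle ((β * c) ^ (1/β)) (by positivity)
    refine le_trans (le_of_eq ?_) h
    rw [ENNReal.ofReal_rpow_of_nonneg (by positivity) hβ.le, ← ENNReal.ofReal_mul (by positivity),
      ← Real.rpow_mul (by positivity), one_div_mul_cancel hβ.ne', Real.rpow_one,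
      ← mul_assoc, one_div_mul_cancel hβ.ne', one_mul, ENNReal.ofReal_coe_nnreal]
  · have := key a.toReal ENNReal.toReal_nonneg
    rwa [ENNReal.ofReal_toReal ha] at this

def Mx (n : ℕ) (u : Rn n → ℝ≥0∞) (x : Rn n) : ℝ≥0∞ :=
  ⨆ (r : ℝ) (_ : 0 < r), ENNReal.ofReal r ^ (-(n:ℝ)) * ∫⁻ w in closedBall x r, u w

theorem Mx_measurable (n : ℕ) (u : Rn n → ℝ≥0∞) : Measurable (Mx n u) := by
  apply measurable_of_Ioi
  intro t
  apply IsOpen.measurableSet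
  rw [Metric.isOpen_iff]
  intro x hx
  have hx : t < Mx n u x := hx
  simp only [Mx, lt_iSup_iff] at hx
  obtain ⟨r, hr, hlt⟩ := hx
  set I := ∫⁻ w in closedBall x r, u w with hI
  have hnear : ∀ᶠ ρ in 𝓝 r, t < ENNReal.ofReal ρ ^ (-(n:ℝ)) * I := by
    have hc : Tendsto (fun ρ : ℝ => ENNReal.ofReal ρ ^ (-(n:ℝ)) * I) (𝓝 r)
        (𝓝 (ENNReal.ofReal r ^ (-(n:ℝ)) * I)) := by
      refine ENNReal.Tendsto.mul_const ?_ (Or.inl ?_)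
      · exact (ENNReal.continuous_rpow_const.comp ENNReal.continuous_ofReal).tendsto r
      · have : ENNReal.ofReal r ^ (n:ℝ) ≠ ∞ := ENNReal.rpow_ne_top_of_nonneg (by positivity) (by simp)
        rw [ENNReal.rpow_neg]
        simpa using this
    exact hc.eventually (lt_mem_nhds hlt)
  obtain ⟨δ, hδ, hball⟩ := Metric.eventually_nhds_iff.1 hnear
  refine ⟨δ / 2, by positivity, fun x' hx' => ?_⟩
  change t < Mx n u x'
  have h1 := hball (y := r + δ / 2) (by rw [Real.dist_eq]; simp; rw [abs_of_pos (by positivity)]; linarith)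
  refine h1.trans_le ?_
  refine le_trans ?_ (le_iSup₂ (f := fun (r : ℝ) (_ : 0 < r) => ENNReal.ofReal r ^ (-(n:ℝ)) * ∫⁻ w in closedBall x' r, u w) (r + δ/2) (by positivity))
  gcongr
  apply lintegral_mono_set
  apply closedBall_subset_closedBall'
  have := mem_ball'.1 hx'
  linarith

theorem weak_type (n : ℕ) (hn : 2 ≤ n) : ∃ C : ℝ≥0∞, C ≠ ∞ ∧ ∀ u : Rn n → ℝ≥0∞, Measurable u →
    ∀ t : ℝ≥0∞, t * volume {x | t < Mx n u x} ≤ C * ∫⁻ x, u x := by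
  set V := volume (ball (0 : Rn n) 1) with hV
  have hV0 : V ≠ 0 := (measure_ball_pos _ _ one_pos).ne'
  have hVf : V ≠ ∞ := measure_ball_lt_top.ne
  have hn0 : (0:ℝ) < n := by positivity
  have h5f : ENNReal.ofReal 5 ^ (n:ℝ) ≠ ∞ := ENNReal.rpow_ne_top_of_nonneg hn0.le ENNReal.ofReal_ne_top
  have h50 : ENNReal.ofReal 5 ^ (n:ℝ) ≠ 0 := by
    rw [Ne, ENNReal.rpow_eq_zero_iff_of_pos hn0]; norm_num
  refine ⟨ENNReal.ofReal 5 ^ (n:ℝ) * V, ENNReal.mul_ne_top h5f hVf, ?_⟩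
  intro u hu t
  by_cases hU : ∫⁻ x, u x = ∞
  · rw [hU, ENNReal.mul_top (mul_ne_zero h50 hV0)]; exact le_top
  by_cases ht0 : t = 0
  · simp [ht0]
  by_cases htf : t = ∞
  · simp [htf]
  set E := {x | t < Mx n u x} with hE
  have hex : ∀ x, ∃ r : ℝ, x ∈ E → 0 < r ∧ t * ENNReal.ofReal r ^ (n:ℝ) ≤ ∫⁻ w in closedBall x r, u w := by
    intro x
    by_cases hx : x ∈ E
    · have hx : t < Mx n u x := hx
      simp only [Mx, lt_iSup_iff] at hx
      obtain ⟨r, hr, hlt⟩ := hx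
      refine ⟨r, fun _ => ⟨hr, ?_⟩⟩
      have hr0 : ENNReal.ofReal r ≠ 0 := by simpa using hr
      calc t * ENNReal.ofReal r ^ (n:ℝ) ≤ (ENNReal.ofReal r ^ (-(n:ℝ)) * ∫⁻ w in closedBall x r, u w) * ENNReal.ofReal r ^ (n:ℝ) := by
            gcongr
        _ = (ENNReal.ofReal r ^ (-(n:ℝ)) * ENNReal.ofReal r ^ (n:ℝ)) * ∫⁻ w in closedBall x r, u w := by ring
        _ = _ := by
          rw [← ENNReal.rpow_add _ _ hr0 ENNReal.ofReal_ne_top]; simp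
    · exact ⟨0, fun h => absurd h hx⟩
  choose ρ hρ using hex
  have hbd : ∀ x ∈ E, ρ x ≤ (((∫⁻ x, u x) / t) ^ (1/(n:ℝ))).toReal := by
    intro x hx
    obtain ⟨h1, h2⟩ := hρ x hx
    have h3 : ENNReal.ofReal (ρ x) ^ (n:ℝ) ≤ (∫⁻ x, u x) / t := by
      rw [ENNReal.le_div_iff_mul_le (Or.inl ht0) (Or.inl htf), mul_comm]
      exact h2.trans (setLIntegral_le_lintegral _ _)
    have h4 : ENNReal.ofReal (ρ x) ≤ ((∫⁻ x, u x) / t) ^ (1/(n:ℝ)) := by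
      rw [one_div]; exact (ENNReal.le_rpow_inv_iff hn0).2 h3
    refine (ENNReal.ofReal_le_iff_le_toReal ?_).1 h4
    exact ENNReal.rpow_ne_top_of_nonneg (by positivity) (ENNReal.div_ne_top hU ht0)
  obtain ⟨W, hWE, hdisj, hcov⟩ := Vitali.exists_disjoint_subfamily_covering_enlargement_closedBall
    E (fun x => x) ρ _ hbd 5 (by norm_num)
  have hWc : W.Countable := by
    refine hdisj.countable_of_nonempty_interior (fun x hx => ?_)
    refine ⟨x, ?_⟩
    exact ball_subset_interior_closedBall (mem_ball_self (hρ x (hWE hx)).1)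
  have hsub : E ⊆ ⋃ b ∈ W, closedBall b (5 * ρ b) := by
    intro x hx
    obtain ⟨b, hb, h⟩ := hcov x hx
    exact mem_iUnion₂.2 ⟨b, hb, h (mem_closedBall_self (hρ x hx).1.le)⟩
  have hWc' : Countable W := hWc
  calc t * volume E ≤ t * ∑' b : W, volume (closedBall (b : Rn n) (5 * ρ b)) := by
        gcongr
        exact (measure_mono hsub).trans (measure_biUnion_le _ hWc _)
    _ = ∑' b : W, (ENNReal.ofReal 5 ^ (n:ℝ) * V) * (t * ENNReal.ofReal (ρ b) ^ (n:ℝ)) := by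
        rw [← ENNReal.tsum_mul_left]
        congr 1; ext b
        have := (hρ b (hWE b.2)).1
        rw [vol_ball n _ _ (by positivity), ENNReal.ofReal_mul (by norm_num),
          ENNReal.mul_rpow_of_nonneg _ _ hn0.le]
        ring
    _ ≤ ∑' b : W, (ENNReal.ofReal 5 ^ (n:ℝ) * V) * ∫⁻ w in closedBall (b : Rn n) (ρ b), u w := by
        refine ENNReal.tsum_le_tsum fun b => ?_
        gcongr
        exact (hρ b (hWE b.2)).2
    _ = (ENNReal.ofReal 5 ^ (n:ℝ) * V) * ∫⁻ w in ⋃ b ∈ W, closedBall (b : Rn n) (ρ b), u w := by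
        rw [ENNReal.tsum_mul_left, lintegral_biUnion hWc (fun _ _ => measurableSet_closedBall) hdisj]
    _ ≤ _ := by
        gcongr
        exact Measure.restrict_le_self

theorem strong_type (n : ℕ) (hn : 2 ≤ n) (P : ℝ) (hP : 1 < P) : ∃ C : ℝ≥0∞, C ≠ ∞ ∧
    ∀ u : Rn n → ℝ≥0∞, Measurable u → ∫⁻ x, Mx n u x ^ P ≤ C * ∫⁻ x, u x ^ P := by
  obtain ⟨C, hC, hw⟩ := weak_type n hn
  set V := volume (ball (0 : Rn n) 1) with hV
  have hV0 : V ≠ 0 := (measure_ball_pos _ _ one_pos).ne'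
  have hVf : V ≠ ∞ := measure_ball_lt_top.ne
  have hn0 : (0:ℝ) < n := by positivity
  refine ⟨ENNReal.ofReal P * (2 * C) * (ENNReal.ofReal (1/(P-1)) * (2 * V) ^ (P-1)), ?_, ?_⟩
  · have : (2 * V) ^ (P-1) ≠ ∞ := ENNReal.rpow_ne_top_of_nonneg (by linarith) (ENNReal.mul_ne_top (by simp) hVf)
    have h2 : (2 * C) ≠ ∞ := ENNReal.mul_ne_top (by simp) hC
    exact ENNReal.mul_ne_top (ENNReal.mul_ne_top ENNReal.ofReal_ne_top h2) (ENNReal.mul_ne_top ENNReal.ofReal_ne_top this)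
  intro u hu
  -- the weak estimate with truncation
  have hset : ∀ t : ℝ≥0∞, MeasurableSet {x | t < 2 * V * u x} := fun t =>
    measurableSet_lt measurable_const (by fun_prop)
  have hwk : ∀ t : ℝ, 0 < t → volume {x | ENNReal.ofReal t < Mx n u x} ≤
      (2 * C) * ENNReal.ofReal t ^ (-1 : ℝ) * ∫⁻ x, {x | ENNReal.ofReal t < 2 * V * u x}.indicator u x := by
    intro t ht
    set T := ENNReal.ofReal t with hT
    have hT0 : T ≠ 0 := by simpa [hT] using ht
    have hTf : T ≠ ∞ := ENNReal.ofReal_ne_top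
    set v := {x | T < 2 * V * u x}.indicator u with hv
    have hvm : Measurable v := hu.indicator (hset T)
    have hsub : {x | T < Mx n u x} ⊆ {x | T / 2 < Mx n v x} := by
      intro x hx
      have hx : T < Mx n u x := hx
      simp only [Mx, lt_iSup_iff] at hx
      obtain ⟨r, hr, hlt⟩ := hx
      have hR0 : ENNReal.ofReal r ≠ 0 := by simpa using hr
      have h1 : ∫⁻ w in closedBall x r, u w ≤ (∫⁻ w in closedBall x r, v w) +
          T / (2 * V) * volume (closedBall x r) := by
        rw [← setLIntegral_const, ← lintegral_add_right _ measurable_const]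
        apply lintegral_mono
        intro w
        by_cases hw : T < 2 * V * u w
        · simp [hv, indicator, hw]
        · simp only [hv, indicator, mem_ofPred_eq, hw, if_false, zero_add]
          rw [ENNReal.le_div_iff_mul_le (Or.inl (by simp [hV0])) (Or.inl (ENNReal.mul_ne_top (by simp) hVf)), mul_comm]
          exact not_lt.1 hw
      have h2 : ENNReal.ofReal r ^ (-(n:ℝ)) * (T / (2 * V) * volume (closedBall x r)) = T / 2 := by
        rw [vol_ball n x r hr.le]
        calc _ = (ENNReal.ofReal r ^ (-(n:ℝ)) * ENNReal.ofReal r ^ (n:ℝ)) * (T / (2 * V) * V) := by ring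
          _ = _ := by
            rw [← ENNReal.rpow_add _ _ hR0 ENNReal.ofReal_ne_top, neg_add_cancel, ENNReal.rpow_zero, one_mul,
              div_eq_mul_inv, ENNReal.mul_inv (by simp) (by simp), mul_assoc, mul_assoc,
              ENNReal.inv_mul_cancel hV0 hVf, mul_one, div_eq_mul_inv]
      have h3 : T < Mx n v x + T / 2 := by
        refine hlt.trans_le ?_
        calc _ ≤ ENNReal.ofReal r ^ (-(n:ℝ)) * ((∫⁻ w in closedBall x r, v w) +
          T / (2 * V) * volume (closedBall x r)) := by gcongr
          _ = ENNReal.ofReal r ^ (-(n:ℝ)) * (∫⁻ w in closedBall x r, v w) + T / 2 := by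
            rw [mul_add, h2]
          _ ≤ _ := by
            gcongr
            exact le_iSup₂ (f := fun (r : ℝ) (_ : 0 < r) => ENNReal.ofReal r ^ (-(n:ℝ)) * ∫⁻ w in closedBall x r, v w) r hr
      have h4 : T / 2 + T / 2 < Mx n v x + T / 2 := by rwa [ENNReal.add_halves]
      exact lt_of_add_lt_add_right h4
    have h5 := hw v hvm (T / 2)
    calc volume {x | T < Mx n u x} ≤ volume {x | T / 2 < Mx n v x} := measure_mono hsub
      _ = (2 * T ^ (-1:ℝ)) * (T / 2 * volume {x | T / 2 < Mx n v x}) := by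
          rw [ENNReal.rpow_neg_one, div_eq_mul_inv]
          calc _ = (2 * 2⁻¹) * (T⁻¹ * T) * volume {x | T * 2⁻¹ < Mx n v x} := by
                rw [ENNReal.mul_inv_cancel (by simp) (by simp), ENNReal.inv_mul_cancel hT0 hTf]; simp
            _ = _ := by ring
      _ ≤ (2 * T ^ (-1:ℝ)) * (C * ∫⁻ x, v x) := by gcongr
      _ = _ := by ring
  have hMm := Mx_measurable n u
  have hP0 : 0 < P := by linarith
  have hP1 : 0 < P - 1 := by linarith
  calc ∫⁻ x, Mx n u x ^ P
      = ∫⁻ x, ENNReal.ofReal P * ∫⁻ t in Ioi (0:ℝ), {t : ℝ | ENNReal.ofReal t < Mx n u x}.indicator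
          (fun t => ENNReal.ofReal t ^ (P - 1)) t := by
        congr 1; ext x
        rw [layer P hP0, ← mul_assoc, ← ENNReal.ofReal_mul hP0.le, mul_one_div_cancel hP0.ne']
        simp
    _ = ENNReal.ofReal P * ∫⁻ t in Ioi (0:ℝ), ∫⁻ x, {x | ENNReal.ofReal t < Mx n u x}.indicator
      (fun _ => ENNReal.ofReal t ^ (P - 1)) x := by
        rw [lintegral_const_mul' _ _ ENNReal.ofReal_ne_top, lintegral_lintegral_swap]
        · rfl
        · have : MeasurableSet {z : Rn n × ℝ | ENNReal.ofReal z.2 < Mx n u z.1} :=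
            measurableSet_lt (by fun_prop) (by fun_prop)
          have h2 : Measurable ({z : Rn n × ℝ | ENNReal.ofReal z.2 < Mx n u z.1}.indicator
            (fun z => ENNReal.ofReal z.2 ^ (P - 1))) := Measurable.indicator (by fun_prop) this
          exact h2.aemeasurable
    _ = ENNReal.ofReal P * ∫⁻ t in Ioi (0:ℝ), ENNReal.ofReal t ^ (P - 1) * volume {x | ENNReal.ofReal t < Mx n u x} := by
        congr 2; ext t
        rw [lintegral_indicator_const (measurableSet_lt measurable_const hMm)]
    _ ≤ ENNReal.ofReal P * ∫⁻ t in Ioi (0:ℝ), (2 * C) * ∫⁻ x, u x * {t : ℝ | ENNReal.ofReal t < 2 * V * u x}.indicator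
      (fun t => ENNReal.ofReal t ^ ((P - 1) - 1)) t := by
        refine mul_le_mul_right ?_ _
        apply setLIntegral_mono' measurableSet_Ioi
        intro t ht
        have ht : 0 < t := ht
        have hT0 : ENNReal.ofReal t ≠ 0 := by simpa using ht
        calc _ ≤ ENNReal.ofReal t ^ (P - 1) * ((2 * C) * ENNReal.ofReal t ^ (-1 : ℝ) * ∫⁻ x, {x | ENNReal.ofReal t < 2 * V * u x}.indicator u x) := by
              gcongr; exact hwk t ht
          _ = (2 * C) * (ENNReal.ofReal t ^ ((P - 1) - 1) * ∫⁻ x, {x | ENNReal.ofReal t < 2 * V * u x}.indicator u x) := by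
              rw [sub_eq_add_neg (P - 1) 1, ENNReal.rpow_add _ _ hT0 ENNReal.ofReal_ne_top]; ring
          _ = _ := by
              rw [← lintegral_const_mul _ (hu.indicator (hset _))]
              congr 2; ext x
              by_cases h : ENNReal.ofReal t < 2 * V * u x <;> simp [indicator, h, mul_comm]
    _ = ENNReal.ofReal P * (2 * C) * ∫⁻ x, u x * ∫⁻ t in Ioi (0:ℝ), {t : ℝ | ENNReal.ofReal t < 2 * V * u x}.indicator
      (fun t => ENNReal.ofReal t ^ ((P - 1) - 1)) t := by
        rw [lintegral_const_mul' _ _ (ENNReal.mul_ne_top (by simp) hC), lintegral_lintegral_swap, ← mul_assoc]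
        · congr 1; refine lintegral_congr fun x => ?_
          rw [lintegral_const_mul]
          exact Measurable.indicator (by fun_prop) (measurableSet_lt (by fun_prop) (by fun_prop))
        · have : MeasurableSet {z : ℝ × Rn n | ENNReal.ofReal z.1 < 2 * V * u z.2} :=
            measurableSet_lt (by fun_prop) (by fun_prop)
          have h2 : Measurable ({z : ℝ × Rn n | ENNReal.ofReal z.1 < 2 * V * u z.2}.indicator
            (fun z => ENNReal.ofReal z.1 ^ (P - 1 - 1))) := Measurable.indicator (by fun_prop) this
          have h3 : Measurable (fun z : ℝ × Rn n => u z.2) := by fun_prop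
          exact (h3.mul h2).aemeasurable
    _ = ENNReal.ofReal P * (2 * C) * ∫⁻ x, (ENNReal.ofReal (1/(P-1)) * (2 * V) ^ (P-1)) * u x ^ P := by
        congr 2; ext x
        rw [layer _ hP1, ENNReal.mul_rpow_of_nonneg _ _ hP1.le]
        have : u x ^ P = u x * u x ^ (P - 1) := by
          conv_lhs => rw [show P = 1 + (P - 1) by ring]
          rw [ENNReal.rpow_add_of_nonneg _ _ zero_le_one hP1.le, ENNReal.rpow_one]
        rw [this]; ring
    _ = _ := by
        rw [lintegral_const_mul _ (by fun_prop)]; ring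


theorem holder_ps {X : Type*} [MeasurableSpace X] (μ : Measure X) (s p : ℝ) (hs : 0 < s) (hsp : s < p)
    (k φ : X → ℝ≥0∞) (hk : Measurable k) (hφ : Measurable φ) :
    ∫⁻ w, (k w * φ w) ^ s ∂μ ≤ (∫⁻ w, k w ^ p ∂μ) ^ (s / p) *
      (∫⁻ w, φ w ^ (s * p / (p - s)) ∂μ) ^ ((p - s) / p) := by
  have hp : 0 < p := hs.trans hsp
  have hps : 0 < p - s := by linarith
  have hc : (p / s).HolderConjugate (p / (p - s)) := by
    rw [Real.holderConjugate_iff]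
    refine ⟨by rw [lt_div_iff₀ hs]; linarith, ?_⟩
    field_simp; ring
  have := ENNReal.lintegral_mul_le_Lp_mul_Lq μ hc (f := fun w => k w ^ s) (g := fun w => φ w ^ s)
    (by fun_prop) (by fun_prop)
  simp only [Pi.mul_apply, ← ENNReal.rpow_mul, one_div_div] at this
  rw [show s * (p / s) = p by field_simp, show s * (p / (p - s)) = s * p / (p - s) by ring] at this
  refine le_trans (le_of_eq ?_) this
  refine lintegral_congr fun w => ?_
  rw [ENNReal.mul_rpow_of_nonneg _ _ hs.le]

theorem Av_le_Mx (n : ℕ) (s : ℝ) (hs : 0 < s) (h : Rn n → ℝ≥0∞) (x : Rn n) (r : ℝ) (hr : 0 < r) :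
    Av n s h x r ≤ Mx n (fun w => h w ^ s) x ^ (1 / s) := by
  unfold Av
  gcongr
  exact le_iSup₂ (f := fun (r : ℝ) (_ : 0 < r) => ENNReal.ofReal r ^ (-(n:ℝ)) * ∫⁻ w in closedBall x r, h w ^ s) r hr

theorem Av_le_Lp (n : ℕ) (s p : ℝ) (hs : 0 < s) (hsp : s < p) (h : Rn n → ℝ≥0∞) (hh : Measurable h)
    (x : Rn n) (r : ℝ) (hr : 0 < r) :
    Av n s h x r ≤ volume (ball (0 : Rn n) 1) ^ (1 / s - 1 / p) *
      (ENNReal.ofReal r ^ (-(n / p)) * (∫⁻ w, h w ^ p) ^ (1 / p)) := by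
  have hp : 0 < p := hs.trans hsp
  have hps : 0 < p - s := by linarith
  have hR0 : ENNReal.ofReal r ≠ 0 := by simpa using hr
  have hRf : ENNReal.ofReal r ≠ ∞ := ENNReal.ofReal_ne_top
  have h1 := holder_ps (volume.restrict (closedBall x r)) s p hs hsp h (fun _ => 1) hh measurable_const
  simp only [mul_one, ENNReal.one_rpow, lintegral_const, one_mul, Measure.restrict_apply MeasurableSet.univ, univ_inter] at h1
  rw [vol_ball n x r hr.le] at h1
  unfold Av
  calc _ ≤ (ENNReal.ofReal r ^ (-(n:ℝ)) * ((∫⁻ w, h w ^ p) ^ (s / p) *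
      (ENNReal.ofReal r ^ (n:ℝ) * volume (ball (0 : Rn n) 1)) ^ ((p - s) / p))) ^ (1 / s) := by
        gcongr
        refine h1.trans ?_
        gcongr
        exact Measure.restrict_le_self
    _ = _ := by
      have a0 : 0 ≤ (p - s) / p := by positivity
      have a1 : 0 ≤ 1 / s := by positivity
      rw [ENNReal.mul_rpow_of_nonneg _ _ a0, ENNReal.mul_rpow_of_nonneg _ _ a1, ENNReal.mul_rpow_of_nonneg _ _ a1,
        ENNReal.mul_rpow_of_nonneg _ _ a1]
      simp only [← ENNReal.rpow_mul]
      rw [show s / p * (1 / s) = 1 / p by field_simp, show (p - s) / p * (1 / s) = 1 / s - 1 / p by field_simp,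
        show -(n/p:ℝ) = -↑n * (1 / s) + ↑n * ((p - s) / p) * (1 / s) by field_simp; ring,
        ENNReal.rpow_add _ _ hR0 hRf]
      ring

theorem hedberg (n : ℕ) (hn : 2 ≤ n) (s p q α : ℝ) (hs : 0 < s) (hsp : s < p) (hα : 0 < α) (hq0 : 0 < q)
    (hq : 1 / q = 1 / p - α / n) : ∃ C : ℝ≥0∞, C ≠ ∞ ∧ ∀ h : Rn n → ℝ≥0∞, Measurable h →
    (∫⁻ w, h w ^ p) ≠ ∞ → ∀ x,
      ∫⁻ r in Ioi (0:ℝ), ENNReal.ofReal r ^ (α - 1) * Av n s h x r ≤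
        C * ((Mx n (fun w => h w ^ s) x ^ (1 / s)) ^ (p / q) * (∫⁻ w, h w ^ p) ^ (1 / p - 1 / q)) := by
  have hp : 0 < p := hs.trans hsp
  have hn0 : (0:ℝ) < n := by positivity
  have hps : 0 < 1 / s - 1 / p := by rw [sub_pos]; gcongr
  set K := volume (ball (0 : Rn n) 1) ^ (1 / s - 1 / p) with hK
  have hKf : K ≠ ∞ := ENNReal.rpow_ne_top_of_nonneg hps.le measure_ball_lt_top.ne
  have hnq : 0 < n / q := by positivity
  have hnq2 : (n:ℝ) / q = n / p - α := by
    have : (n:ℝ) / q = n * (1 / q) := by ring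
    rw [this, hq]; field_simp
  refine ⟨ENNReal.ofReal (1/α) + K * ENNReal.ofReal (1 / (n/q)), ?_, ?_⟩
  · exact ENNReal.add_ne_top.2 ⟨ENNReal.ofReal_ne_top, ENNReal.mul_ne_top hKf ENNReal.ofReal_ne_top⟩
  intro h hh hI x
  set M := Mx n (fun w => h w ^ s) x ^ (1 / s) with hM
  set I := ∫⁻ w, h w ^ p with hIdef
  have b1 : ∀ r : ℝ, 0 < r → Av n s h x r ≤ M := fun r hr => Av_le_Mx n s hs h x r hr
  have b2 : ∀ r : ℝ, 0 < r → Av n s h x r ≤ K * (ENNReal.ofReal r ^ (-(n/p:ℝ)) * I ^ (1 / p)) :=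
    fun r hr => Av_le_Lp n s p hs hsp h hh x r hr
  have zero_case : (∀ r : ℝ, 0 < r → Av n s h x r ≤ 0) →
      ∫⁻ r in Ioi (0:ℝ), ENNReal.ofReal r ^ (α - 1) * Av n s h x r = 0 := by
    intro hz
    rw [setLIntegral_congr_fun (g := fun _ => 0) measurableSet_Ioi]
    · simp
    · intro r hr
      simp [le_antisymm (hz r hr) zero_le]
  by_cases hI0 : I = 0
  · rw [zero_case]
    · exact zero_le
    · intro r hr
      refine (b2 r hr).trans ?_
      rw [hI0, ENNReal.zero_rpow_of_pos (by positivity)]; simp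
  by_cases hM0 : M = 0
  · rw [zero_case]
    · exact zero_le
    · intro r hr
      rw [← hM0]; exact b1 r hr
  by_cases hMt : M = ∞
  · have e1 : M ^ (p / q) = ∞ := by rw [hMt]; exact ENNReal.top_rpow_of_pos (by positivity)
    have e2 : I ^ (1 / p - 1 / q) ≠ 0 := by
      simp [ENNReal.rpow_eq_zero_iff, hI0, hI]
    rw [e1, ENNReal.top_mul e2, ENNReal.mul_top]
    · exact le_top
    · have : 0 < ENNReal.ofReal (1/α) := by simpa using hα
      exact (lt_of_lt_of_le this le_self_add).ne'
  set A := I ^ (1 / p) with hA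
  have hA0 : A ≠ 0 := by simp [hA, ENNReal.rpow_eq_zero_iff, hI0, hI]
  have hAf : A ≠ ∞ := ENNReal.rpow_ne_top_of_nonneg (by positivity) hI
  have hRA : ∀ c : ℝ, ((A * M⁻¹) ^ (p / n)) ^ c = A ^ (p / n * c) * M ^ (-(p / n * c)) := by
    intro c
    rw [← ENNReal.rpow_mul, ENNReal.mul_rpow_of_ne_top hAf (by simp [hM0]), ENNReal.inv_rpow, ENNReal.rpow_neg]
  have hR0 : (A * M⁻¹) ^ (p / n) ≠ 0 := by
    simp [ENNReal.rpow_eq_zero_iff, hA0, hMt, hM0, hAf, ENNReal.mul_eq_top]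
  have hRf : (A * M⁻¹) ^ (p / n) ≠ ∞ := by
    refine ENNReal.rpow_ne_top_of_nonneg (by positivity) (ENNReal.mul_ne_top hAf (by simp [hM0]))
  set R := ((A * M⁻¹) ^ (p / n)).toReal with hR
  have hRR : ENNReal.ofReal R = (A * M⁻¹) ^ (p / n) := ENNReal.ofReal_toReal hRf
  have hRpos : 0 < R := ENNReal.toReal_pos hR0 hRf
  have hI1 : I ^ (1 / p - 1 / q) = A ^ (1 - p / q) := by
    rw [hA, ← ENNReal.rpow_mul]; congr 1; field_simp
  have hpa : p / n * α = 1 - p / q := by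
    have : p / q = p * (1 / q) := by ring
    rw [this, hq]; field_simp; ring
  rw [← Ioc_union_Ioi_eq_Ioi hRpos.le, lintegral_union measurableSet_Ioi
    (Ioc_disjoint_Ioi le_rfl), hI1, add_mul]
  gcongr
  · calc _ ≤ ∫⁻ r in Ioc 0 R, ENNReal.ofReal r ^ (α - 1) * M := by
          apply setLIntegral_mono' measurableSet_Ioc
          intro r hr
          gcongr
          exact b1 r hr.1
      _ = _ := by
          rw [lintegral_mul_const' _ _ hMt, pow_int_Ioc α hα R hRpos.le, hRR, hRA, hpa,
            show p / q = 1 + (-(1 - p/q)) by ring, ENNReal.rpow_add _ _ hM0 hMt, ENNReal.rpow_one]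
          ring_nf
  · calc _ ≤ ∫⁻ r in Ioi R, (K * A) * ENNReal.ofReal r ^ (-(n/q) - 1) := by
          apply setLIntegral_mono' measurableSet_Ioi
          intro r hr
          have hr0 : 0 < r := hRpos.trans hr
          have hr1 : ENNReal.ofReal r ≠ 0 := by simpa using hr0
          calc _ ≤ ENNReal.ofReal r ^ (α - 1) * (K * (ENNReal.ofReal r ^ (-(n/p:ℝ)) * A)) := by
                gcongr; exact b2 r hr0
            _ = _ := by
                rw [show -((n:ℝ)/q) - 1 = (α - 1) + (-(n/p:ℝ)) by rw [hnq2]; ring,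
                  ENNReal.rpow_add _ _ hr1 ENNReal.ofReal_ne_top]
                ring
      _ = _ := by
          rw [lintegral_const_mul' _ _ (ENNReal.mul_ne_top hKf hAf), pow_int_Ioi _ hnq R hRpos, hRR, hRA,
            show p / n * -(↑n / q) = - (p / q) by field_simp, neg_neg,
            show 1 - p / q = 1 + -(p / q) by ring, ENNReal.rpow_add _ _ hA0 hAf, ENNReal.rpow_one]
          ring


theorem rpow_comp (lam a b : ℝ) (ha : 0 < a) (hb : 0 < b) (hab : a ≤ 2 * b) (hba : b ≤ 2 * a) :
    ENNReal.ofReal a ^ lam ≤ ENNReal.ofReal (2 ^ |lam|) * ENNReal.ofReal b ^ lam := by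
  rw [ENNReal.ofReal_rpow_of_pos ha, ENNReal.ofReal_rpow_of_pos hb, ← ENNReal.ofReal_mul (by positivity)]
  apply ENNReal.ofReal_le_ofReal
  rcases le_total 0 lam with h | h
  · rw [abs_of_nonneg h, ← Real.mul_rpow (by norm_num) hb.le]
    exact Real.rpow_le_rpow ha.le hab h
  · rw [abs_of_nonpos h, Real.rpow_neg (by norm_num), ← Real.inv_rpow (by norm_num),
      ← Real.mul_rpow (by norm_num) hb.le]
    exact Real.rpow_le_rpow_of_nonpos (by positivity) (by linarith) h

theorem Av_mono_mul (n : ℕ) (s : ℝ) (hs : 0 < s) (g h : Rn n → ℝ≥0∞) (x : Rn n) (r : ℝ) (a b : ℝ≥0∞)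
    (ha : a ≠ ∞) (hb : b ≠ ∞) (hgh : ∀ w ∈ closedBall x r, a * g w ≤ b * h w) :
    a * Av n s g x r ≤ b * Av n s h x r := by
  have key : ∀ (c : ℝ≥0∞) (u : Rn n → ℝ≥0∞), c ≠ ∞ → c * Av n s u x r =
      (ENNReal.ofReal r ^ (-(n:ℝ)) * ∫⁻ w in closedBall x r, (c * u w) ^ s) ^ (1 / s) := by
    intro c u hc
    unfold Av
    simp_rw [ENNReal.mul_rpow_of_nonneg _ _ hs.le]
    rw [lintegral_const_mul' _ _ (ENNReal.rpow_ne_top_of_nonneg hs.le hc), mul_left_comm,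
      ENNReal.mul_rpow_of_nonneg (c ^ s) _ (by positivity : 0 ≤ 1 / s), ← ENNReal.rpow_mul,
      mul_one_div_cancel hs.ne', ENNReal.rpow_one]
  rw [key a g ha, key b h hb]
  gcongr ?_ ^ _
  refine mul_le_mul_right ?_ _
  apply setLIntegral_mono' measurableSet_closedBall
  intro w hw
  exact ENNReal.rpow_le_rpow (hgh w hw) hs.le

theorem small_part (n : ℕ) (hn : 2 ≤ n) (s p q α lam : ℝ) (hs : 0 < s) (hsp : s < p) (hα : 0 < α) (hq0 : 0 < q)
    (hq : 1 / q = 1 / p - α / n) : ∃ C : ℝ≥0∞, C ≠ ∞ ∧ ∀ g h : Rn n → ℝ≥0∞, Measurable h →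
    (∀ x ≠ 0, h x = ENNReal.ofReal ‖x‖ ^ lam * g x) →
    (∫⁻ w, h w ^ p) ≠ ∞ → ∀ x ≠ 0,
      (ENNReal.ofReal ‖x‖ ^ lam * ∫⁻ r in Ioc 0 (‖x‖ / 4), ENNReal.ofReal r ^ (α - 1) * Av n s g x r) ^ q ≤
        C * ((∫⁻ w, h w ^ p) ^ (q / p - 1) * (Mx n (fun w => h w ^ s) x) ^ (p / s)) := by
  obtain ⟨C, hC, H⟩ := hedberg n hn s p q α hs hsp hα hq0 hq
  have hp : 0 < p := hs.trans hsp
  refine ⟨(ENNReal.ofReal (2 ^ |lam|) * C) ^ q, ENNReal.rpow_ne_top_of_nonneg hq0.le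
    (ENNReal.mul_ne_top ENNReal.ofReal_ne_top hC), ?_⟩
  intro g h hh hgh hI x hx
  have hx0 : 0 < ‖x‖ := norm_pos_iff.2 hx
  have hxl : ENNReal.ofReal ‖x‖ ^ lam ≠ ∞ := by
    rw [ENNReal.ofReal_rpow_of_pos hx0]; exact ENNReal.ofReal_ne_top
  have h1 : ENNReal.ofReal ‖x‖ ^ lam * ∫⁻ r in Ioc 0 (‖x‖ / 4), ENNReal.ofReal r ^ (α - 1) * Av n s g x r ≤
      ENNReal.ofReal (2 ^ |lam|) * ∫⁻ r in Ioi (0:ℝ), ENNReal.ofReal r ^ (α - 1) * Av n s h x r := by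
    rw [← lintegral_const_mul' _ _ hxl, ← lintegral_const_mul' _ _ ENNReal.ofReal_ne_top]
    refine (setLIntegral_mono' measurableSet_Ioc fun r hr => ?_).trans (lintegral_mono_set Ioc_subset_Ioi_self)
    rw [mul_left_comm, mul_left_comm (ENNReal.ofReal (2 ^ |lam|))]
    refine mul_le_mul_right ?_ _
    refine Av_mono_mul n s hs g h x r _ _ hxl ENNReal.ofReal_ne_top fun w hw => ?_
    have hd : ‖w - x‖ ≤ ‖x‖ / 4 := by
      rw [← dist_eq_norm]; exact (mem_closedBall.1 hw).trans hr.2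
    have e1 : ‖w‖ ≤ ‖x‖ + ‖w - x‖ := by
      calc ‖w‖ = ‖x + (w - x)‖ := by congr 1; abel
        _ ≤ _ := norm_add_le _ _
    have e2 : ‖x‖ ≤ ‖w‖ + ‖w - x‖ := by
      calc ‖x‖ = ‖w - (w - x)‖ := by congr 1; abel
        _ ≤ _ := norm_sub_le _ _
    have hw0 : 0 < ‖w‖ := by linarith
    rw [hgh w (norm_pos_iff.1 hw0), ← mul_assoc]
    gcongr
    exact rpow_comp lam _ _ hx0 hw0 (by linarith) (by linarith)
  refine (ENNReal.rpow_le_rpow (h1.trans (mul_le_mul_right (H h hh hI x) _)) hq0.le).trans (le_of_eq ?_)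
  rw [← mul_assoc, ENNReal.mul_rpow_of_nonneg _ _ hq0.le, ENNReal.mul_rpow_of_nonneg (_ ^ (p/q)) _ hq0.le]
  simp only [← ENNReal.rpow_mul]
  rw [show 1 / s * (p / q) * q = p / s by field_simp, show (1 / p - 1 / q) * q = q / p - 1 by field_simp]
  ring


theorem pow_ball (n : ℕ) (hn : 2 ≤ n) (b : ℝ) (hb : b < n) : ∃ C : ℝ≥0∞, C ≠ ∞ ∧ ∀ R : ℝ, 0 ≤ R →
    ∫⁻ w in closedBall (0 : Rn n) R, ENNReal.ofReal ‖w‖ ^ (-b) = C * ENNReal.ofReal R ^ (n - b) := by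
  refine ⟨(∫⁻ _ : sphere (0 : Rn n) 1, 1 ∂(volume : Measure (Rn n)).toSphere) * ENNReal.ofReal (1 / (n - b)), ?_, ?_⟩
  · refine ENNReal.mul_ne_top ?_ ENNReal.ofReal_ne_top
    simp only [lintegral_const, one_mul]; exact measure_ne_top _ _
  intro R hR
  have h := polar_lintegral n hn (fun _ => 1) measurable_const
    ((Iic R).indicator fun r => ENNReal.ofReal r ^ (-b)) (Measurable.indicator (by fun_prop) measurableSet_Iic)
  rw [mul_assoc, ← pow_int_Ioc (n - b) (by linarith) R hR]
  refine Eq.trans ?_ (h.trans ?_)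
  · rw [← lintegral_indicator measurableSet_closedBall]
    refine lintegral_congr fun w => ?_
    simp [indicator]
  · congr 1
    have : ∀ r : ℝ, ENNReal.ofReal (r ^ (n-1)) * (Iic R).indicator (fun r => ENNReal.ofReal r ^ (-b)) r =
      (Iic R).indicator (fun r => ENNReal.ofReal (r ^ (n-1)) * ENNReal.ofReal r ^ (-b)) r := by
      intro r; by_cases hr : r ∈ Iic R <;> simp [hr]
    simp_rw [this]
    rw [setLIntegral_indicator measurableSet_Iic, Iic_inter_Ioi]
    apply setLIntegral_congr_fun measurableSet_Ioc
    intro r hr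
    have hr0 : ENNReal.ofReal r ≠ 0 := by simpa using hr.1
    simp only
    rw [ENNReal.ofReal_pow hr.1.le, ← ENNReal.rpow_natCast, ← ENNReal.rpow_add _ _ hr0 ENNReal.ofReal_ne_top]
    congr 1
    push_cast [Nat.cast_sub (by omega : 1 ≤ n)]
    ring

theorem ae_ne_zero (n : ℕ) (hn : 2 ≤ n) : ∀ᵐ w : Rn n, w ≠ 0 := by
  have : Nontrivial (Rn n) := by
    have : Nonempty (Fin n) := ⟨⟨0, by omega⟩⟩
    infer_instance
  rw [ae_iff]; simp

theorem Av_large (n : ℕ) (hn : 2 ≤ n) (s p γ : ℝ) (hs : 0 < s) (hsp : s < p) (hγ : γ * (s * p / (p - s)) < n) :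
    ∃ C : ℝ≥0∞, C ≠ ∞ ∧ ∀ g k : Rn n → ℝ≥0∞, Measurable k →
    (∀ x ≠ 0, k x = ENNReal.ofReal ‖x‖ ^ γ * g x) → ∀ x : Rn n, ∀ r : ℝ, 0 < r → ‖x‖ ≤ 4 * r →
      Av n s g x r ≤ C * (ENNReal.ofReal r ^ (-(n / p) - γ) * (∫⁻ w in closedBall 0 (5 * r), k w ^ p) ^ (1 / p)) := by
  obtain ⟨C, hC, H⟩ := pow_ball n hn (γ * (s * p / (p - s))) hγ
  have hp : 0 < p := hs.trans hsp
  have hps : 0 < p - s := by linarith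
  set b := γ * (s * p / (p - s)) with hb
  have a0 : 0 ≤ (p - s) / p := by positivity
  have a1 : 0 ≤ 1 / s := by positivity
  refine ⟨((C * ENNReal.ofReal 5 ^ (n - b)) ^ ((p - s) / p)) ^ (1 / s), ?_, ?_⟩
  · refine ENNReal.rpow_ne_top_of_nonneg a1 (ENNReal.rpow_ne_top_of_nonneg a0 (ENNReal.mul_ne_top hC ?_))
    exact ENNReal.rpow_ne_top_of_nonneg (by linarith) ENNReal.ofReal_ne_top
  intro g k hk hgk x r hr hxr
  have hR0 : ENNReal.ofReal r ≠ 0 := by simpa using hr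
  have hRf : ENNReal.ofReal r ≠ ∞ := ENNReal.ofReal_ne_top
  have hsub : closedBall x r ⊆ closedBall 0 (5 * r) := by
    apply closedBall_subset_closedBall'
    rw [dist_zero_right]; linarith
  have h1 : ∫⁻ w in closedBall x r, g w ^ s ≤ ∫⁻ w in closedBall 0 (5 * r), (k w * ENNReal.ofReal ‖w‖ ^ (-γ)) ^ s := by
    refine (lintegral_mono_set hsub).trans (le_of_eq ?_)
    apply lintegral_congr_ae
    filter_upwards [ae_restrict_of_ae (ae_ne_zero n hn)] with w hw
    have hw0 : ENNReal.ofReal ‖w‖ ≠ 0 := by simpa using hw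
    rw [hgk w hw, mul_right_comm, ← ENNReal.rpow_add _ _ hw0 ENNReal.ofReal_ne_top]
    simp
  have h2 := holder_ps (volume.restrict (closedBall (0 : Rn n) (5 * r))) s p hs hsp k (fun w => ENNReal.ofReal ‖w‖ ^ (-γ))
    hk (by fun_prop)
  simp only [← ENNReal.rpow_mul] at h2
  rw [neg_mul, ← hb, H (5 * r) (by positivity), ENNReal.ofReal_mul (by norm_num),
    ENNReal.mul_rpow_of_nonneg _ _ (by linarith : 0 ≤ (n:ℝ) - b), ← mul_assoc] at h2
  unfold Av
  refine (ENNReal.rpow_le_rpow (mul_le_mul_right (h1.trans h2) _) a1).trans (le_of_eq ?_)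
  rw [ENNReal.mul_rpow_of_nonneg (C * _) _ a0, ENNReal.mul_rpow_of_nonneg _ _ a1, ENNReal.mul_rpow_of_nonneg _ _ a1,
        ENNReal.mul_rpow_of_nonneg _ _ a1]
  simp only [← ENNReal.rpow_mul]
  rw [show s / p * (1 / s) = 1 / p by field_simp,
    show -(n/p:ℝ) - γ = -↑n * (1 / s) + (↑n - b) * ((p - s) / p) * (1 / s) by rw [hb]; field_simp; ring,
        ENNReal.rpow_add _ _ hR0 hRf]
  ring


theorem tail_holder (q κ δ : ℝ) (hq : 1 < q) (hκ : 0 < κ) (V : ℝ → ℝ≥0∞) (hV : Measurable V) (ρ : ℝ) (hρ : 0 < ρ) :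
    (∫⁻ r in Ioi ρ, ENNReal.ofReal r ^ (-κ - δ / q - 1) * V r ^ (1 / q)) ^ q ≤
      ENNReal.ofReal (1 / (κ / 2 * (q / (q - 1)))) ^ (q - 1) * (ENNReal.ofReal ρ ^ (-(κ * q / 2)) *
        ∫⁻ r in Ioi ρ, ENNReal.ofReal r ^ (-(κ * q / 2) - δ - 1) * V r) := by
  have hq0 : 0 < q := by linarith
  have hq1 : 0 < q - 1 := by linarith
  have hc : q.HolderConjugate (q / (q - 1)) := by
    rw [Real.holderConjugate_iff]
    refine ⟨hq, ?_⟩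
    field_simp; ring
  have h := ENNReal.lintegral_mul_le_Lp_mul_Lq (volume.restrict (Ioi ρ)) hc
    (f := fun r => (ENNReal.ofReal r ^ (-(κ * q / 2) - δ - 1) * V r) ^ (1 / q))
    (g := fun r => ENNReal.ofReal r ^ (-(κ / 2) - (q - 1) / q)) (by fun_prop) (by fun_prop)
  simp only [Pi.mul_apply, ← ENNReal.rpow_mul, one_div_mul_cancel hq0.ne', ENNReal.rpow_one] at h
  rw [show (-(κ / 2) - (q - 1) / q) * (q / (q - 1)) = -(κ / 2 * (q / (q - 1))) - 1 by field_simp,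
    pow_int_Ioi _ (by positivity) ρ hρ] at h
  have e : ∫⁻ r in Ioi ρ, ENNReal.ofReal r ^ (-κ - δ / q - 1) * V r ^ (1 / q) =
      ∫⁻ r in Ioi ρ, (ENNReal.ofReal r ^ (-(κ * q / 2) - δ - 1) * V r) ^ (1 / q) *
        ENNReal.ofReal r ^ (-(κ / 2) - (q - 1) / q) := by
    apply setLIntegral_congr_fun measurableSet_Ioi
    intro r hr
    have hr0 : ENNReal.ofReal r ≠ 0 := by simpa using hρ.trans hr
    simp only
    rw [ENNReal.mul_rpow_of_nonneg _ _ (by positivity : 0 ≤ 1 / q), ← ENNReal.rpow_mul,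
      show -κ - δ / q - 1 = (-(κ * q / 2) - δ - 1) * (1 / q) + (-(κ / 2) - (q - 1) / q) by field_simp; ring,
      ENNReal.rpow_add _ _ hr0 ENNReal.ofReal_ne_top]
    ring
  rw [e]
  refine (ENNReal.rpow_le_rpow h hq0.le).trans (le_of_eq ?_)
  rw [ENNReal.mul_rpow_of_nonneg _ _ hq0.le,
    ENNReal.mul_rpow_of_nonneg _ _ (by positivity : 0 ≤ 1 / (q / (q - 1))), ENNReal.mul_rpow_of_nonneg _ _ hq0.le]
  simp only [← ENNReal.rpow_mul, one_div_mul_cancel hq0.ne', ENNReal.rpow_one]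
  rw [show 1 / (q / (q - 1)) * q = q - 1 by field_simp,
    show -(κ / 2 * (q / (q - 1))) * (1 / (q / (q - 1))) * q = -(κ * q / 2) by field_simp]
  ring

theorem large_part (n : ℕ) (hn : 2 ≤ n) (s p q α lam δ : ℝ) (hs : 0 < s) (hsp : s < p) (hα : 0 < α) (hq1 : 1 < q)
    (hq : 1 / q = 1 / p - α / n) (hδ : 0 < δ) (hγ : (lam + δ / p) * (s * p / (p - s)) < n) (hκ : 0 < lam + n / q) :
    ∃ C : ℝ≥0∞, C ≠ ∞ ∧ ∀ g h k : Rn n → ℝ≥0∞, Measurable h → Measurable k →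
    (∀ x ≠ 0, h x = ENNReal.ofReal ‖x‖ ^ lam * g x) →
    (∀ x ≠ 0, k x = ENNReal.ofReal ‖x‖ ^ (lam + δ / p) * g x) → 
    (∫⁻ w, h w ^ p) ≠ ∞ → ∀ x ≠ 0,
      (ENNReal.ofReal ‖x‖ ^ lam * ∫⁻ r in Ioi (‖x‖ / 4), ENNReal.ofReal r ^ (α - 1) * Av n s g x r) ^ q ≤
        C * ((∫⁻ w, h w ^ p) ^ (q / p - 1) * (ENNReal.ofReal ‖x‖ ^ ((lam + n / q) * q / 2 - n) *
          ∫⁻ r in Ioi (‖x‖ / 4), ENNReal.ofReal r ^ (-((lam + n / q) * q / 2) - δ - 1) *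
            ∫⁻ w in closedBall 0 (5 * r), k w ^ p)) := by
  obtain ⟨C, hC, H⟩ := Av_large n hn s p (lam + δ / p) hs hsp hγ
  have hp : 0 < p := hs.trans hsp
  have hq0 : 0 < q := by linarith
  have hn0 : (0:ℝ) < n := by positivity
  set κ := lam + n / q with hκd
  have hpq : 0 < 1 / p - 1 / q := by
    rw [hq]; have : 0 < α / n := by positivity
    linarith
  have hqp : 0 < q / p - 1 := by
    have : q / p - 1 = q * (1 / p - 1 / q) := by field_simp
    rw [this]; positivity
  have hnq2 : (n:ℝ) / q = n / p - α := by
    have : (n:ℝ) / q = n * (1 / q) := by ring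
    rw [this, hq]; field_simp
  set D := C * (ENNReal.ofReal 5 ^ δ) ^ (1 / p - 1 / q) with hD
  have hDf : D ≠ ∞ := ENNReal.mul_ne_top hC (ENNReal.rpow_ne_top_of_nonneg hpq.le
    (ENNReal.rpow_ne_top_of_nonneg hδ.le ENNReal.ofReal_ne_top))
  refine ⟨D ^ q * ENNReal.ofReal (1 / (κ / 2 * (q / (q - 1)))) ^ (q - 1) * ENNReal.ofReal (1/4) ^ (-(κ * q / 2)), ?_, ?_⟩
  · refine ENNReal.mul_ne_top (ENNReal.mul_ne_top (ENNReal.rpow_ne_top_of_nonneg hq0.le hDf) 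
      (ENNReal.rpow_ne_top_of_nonneg (by linarith) ENNReal.ofReal_ne_top)) ?_
    rw [ENNReal.ofReal_rpow_of_pos (by norm_num)]; exact ENNReal.ofReal_ne_top
  intro g h k hh hk hgh hgk hI x hx
  have hx0 : 0 < ‖x‖ := norm_pos_iff.2 hx
  have hX0 : ENNReal.ofReal ‖x‖ ≠ 0 := by simpa using hx
  set V : ℝ → ℝ≥0∞ := fun r => ∫⁻ w in closedBall 0 (5 * r), k w ^ p with hVd
  have hVm : Measurable V := by
    apply Monotone.measurable
    intro a b hab
    exact lintegral_mono_set (closedBall_subset_closedBall (by linarith))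
  set I := ∫⁻ w, h w ^ p with hId
  have hV : ∀ r : ℝ, 0 < r → V r ≤ ENNReal.ofReal 5 ^ δ * (ENNReal.ofReal r ^ δ * I) := by
    intro r hr
    calc V r ≤ ∫⁻ w in closedBall (0 : Rn n) (5 * r), (ENNReal.ofReal 5 ^ δ * ENNReal.ofReal r ^ δ) * h w ^ p := by
          apply lintegral_mono_ae
          filter_upwards [ae_restrict_of_ae (ae_ne_zero n hn), ae_restrict_mem measurableSet_closedBall] with w hw hwb
          have hw0 : ENNReal.ofReal ‖w‖ ≠ 0 := by simpa using hw
          have hwr : ‖w‖ ≤ 5 * r := by simpa using hwb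
          rw [hgk w hw, hgh w hw, ENNReal.rpow_add _ _ hw0 ENNReal.ofReal_ne_top, mul_comm (_ ^ lam), mul_assoc,
            ENNReal.mul_rpow_of_nonneg _ _ hp.le, ← ENNReal.rpow_mul, div_mul_cancel₀ _ hp.ne',
            ← ENNReal.mul_rpow_of_nonneg _ _ hδ.le, ← ENNReal.ofReal_mul (by norm_num)]
          gcongr
      _ ≤ ∫⁻ w : Rn n, (ENNReal.ofReal 5 ^ δ * ENNReal.ofReal r ^ δ) * h w ^ p := setLIntegral_le_lintegral _ _
      _ = _ := by rw [lintegral_const_mul _ (by fun_prop), mul_assoc]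
  have hAv : ∀ r : ℝ, ‖x‖ / 4 < r → ENNReal.ofReal r ^ (α - 1) * Av n s g x r ≤
      (D * I ^ (1 / p - 1 / q)) * (ENNReal.ofReal r ^ (-κ - δ / q - 1) * V r ^ (1 / q)) := by
    intro r hr
    have hr0 : 0 < r := by linarith
    have hR0 : ENNReal.ofReal r ≠ 0 := by simpa using hr0
    have hv : V r ^ (1 / p) ≤ V r ^ (1 / q) * (ENNReal.ofReal 5 ^ δ * (ENNReal.ofReal r ^ δ * I)) ^ (1 / p - 1 / q) := by
      calc V r ^ (1 / p) = V r ^ (1 / q) * V r ^ (1 / p - 1 / q) := by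
            rw [← ENNReal.rpow_add_of_nonneg _ _ (by positivity) hpq.le]; congr 1; ring
        _ ≤ _ := by
            gcongr
            exact hV r hr0
    calc _ ≤ ENNReal.ofReal r ^ (α - 1) * (C * (ENNReal.ofReal r ^ (-(n / p) - (lam + δ / p)) * 
            (V r ^ (1 / q) * (ENNReal.ofReal 5 ^ δ * (ENNReal.ofReal r ^ δ * I)) ^ (1 / p - 1 / q)))) := by
          refine mul_le_mul_right ((H g k hk hgk x r hr0 (by linarith)).trans ?_) _
          gcongr
      _ = _ := by
          rw [ENNReal.mul_rpow_of_nonneg _ _ hpq.le, ENNReal.mul_rpow_of_nonneg _ _ hpq.le, hD,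
            show -κ - δ / q - 1 = (α - 1) + (-(n / p) - (lam + δ / p)) + δ * (1 / p - 1 / q) by 
              rw [hκd, hnq2]; ring,
            ENNReal.rpow_add _ _ hR0 ENNReal.ofReal_ne_top, ENNReal.rpow_add _ _ hR0 ENNReal.ofReal_ne_top,
            ENNReal.rpow_mul]
          ring
  have hT := tail_holder q κ δ hq1 hκ V hVm (‖x‖ / 4) (by positivity)
  have hDI : D * I ^ (1 / p - 1 / q) ≠ ∞ := ENNReal.mul_ne_top hDf (ENNReal.rpow_ne_top_of_nonneg hpq.le hI)
  calc _ ≤ (ENNReal.ofReal ‖x‖ ^ lam * ((D * I ^ (1 / p - 1 / q)) *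
        ∫⁻ r in Ioi (‖x‖ / 4), (ENNReal.ofReal r ^ (-κ - δ / q - 1) * V r ^ (1 / q)))) ^ q := by
        rw [← lintegral_const_mul' _ _ hDI]
        gcongr ?_ ^ _
        exact mul_le_mul_right (setLIntegral_mono' measurableSet_Ioi hAv) _
    _ = ENNReal.ofReal ‖x‖ ^ (lam * q) * (D ^ q * I ^ (q / p - 1)) *
        (∫⁻ r in Ioi (‖x‖ / 4), (ENNReal.ofReal r ^ (-κ - δ / q - 1) * V r ^ (1 / q))) ^ q := by
        rw [ENNReal.mul_rpow_of_nonneg _ _ hq0.le, ENNReal.mul_rpow_of_nonneg _ _ hq0.le, ENNReal.mul_rpow_of_nonneg _ _ hq0.le,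
          ← ENNReal.rpow_mul, ← ENNReal.rpow_mul, show (1 / p - 1 / q) * q = q / p - 1 by field_simp]
        ring
    _ ≤ ENNReal.ofReal ‖x‖ ^ (lam * q) * (D ^ q * I ^ (q / p - 1)) * _ := mul_le_mul_right hT _
    _ = _ := by
        rw [show κ * q / 2 - n = lam * q + -(κ * q / 2) by rw [hκd]; field_simp; ring,
          ENNReal.rpow_add _ _ hX0 ENNReal.ofReal_ne_top, show ‖x‖ / 4 = 1 / 4 * ‖x‖ by ring,
          ENNReal.ofReal_mul (by norm_num : (0:ℝ) ≤ 1 / 4),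
          ENNReal.mul_rpow_of_ne_top ENNReal.ofReal_ne_top ENNReal.ofReal_ne_top]
        ring


theorem large_int (n : ℕ) (hn : 2 ≤ n) (p c δ lam : ℝ) (hp : 0 < p) (hc : 0 < c) (hδ : 0 < δ) :
    ∃ C : ℝ≥0∞, C ≠ ∞ ∧ ∀ g h k : Rn n → ℝ≥0∞, Measurable h → Measurable k →
    (∀ x ≠ 0, h x = ENNReal.ofReal ‖x‖ ^ lam * g x) →
    (∀ x ≠ 0, k x = ENNReal.ofReal ‖x‖ ^ (lam + δ / p) * g x) → 
      ∫⁻ x : Rn n, (ENNReal.ofReal ‖x‖ ^ (c - n) *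
          ∫⁻ r in Ioi (‖x‖ / 4), ENNReal.ofReal r ^ (-c - δ - 1) *
            ∫⁻ w in closedBall 0 (5 * r), k w ^ p) ≤ C * ∫⁻ w, h w ^ p := by
  obtain ⟨C, hC, H⟩ := pow_ball n hn (n - c) (by linarith)
  rw [sub_sub_cancel, neg_sub] at H
  have h4 : ENNReal.ofReal 4 ^ c ≠ ∞ := ENNReal.rpow_ne_top_of_nonneg hc.le ENNReal.ofReal_ne_top
  have h5 : ENNReal.ofReal (1/6) ^ (-δ) ≠ ∞ := by
    rw [ENNReal.ofReal_rpow_of_pos (by norm_num)]; exact ENNReal.ofReal_ne_top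
  refine ⟨(C * ENNReal.ofReal 4 ^ c) * (ENNReal.ofReal (1 / δ) * ENNReal.ofReal (1/6) ^ (-δ)),
    ENNReal.mul_ne_top (ENNReal.mul_ne_top hC h4) (ENNReal.mul_ne_top ENNReal.ofReal_ne_top h5), ?_⟩
  intro g h k hh hk hgh hgk
  set V : ℝ → ℝ≥0∞ := fun r => ∫⁻ w in closedBall 0 (5 * r), k w ^ p with hVd
  have hVm : Measurable V := by
    apply Monotone.measurable
    intro a b hab
    exact lintegral_mono_set (closedBall_subset_closedBall (by linarith))
  have s1 : ∀ x : Rn n, ENNReal.ofReal ‖x‖ ^ (c - n) * ∫⁻ r in Ioi (‖x‖ / 4), ENNReal.ofReal r ^ (-c - δ - 1) * V r ≤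
      ∫⁻ r in Ioi (0:ℝ), {z : Rn n × ℝ | ‖z.1‖ ≤ 4 * z.2}.indicator (fun z =>
        ENNReal.ofReal ‖z.1‖ ^ (c - n) * (ENNReal.ofReal z.2 ^ (-c - δ - 1) * V z.2)) (x, r) := by
    intro x
    rw [← lintegral_const_mul _ (by fun_prop)]
    have hsub : Ioi (‖x‖ / 4) ⊆ Ioi 0 := Ioi_subset_Ioi (by positivity)
    refine le_trans ?_ (lintegral_mono_set hsub)
    apply setLIntegral_mono' measurableSet_Ioi
    intro r hr
    have hr : ‖x‖ / 4 < r := hr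
    rw [indicator_of_mem]
    show ‖x‖ ≤ 4 * r
    linarith
  have hm1 : MeasurableSet {z : Rn n × ℝ | ‖z.1‖ ≤ 4 * z.2} := measurableSet_le (by fun_prop) (by fun_prop)
  have hm2 : MeasurableSet {z : ℝ × Rn n | ‖z.2‖ ≤ 5 * z.1} := measurableSet_le (by fun_prop) (by fun_prop)
  calc _ ≤ ∫⁻ x : Rn n, ∫⁻ r in Ioi (0:ℝ), {z : Rn n × ℝ | ‖z.1‖ ≤ 4 * z.2}.indicator (fun z =>
        ENNReal.ofReal ‖z.1‖ ^ (c - n) * (ENNReal.ofReal z.2 ^ (-c - δ - 1) * V z.2)) (x, r) := lintegral_mono s1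
    _ = ∫⁻ r in Ioi (0:ℝ), ∫⁻ x : Rn n, {z : Rn n × ℝ | ‖z.1‖ ≤ 4 * z.2}.indicator (fun z =>
        ENNReal.ofReal ‖z.1‖ ^ (c - n) * (ENNReal.ofReal z.2 ^ (-c - δ - 1) * V z.2)) (x, r) := by
        rw [lintegral_lintegral_swap]
        exact (Measurable.indicator (by fun_prop) hm1).aemeasurable
    _ = ∫⁻ r in Ioi (0:ℝ), (C * ENNReal.ofReal 4 ^ c) * (ENNReal.ofReal r ^ (-δ - 1) * V r) := by
        apply setLIntegral_congr_fun measurableSet_Ioi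
        intro r hr
        have hr : 0 < r := hr
        have hR0 : ENNReal.ofReal r ≠ 0 := by simpa using hr
        simp only
        have : ∀ x : Rn n, {z : Rn n × ℝ | ‖z.1‖ ≤ 4 * z.2}.indicator (fun z =>
          ENNReal.ofReal ‖z.1‖ ^ (c - n) * (ENNReal.ofReal z.2 ^ (-c - δ - 1) * V z.2)) (x, r) =
          (closedBall (0 : Rn n) (4 * r)).indicator (fun x => ENNReal.ofReal ‖x‖ ^ (c - n) *
            (ENNReal.ofReal r ^ (-c - δ - 1) * V r)) x := by
          intro x
          simp [indicator]
        simp_rw [this]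
        rw [lintegral_indicator measurableSet_closedBall, lintegral_mul_const _ (by fun_prop), H _ (by positivity),
          ENNReal.ofReal_mul (by norm_num), ENNReal.mul_rpow_of_nonneg _ _ hc.le,
          show -δ - 1 = c + (-c - δ - 1) by ring, ENNReal.rpow_add _ _ hR0 ENNReal.ofReal_ne_top]
        ring
    _ = (C * ENNReal.ofReal 4 ^ c) * ∫⁻ r in Ioi (0:ℝ), ENNReal.ofReal r ^ (-δ - 1) * V r := by
        rw [lintegral_const_mul _ (by fun_prop)]
    _ = (C * ENNReal.ofReal 4 ^ c) * ∫⁻ r in Ioi (0:ℝ), ∫⁻ w : Rn n, {z : ℝ × Rn n | ‖z.2‖ ≤ 5 * z.1}.indicator (fun z =>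
        ENNReal.ofReal z.1 ^ (-δ - 1) * k z.2 ^ p) (r, w) := by
        congr 1
        refine lintegral_congr fun r => ?_
        rw [hVd]
        simp only
        rw [← lintegral_const_mul _ (by fun_prop), ← lintegral_indicator measurableSet_closedBall]
        refine lintegral_congr fun w => ?_
        simp [indicator]
    _ = (C * ENNReal.ofReal 4 ^ c) * ∫⁻ w : Rn n, ∫⁻ r in Ioi (0:ℝ), {z : ℝ × Rn n | ‖z.2‖ ≤ 5 * z.1}.indicator (fun z =>
        ENNReal.ofReal z.1 ^ (-δ - 1) * k z.2 ^ p) (r, w) := by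
        rw [lintegral_lintegral_swap]
        exact (Measurable.indicator (by fun_prop) hm2).aemeasurable
    _ ≤ (C * ENNReal.ofReal 4 ^ c) * ∫⁻ w : Rn n, (ENNReal.ofReal (1 / δ) * ENNReal.ofReal (1/6) ^ (-δ)) * h w ^ p := by
        refine mul_le_mul_right ?_ _
        apply lintegral_mono_ae
        filter_upwards [ae_ne_zero n hn] with w hw
        have hw1 : 0 < ‖w‖ := norm_pos_iff.2 hw
        have hw0 : ENNReal.ofReal ‖w‖ ≠ 0 := by simpa using hw
        calc _ ≤ ∫⁻ r in Ioi (0:ℝ), (Ioi (1 / 6 * ‖w‖)).indicator (fun r => ENNReal.ofReal r ^ (-δ - 1) * k w ^ p) r := by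
              apply setLIntegral_mono' measurableSet_Ioi
              intro r hr
              have hr : 0 < r := hr
              by_cases hwr : ‖w‖ ≤ 5 * r
              · rw [indicator_of_mem (by exact hwr), indicator_of_mem]
                show 1 / 6 * ‖w‖ < r
                linarith
              · rw [indicator_of_notMem (by exact hwr)]; exact zero_le
          _ ≤ ∫⁻ r in Ioi (1 / 6 * ‖w‖), ENNReal.ofReal r ^ (-δ - 1) * k w ^ p := by
              rw [← lintegral_indicator measurableSet_Ioi (fun r => ENNReal.ofReal r ^ (-δ - 1) * k w ^ p)]
              exact setLIntegral_le_lintegral _ _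
          _ = _ := by
              rw [lintegral_mul_const _ (by fun_prop), pow_int_Ioi δ hδ _ (by positivity),
                hgk w hw, hgh w hw, ENNReal.rpow_add _ _ hw0 ENNReal.ofReal_ne_top, mul_comm (_ ^ lam) (_ ^ (δ / p)),
                mul_assoc (_ ^ (δ / p)),
                ENNReal.mul_rpow_of_nonneg (_ ^ (δ / p)) _ hp.le, ← ENNReal.rpow_mul, div_mul_cancel₀ _ hp.ne',
                ENNReal.ofReal_mul (by norm_num),
                ENNReal.mul_rpow_of_ne_top ENNReal.ofReal_ne_top ENNReal.ofReal_ne_top]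
              have : ENNReal.ofReal ‖w‖ ^ (-δ) * ENNReal.ofReal ‖w‖ ^ δ = 1 := by
                rw [← ENNReal.rpow_add _ _ hw0 ENNReal.ofReal_ne_top]; simp
              calc _ = (ENNReal.ofReal ‖w‖ ^ (-δ) * ENNReal.ofReal ‖w‖ ^ δ) * (ENNReal.ofReal (1 / δ) * ENNReal.ofReal (1/6) ^ (-δ) *
                  (ENNReal.ofReal ‖w‖ ^ lam * g w) ^ p) := by ring
                _ = _ := by rw [this, one_mul]
    _ = _ := by
        rw [lintegral_const_mul _ (by fun_prop)]; ring

theorem weighted (n : ℕ) (hn : 2 ≤ n) (s p q α lam δ : ℝ) (hs : 0 < s) (hsp : s < p) (hα : 0 < α) (hq1 : 1 < q)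
    (hq : 1 / q = 1 / p - α / n) (hδ : 0 < δ) (hγ : (lam + δ / p) * (s * p / (p - s)) < n) (hκ : 0 < lam + n / q) :
    ∃ C : ℝ≥0∞, C ≠ ∞ ∧ ∀ g h k : Rn n → ℝ≥0∞, Measurable h → Measurable k →
    (∀ x ≠ 0, h x = ENNReal.ofReal ‖x‖ ^ lam * g x) →
    (∀ x ≠ 0, k x = ENNReal.ofReal ‖x‖ ^ (lam + δ / p) * g x) → 
    (∫⁻ w, h w ^ p) ≠ ∞ → 
      ∫⁻ x : Rn n, (ENNReal.ofReal ‖x‖ ^ lam * ∫⁻ r in Ioi (0:ℝ), ENNReal.ofReal r ^ (α - 1) * Av n s g x r) ^ q ≤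
        C * (∫⁻ w, h w ^ p) ^ (q / p) := by
  have hp : 0 < p := hs.trans hsp
  have hq0 : 0 < q := by linarith
  have hn0 : (0:ℝ) < n := by positivity
  have hqp : 0 < q / p - 1 := by
    have : q / p - 1 = q * (1 / p - 1 / q) := by field_simp
    rw [this, hq]; have : 0 < α / n := by positivity
    have : 1 / p - (1 / p - α / n) = α / n := by ring
    rw [this]; positivity
  obtain ⟨C1, hC1, H1⟩ := small_part n hn s p q α lam hs hsp hα hq0 hq
  obtain ⟨C2, hC2, H2⟩ := large_part n hn s p q α lam δ hs hsp hα hq1 hq hδ hγ hκ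
  obtain ⟨C3, hC3, H3⟩ := large_int n hn p ((lam + n / q) * q / 2) δ lam hp (by positivity) hδ
  obtain ⟨C4, hC4, H4⟩ := strong_type n hn (p / s) (by rw [lt_div_iff₀ hs]; linarith)
  refine ⟨2 ^ (q - 1) * (C1 * C4 + C2 * C3), ?_, ?_⟩
  · exact ENNReal.mul_ne_top (ENNReal.rpow_ne_top_of_nonneg (by linarith) (by simp))
      (ENNReal.add_ne_top.2 ⟨ENNReal.mul_ne_top hC1 hC4, ENNReal.mul_ne_top hC2 hC3⟩)
  intro g h k hh hk hgh hgk hI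
  set I := ∫⁻ w, h w ^ p with hId
  have hIf : I ^ (q / p - 1) ≠ ∞ := ENNReal.rpow_ne_top_of_nonneg hqp.le hI
  have h4 := H4 (fun w => h w ^ s) (by fun_prop)
  have h3 := H3 g h k hh hk hgh hgk
  have e4 : ∫⁻ w, (h w ^ s) ^ (p / s) = I := by
    rw [hId]; refine lintegral_congr fun w => ?_
    rw [← ENNReal.rpow_mul, mul_div_cancel₀ _ hs.ne']
  rw [e4] at h4
  have hmm := Mx_measurable n (fun w => h w ^ s)
  have h22 : (2:ℝ≥0∞) ^ (q - 1) ≠ ∞ := ENNReal.rpow_ne_top_of_nonneg (by linarith) (by simp)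
  calc _ ≤ ∫⁻ x : Rn n, 2 ^ (q - 1) * ((C1 * I ^ (q / p - 1)) * (Mx n (fun w => h w ^ s) x) ^ (p / s) + 
          (C2 * I ^ (q / p - 1)) * (ENNReal.ofReal ‖x‖ ^ ((lam + n / q) * q / 2 - n) *
          ∫⁻ r in Ioi (‖x‖ / 4), ENNReal.ofReal r ^ (-((lam + n / q) * q / 2) - δ - 1) *
            ∫⁻ w in closedBall 0 (5 * r), k w ^ p)) := by
        apply lintegral_mono_ae
        filter_upwards [ae_ne_zero n hn] with x hx
        have hx4 : 0 ≤ ‖x‖ / 4 := by positivity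
        rw [← Ioc_union_Ioi_eq_Ioi hx4, lintegral_union measurableSet_Ioi (Ioc_disjoint_Ioi le_rfl), mul_add]
        refine (ENNReal.rpow_add_le_mul_rpow_add_rpow _ _ hq1.le).trans (mul_le_mul_right ?_ _)
        rw [mul_assoc, mul_assoc C2]
        exact add_le_add (H1 g h hh hgh hI x hx) (H2 g h k hh hk hgh hgk hI x hx)
    _ = 2 ^ (q - 1) * ((C1 * I ^ (q / p - 1)) * (∫⁻ x : Rn n, (Mx n (fun w => h w ^ s) x) ^ (p / s)) + 
          (C2 * I ^ (q / p - 1)) * ∫⁻ x : Rn n, (ENNReal.ofReal ‖x‖ ^ ((lam + n / q) * q / 2 - n) *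
          ∫⁻ r in Ioi (‖x‖ / 4), ENNReal.ofReal r ^ (-((lam + n / q) * q / 2) - δ - 1) *
            ∫⁻ w in closedBall 0 (5 * r), k w ^ p)) := by
        rw [lintegral_const_mul' _ _ h22, lintegral_add_left (by fun_prop), lintegral_const_mul' _ _ (ENNReal.mul_ne_top hC1 hIf),
          lintegral_const_mul' _ _ (ENNReal.mul_ne_top hC2 hIf)]
    _ ≤ 2 ^ (q - 1) * ((C1 * I ^ (q / p - 1)) * (C4 * I) + (C2 * I ^ (q / p - 1)) * (C3 * I)) := by
        exact mul_le_mul_right (add_le_add (mul_le_mul_right h4 _) (mul_le_mul_right h3 _)) _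
    _ = 2 ^ (q - 1) * (C1 * C4 + C2 * C3) * (I ^ (q / p - 1) * I ^ (1:ℝ)) := by
        rw [ENNReal.rpow_one]; ring
    _ = _ := by
        rw [← ENNReal.rpow_add_of_nonneg _ _ hqp.le zero_le_one, sub_add_cancel]


theorem point_bound (n : ℕ) (hn : 2 ≤ n) (α s : ℝ) (hα0 : 0 < α) (hα1 : α < 1) (hs : (n : ℝ) < s)
    (Ω : Rn n → ℝ) (hΩmeas : Measurable Ω)
    (hΩfin : ∫⁻ θ : sphere (0 : Rn n) 1, ENNReal.ofReal |Ω θ| ∂(volume : Measure (Rn n)).toSphere ≠ ∞)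
    (hΩ0 : ∫ θ : sphere (0 : Rn n) 1, Ω θ ∂(volume : Measure (Rn n)).toSphere = 0) :
    ∃ K : ℝ≥0∞, K ≠ ∞ ∧ ∀ f : Rn n → ℝ, IsCcSmooth f → ∀ x,
      ENNReal.ofReal |roughOp n α Ω f x| ≤ K * ∫⁻ r in Ioi (0:ℝ), ENNReal.ofReal r ^ (α - 1) *
        Av n s (fun w => ENNReal.ofReal ‖fderiv ℝ f w‖) x r := by
  obtain ⟨C, hC, H⟩ := morrey n hn s hs
  have hn0 : (0:ℝ) < n := by positivity
  have hs0 : 0 < s := hn0.trans hs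
  refine ⟨(∫⁻ θ : sphere (0 : Rn n) 1, ENNReal.ofReal |Ω θ| ∂(volume : Measure (Rn n)).toSphere) * C,
    ENNReal.mul_ne_top hΩfin hC, ?_⟩
  intro f hf x
  set A := Av n s (fun w => ENNReal.ofReal ‖fderiv ℝ f w‖) x with hA
  have hAm : Measurable A := by
    have : Monotone fun r : ℝ => ∫⁻ w in closedBall x r, ENNReal.ofReal ‖fderiv ℝ f w‖ ^ s :=
      fun a b hab => lintegral_mono_set (closedBall_subset_closedBall hab)
    have hm := this.measurable
    rw [hA]; unfold Av
    fun_prop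
  refine (rough_bound n hn α hα0 hα1 Ω hΩmeas hΩfin hΩ0 f hf.1 hf.2 x).trans ?_
  have hP := polar_lintegral n hn (fun y => ENNReal.ofReal |Ω y|) (by fun_prop)
    (fun r => ENNReal.ofReal r ^ (-((n:ℝ) + 1 - α)) * (C * (ENNReal.ofReal r * A r))) (by fun_prop)
  calc _ ≤ ∫⁻ y : Rn n, ENNReal.ofReal |Ω (‖y‖⁻¹ • y)| * (ENNReal.ofReal ‖y‖ ^ (-((n:ℝ) + 1 - α)) * (C * (ENNReal.ofReal ‖y‖ * A ‖y‖))) := by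
        apply lintegral_mono
        intro y
        by_cases hy : y = 0
        · simp [hy]
        have hy0 : 0 < ‖y‖ := norm_pos_iff.2 hy
        simp only
        rw [ENNReal.ofReal_mul (by positivity), ENNReal.ofReal_mul (by positivity), mul_assoc,
          ENNReal.ofReal_rpow_of_pos hy0, Real.rpow_neg hy0.le]
        gcongr
        exact H f (hf.1.of_le (by exact_mod_cast le_top)) x y hy
    _ = _ := hP
    _ = _ := by
        rw [mul_assoc]
        congr 1
        rw [← lintegral_const_mul' _ _ hC]
        apply setLIntegral_congr_fun measurableSet_Ioi
        intro r hr
        have hr : 0 < r := hr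
        have hR0 : ENNReal.ofReal r ≠ 0 := by simpa using hr
        simp only
        rw [ENNReal.ofReal_pow hr.le, ← ENNReal.rpow_natCast,
          show α - 1 = ((n - 1 : ℕ) : ℝ) + (-((n:ℝ) + 1 - α)) + 1 by
            push_cast [Nat.cast_sub (by omega : 1 ≤ n)]; ring,
          ENNReal.rpow_add _ _ hR0 ENNReal.ofReal_ne_top, ENNReal.rpow_add _ _ hR0 ENNReal.ofReal_ne_top,
          ENNReal.rpow_one]
        ring



/-- Power-weighted Sobolev inequality for the hypersingular rough integral
`T_{Ω,α}`, `0 < α < 1`, `Ω ∈ L(log L)^{1/n'}(𝕊^{n-1})` of mean zero. -/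
theorem statement8 (n : ℕ) (hn : 2 ≤ n) (α : ℝ) (hα0 : 0 < α) (hα1 : α < 1)
    (Ω : Rn n → ℝ) (hΩmeas : Measurable Ω) (hΩorl : (orliczSet n Ω).Nonempty)
    (hΩint : Integrable Ω (sphereMeasure n))
    (hΩmean : ∫ y, Ω y ∂sphereMeasure n = 0)
    (p q lam : ℝ) (hp1 : (n : ℝ) < p) (hp2 : p < n / α)
    (hq : 1 / q = 1 / p - α / n)
    (hlam1 : α - n / p < lam) (hlam2 : lam < 1 - n / p) :
    ∃ C > (0 : ℝ), ∀ f : Rn n → ℝ, IsCcSmooth f →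
      (∫⁻ x : Rn n, ENNReal.ofReal (‖x‖ ^ lam * |roughOp n α Ω f x|) ^ q) ^ (1 / q) ≤
        ENNReal.ofReal C *
          (∫⁻ x : Rn n, ENNReal.ofReal (‖x‖ ^ lam * gradNorm f x) ^ p) ^ (1 / p) := by
  have hn0 : (0:ℝ) < n := by positivity
  have hn2 : (2:ℝ) ≤ n := by exact_mod_cast hn
  have hp0 : 0 < p := by linarith
  have hnp : (n:ℝ) / p < 1 := by rw [div_lt_one hp0]; exact hp1
  have hnp0 : 0 < (n:ℝ) / p := by positivity
  have hαp : α < n / p := by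
    rw [lt_div_iff₀ hα0] at hp2
    rw [lt_div_iff₀ hp0]; linarith
  have hnq : (n:ℝ) / q = n / p - α := by
    have : (n:ℝ) / q = n * (1 / q) := by ring
    rw [this, hq]; field_simp
  have hq0 : 0 < q := by
    by_contra hcon
    have : (n:ℝ) / q ≤ 0 := div_nonpos_of_nonneg_of_nonpos hn0.le (not_lt.1 hcon)
    linarith
  have hq1 : 1 < q := by
    have : (n:ℝ) / q < 1 := by linarith
    rw [div_lt_one hq0] at this
    linarith
  obtain ⟨m, hm1, hm2, hm3⟩ : ∃ m : ℝ, m < 1 ∧ n / p < m ∧ lam + n / p < m := by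
    refine ⟨(1 + max (n / p) (lam + n / p)) / 2, ?_, ?_, ?_⟩
    · have := max_lt hnp (show lam + n / p < 1 by linarith)
      linarith
    · have := max_lt hnp (show lam + n / p < 1 by linarith)
      have := le_max_left ((n:ℝ) / p) (lam + n / p)
      linarith
    · have := max_lt hnp (show lam + n / p < 1 by linarith)
      have := le_max_right ((n:ℝ) / p) (lam + n / p)
      linarith
  have hm0 : 0 < m := hnp0.trans hm2
  set s : ℝ := n / m with hsd
  have hs0 : 0 < s := by positivity
  have hns : (n:ℝ) < s := by
    rw [hsd, lt_div_iff₀ hm0]; nlinarith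
  have hsp : s < p := by
    rw [div_lt_iff₀ hp0] at hm2
    rw [hsd, div_lt_iff₀ hm0]; linarith
  have hδ : 0 < p * (m - n / p - lam) / 2 := by
    have : 0 < m - n / p - lam := by linarith
    positivity
  have hγ : (lam + p * (m - n / p - lam) / 2 / p) * (s * p / (p - s)) < n := by
    have hps : 0 < p - s := by linarith
    have e1 : (n:ℝ) = (m - n / p) * (s * p / (p - s)) := by
      have : m = n / s := by rw [hsd]; field_simp
      rw [this]; field_simp
    have e2 : 0 < s * p / (p - s) := by positivity
    calc _ < (m - n / p) * (s * p / (p - s)) := by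
          refine mul_lt_mul_of_pos_right ?_ e2
          have : p * (m - n / p - lam) / 2 / p = (m - n / p - lam) / 2 := by field_simp
          rw [this]; linarith
      _ = _ := e1.symm
  have hκ : 0 < lam + n / q := by rw [hnq]; linarith
  obtain ⟨hΩfin, hΩ0⟩ := omega_transfer n hn Ω hΩint hΩmean
  obtain ⟨K, hK, HK⟩ := point_bound n hn α s hα0 hα1 hns Ω hΩmeas hΩfin hΩ0
  obtain ⟨C, hC, HC⟩ := weighted n hn s p q α lam _ hs0 hsp hα0 hq1 hq hδ hγ hκ
  have hKC : K * C ^ (1 / q) ≠ ∞ := ENNReal.mul_ne_top hK (ENNReal.rpow_ne_top_of_nonneg (by positivity) hC)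
  refine ⟨(K * C ^ (1 / q)).toReal + 1, by positivity, ?_⟩
  intro f hf
  set g : Rn n → ℝ≥0∞ := fun w => ENNReal.ofReal ‖fderiv ℝ f w‖ with hg
  have hgm : Measurable g := by
    have : Continuous (fderiv ℝ f) := hf.1.continuous_fderiv (by simp)
    exact (ENNReal.continuous_ofReal.comp this.norm).measurable
  have hgn : ∀ x, gradNorm f x = ‖fderiv ℝ f x‖ := by
    intro x
    unfold gradNorm gradient
    exact LinearIsometryEquiv.norm_map _ _
  set h : Rn n → ℝ≥0∞ := fun x => ENNReal.ofReal ‖x‖ ^ lam * g x with hh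
  have hI : ∫⁻ x : Rn n, ENNReal.ofReal (‖x‖ ^ lam * gradNorm f x) ^ p = ∫⁻ x, h x ^ p := by
    apply lintegral_congr_ae
    filter_upwards [ae_ne_zero n hn] with x hx
    have hx0 : 0 < ‖x‖ := norm_pos_iff.2 hx
    rw [hgn, ENNReal.ofReal_mul (by positivity), ← ENNReal.ofReal_rpow_of_pos hx0]
  rw [hI]
  by_cases hIt : ∫⁻ x, h x ^ p = ∞
  · rw [hIt, ENNReal.top_rpow_of_pos (by positivity), ENNReal.mul_top]
    · exact le_top
    · simp only [ne_eq, ENNReal.ofReal_eq_zero, not_le]; positivity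
  have hW := HC g h (fun x => ENNReal.ofReal ‖x‖ ^ (lam + p * (m - n / p - lam) / 2 / p) * g x)
    (by fun_prop) (by fun_prop) (fun _ _ => rfl) (fun _ _ => rfl) hIt
  have hKq : K ^ q ≠ ∞ := ENNReal.rpow_ne_top_of_nonneg hq0.le hK
  have h1 : ∫⁻ x : Rn n, ENNReal.ofReal (‖x‖ ^ lam * |roughOp n α Ω f x|) ^ q ≤
      K ^ q * (C * (∫⁻ x, h x ^ p) ^ (q / p)) := by
    refine le_trans ?_ (mul_le_mul_right hW _)
    rw [← lintegral_const_mul' _ _ hKq]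
    apply lintegral_mono_ae
    filter_upwards [ae_ne_zero n hn] with x hx
    have hx0 : 0 < ‖x‖ := norm_pos_iff.2 hx
    rw [← ENNReal.mul_rpow_of_nonneg _ _ hq0.le, ENNReal.ofReal_mul (by positivity),
      ← ENNReal.ofReal_rpow_of_pos hx0, mul_left_comm]
    exact ENNReal.rpow_le_rpow (mul_le_mul_right (HK f hf x) _) hq0.le
  have hq' : 0 ≤ 1 / q := by positivity
  calc _ ≤ (K ^ q * (C * (∫⁻ x, h x ^ p) ^ (q / p))) ^ (1 / q) := ENNReal.rpow_le_rpow h1 hq'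
    _ = (K * C ^ (1 / q)) * (∫⁻ x, h x ^ p) ^ (1 / p) := by
        rw [ENNReal.mul_rpow_of_nonneg _ _ hq', ENNReal.mul_rpow_of_nonneg _ _ hq', ← ENNReal.rpow_mul,
          ← ENNReal.rpow_mul, mul_one_div_cancel hq0.ne', ENNReal.rpow_one,
          show q / p * (1 / q) = 1 / p by field_simp, mul_assoc]
    _ ≤ _ := by
        gcongr
        rw [← ENNReal.ofReal_toReal hKC]
        apply ENNReal.ofReal_le_ofReal
        simp only [ENNReal.toReal_ofReal ENNReal.toReal_nonneg]
        linarith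

end
end

section
/- Let n ≥ 2, 1 < r < ∞, and let Ω ∈ L^{r,∞}(𝕊^{n−1}) have mean zero. Then there is C such that for all f ∈ C_c^∞(ℝ^n), ‖M^♮_Ω f‖_{L^∞(ℝ^n)} ≤ ‖M^#_Ω f‖_{L^∞(ℝ^n)} ≤ C ‖∇f‖_{L^n(ℝ^n)}. -/
open MeasureTheory Metric Set Filter
open scoped ENNReal NNReal Topology

noncomputable section

lemma aux_fub {n : ℕ} (μ ν : Measure (Rn n)) [IsFiniteMeasure μ] [IsFiniteMeasure ν]
    (hμS : ∀ᵐ x ∂μ, x ∈ sphere (0 : Rn n) 1) (hνS : ∀ᵐ x ∂ν, x ∈ sphere (0 : Rn n) 1)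
    (r : ℝ) (g h : ℝ≥0∞)
    (hμ : ∀ x ∈ sphere (0 : Rn n) 1, μ (ball x r) = g)
    (hν : ∀ x ∈ sphere (0 : Rn n) 1, ν (ball x r) = h)
    (F : Set (Rn n)) : h * μ F ≤ g * ν (thickening r F) := by
  have hm : MeasurableSet {p : Rn n × Rn n | dist p.1 p.2 < r} :=
    (isOpen_lt (by fun_prop) (by fun_prop)).measurableSet
  have h1 : ((μ.restrict F).prod ν) {p : Rn n × Rn n | dist p.1 p.2 < r} = h * μ F := by
    rw [Measure.prod_apply hm]
    have : ∀ᵐ x ∂(μ.restrict F), ν (Prod.mk x ⁻¹' {p : Rn n × Rn n | dist p.1 p.2 < r}) = h := by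
      filter_upwards [ae_restrict_of_ae hμS] with x hx
      rw [← hν x hx]
      congr 1
      ext y
      simp [dist_comm]
    rw [lintegral_congr_ae this]
    simp
  have h2 : ((μ.restrict F).prod ν) {p : Rn n × Rn n | dist p.1 p.2 < r}
      ≤ g * ν (thickening r F) := by
    rw [Measure.prod_apply_symm hm]
    have : ∀ᵐ y ∂ν, (μ.restrict F) ((fun x => (x, y)) ⁻¹' {p : Rn n × Rn n | dist p.1 p.2 < r})
        ≤ (thickening r F).indicator (fun _ => g) y := by
      filter_upwards [hνS] with y hy
      have e : ((fun x => (x, y)) ⁻¹' {p : Rn n × Rn n | dist p.1 p.2 < r}) = ball y r := by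
        ext x; simp
      rw [e]
      by_cases hyF : y ∈ thickening r F
      · rw [indicator_of_mem hyF, ← hμ y hy]
        exact Measure.restrict_apply_le _ _
      · rw [indicator_of_notMem hyF, Measure.restrict_apply measurableSet_ball]
        have : ball y r ∩ F = ∅ := by
          ext x
          simp only [mem_inter_iff, mem_ball, mem_empty_iff_false, iff_false, not_and]
          intro hx hxF
          apply hyF
          rw [mem_thickening_iff]
          exact ⟨x, hxF, by rwa [dist_comm]⟩
        simp [this]
    refine (lintegral_mono_ae this).trans ?_
    rw [lintegral_indicator isOpen_thickening.measurableSet]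
    simp
  exact h1 ▸ h2

lemma aux_const {n : ℕ} (μ : Measure (Rn n))
    (hμ : ∀ e : Rn n ≃ₗᵢ[ℝ] Rn n, ∀ s, MeasurableSet s → μ (e ⁻¹' s) = μ s) (r : ℝ) (x y : Rn n)
    (hx : x ∈ sphere (0 : Rn n) 1) (hy : y ∈ sphere (0 : Rn n) 1) :
    μ (ball x r) = μ (ball y r) := by
  have hxy : ‖x‖ = ‖y‖ := by
    rw [mem_sphere_zero_iff_norm] at hx hy; rw [hx, hy]
  set e := Submodule.reflection (ℝ ∙ (x - y))ᗮ with he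
  have hexy : e x = y := Submodule.reflection_sub hxy
  rw [← hμ e (ball y r) measurableSet_ball]
  congr 1
  rw [← hexy]
  ext z
  simp [dist_comm]

lemma aux_unique {n : ℕ} (hn : 2 ≤ n) (μ ν : Measure (Rn n)) [IsFiniteMeasure μ] [IsFiniteMeasure ν]
    (hμS : ∀ᵐ x ∂μ, x ∈ sphere (0 : Rn n) 1) (hνS : ∀ᵐ x ∂ν, x ∈ sphere (0 : Rn n) 1)
    (hμ : ∀ e : Rn n ≃ₗᵢ[ℝ] Rn n, ∀ s, MeasurableSet s → μ (e ⁻¹' s) = μ s)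
    (hν : ∀ e : Rn n ≃ₗᵢ[ℝ] Rn n, ∀ s, MeasurableSet s → ν (e ⁻¹' s) = ν s)
    (hpos : ∀ x ∈ sphere (0 : Rn n) 1, ∀ r > 0, 0 < ν (ball x r)) :
    (ν univ) • μ = (μ univ) • ν := by
  have : Nonempty (Fin n) := ⟨⟨0, by omega⟩⟩
  obtain ⟨x₀, hx₀⟩ : (sphere (0 : Rn n) 1).Nonempty := NormedSpace.sphere_nonempty.2 zero_le_one
  have hcl : ∀ F : Set (Rn n), IsClosed F → ν univ * μ F = μ univ * ν F := by
    intro F hF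
    have key : ∀ r > 0, ν univ * μ F ≤ μ univ * ν (thickening r F) ∧
        μ univ * ν F ≤ ν univ * μ (thickening r F) := by
      intro r hr
      set g := μ (ball x₀ r)
      set h := ν (ball x₀ r)
      have hg : ∀ x ∈ sphere (0 : Rn n) 1, μ (ball x r) = g := fun x hx => aux_const μ hμ r x x₀ hx hx₀
      have hh : ∀ x ∈ sphere (0 : Rn n) 1, ν (ball x r) = h := fun x hx => aux_const ν hν r x x₀ hx hx₀
      have h0 : h ≠ 0 := (hpos x₀ hx₀ r hr).ne'
      have ht : h ≠ ⊤ := measure_ne_top _ _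
      have hthick : thickening r (univ : Set (Rn n)) = univ :=
        univ_subset_iff.1 (self_subset_thickening hr _)
      have e1 := aux_fub μ ν hμS hνS r g h hg hh univ
      have e2 := aux_fub ν μ hνS hμS r h g hh hg univ
      rw [hthick] at e1 e2
      have e : h * μ univ = g * ν univ := le_antisymm e1 e2
      have f1 := aux_fub μ ν hμS hνS r g h hg hh F
      have f2 := aux_fub ν μ hνS hμS r h g hh hg F
      constructor
      · rw [← ENNReal.mul_le_mul_iff_right h0 ht]
        calc h * (ν univ * μ F) = ν univ * (h * μ F) := by ring
          _ ≤ ν univ * (g * ν (thickening r F)) := by gcongr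
          _ = (g * ν univ) * ν (thickening r F) := by ring
          _ = h * (μ univ * ν (thickening r F)) := by rw [← e]; ring
      · rw [← ENNReal.mul_le_mul_iff_right h0 ht]
        calc h * (μ univ * ν F) = (h * μ univ) * ν F := by ring
          _ = ν univ * (g * ν F) := by rw [e]; ring
          _ ≤ ν univ * (h * μ (thickening r F)) := by gcongr
          _ = h * (ν univ * μ (thickening r F)) := by ring
    have lim : ∀ (m : Measure (Rn n)) [IsFiniteMeasure m] (c : ℝ≥0∞), c ≠ ⊤ →
        Tendsto (fun r => c * m (thickening r F)) (𝓝[>] 0) (𝓝 (c * m F)) := by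
      intro m _ c hc
      exact ENNReal.Tendsto.const_mul
        (tendsto_measure_thickening_of_isClosed ⟨1, one_pos, measure_ne_top _ _⟩ hF) (Or.inr hc)
    apply le_antisymm
    · refine ge_of_tendsto (lim ν (μ univ) (measure_ne_top _ _)) ?_
      filter_upwards [self_mem_nhdsWithin] with r hr using (key r hr).1
    · refine ge_of_tendsto (lim μ (ν univ) (measure_ne_top _ _)) ?_
      filter_upwards [self_mem_nhdsWithin] with r hr using (key r hr).2
  have : IsFiniteMeasure ((ν univ) • μ) := μ.smul_finite (measure_ne_top _ _)
  refine ext_of_generate_finite _ (BorelSpace.measurable_eq.trans borel_eq_generateFrom_isClosed)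
    isPiSystem_isClosed ?_ ?_
  · intro s hs
    simpa using hcl s hs
  · simp [mul_comm]

lemma aux_lip {n : ℕ} : LipschitzOnWith 2 (fun x : Rn n => ‖x‖⁻¹ • x) {x | 1 ≤ ‖x‖} := by
  refine LipschitzOnWith.of_dist_le_mul ?_
  intro x hx y hy
  simp only [mem_ofPred_eq] at hx hy
  rw [dist_eq_norm, dist_eq_norm]
  have hx0 : 0 < ‖x‖ := by linarith
  have hy0 : 0 < ‖y‖ := by linarith
  have e : ‖x‖⁻¹ • x - ‖y‖⁻¹ • y = ‖x‖⁻¹ • (x - y) + (‖x‖⁻¹ - ‖y‖⁻¹) • y := by module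
  rw [e]
  refine (norm_add_le _ _).trans ?_
  rw [norm_smul, norm_smul]
  have h1 : ‖‖x‖⁻¹‖ * ‖x - y‖ ≤ ‖x - y‖ := by
    rw [norm_inv, norm_norm]
    exact mul_le_of_le_one_left (norm_nonneg _) (inv_le_one_of_one_le₀ hx)
  have h2 : ‖‖x‖⁻¹ - ‖y‖⁻¹‖ * ‖y‖ ≤ ‖x - y‖ := by
    have : ‖x‖⁻¹ - ‖y‖⁻¹ = ‖x‖⁻¹ * (‖y‖ - ‖x‖) * ‖y‖⁻¹ := by field_simp
    rw [this, norm_mul, norm_mul, norm_inv, norm_inv, norm_norm, norm_norm, mul_assoc,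
      inv_mul_cancel₀ hy0.ne', mul_one]
    refine (mul_le_of_le_one_left (norm_nonneg _) (inv_le_one_of_one_le₀ hx)).trans ?_
    rw [Real.norm_eq_abs, abs_sub_comm]
    exact abs_norm_sub_norm_le x y
  have : ((2 : ℝ≥0) : ℝ) = 2 := rfl
  rw [this]
  linarith

lemma aux_ins {m : ℕ} (i : Fin (m + 1)) (ε : ℝ) :
    LipschitzWith 1 (fun v : Fin m → ℝ => (Fin.insertNth i ε v : Fin (m + 1) → ℝ)) := by
  refine LipschitzWith.of_dist_le_mul ?_
  intro v w
  rw [NNReal.coe_one, one_mul, dist_pi_le_iff dist_nonneg]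
  intro j
  refine Fin.succAboveCases i ?_ ?_ j
  · simp
  · intro k
    simpa using dist_le_pi_dist v w k

lemma aux_sphere_finite {n : ℕ} (hn : 2 ≤ n) :
    (Measure.hausdorffMeasure ((n : ℝ) - 1) : Measure (Rn n)) (sphere 0 1) < ⊤ := by
  obtain ⟨m, rfl⟩ : ∃ m, n = m + 1 := ⟨n - 1, by omega⟩
  have hd : ((m + 1 : ℕ) : ℝ) - 1 = (m : ℝ) := by push_cast; ring
  rw [hd]
  have hm0 : (0 : ℝ) ≤ m := Nat.cast_nonneg m
  let Φ : Fin (m + 1) → ℝ → (Fin m → ℝ) → Rn (m + 1) := fun i ε v =>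
    WithLp.toLp 2 (Fin.insertNth i ε v : Fin (m + 1) → ℝ)
  let π : Rn (m + 1) → Rn (m + 1) := fun x => ‖x‖⁻¹ • x
  let Q : Set (Fin m → ℝ) := closedBall 0 1
  have hfin : ∀ i ε, |ε| = 1 →
      (Measure.hausdorffMeasure (m : ℝ) : Measure (Rn (m + 1))) ((fun v => π (Φ i ε v)) '' Q) < ⊤ := by
    intro i ε hε
    have hl : LipschitzOnWith _ (fun v => π (Φ i ε v)) Q :=
      aux_lip.comp (((PiLp.lipschitzWith_toLp 2 (fun _ : Fin (m + 1) => ℝ)).comp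
        (aux_ins i ε)).lipschitzOnWith (s := Q)) (by
        intro v _
        change 1 ≤ ‖Φ i ε v‖
        refine le_trans ?_ (PiLp.norm_apply_le _ i)
        simp [Φ, hε])
    refine (hl.hausdorffMeasure_image_le hm0).trans_lt ?_
    have hv : (Measure.hausdorffMeasure (m : ℝ) : Measure (Fin m → ℝ)) = volume := by
      have := hausdorffMeasure_pi_real (ι := Fin m)
      rwa [Fintype.card_fin] at this
    rw [hv]
    exact ENNReal.mul_lt_top (ENNReal.rpow_lt_top_of_nonneg hm0 ENNReal.coe_ne_top)
      measure_closedBall_lt_top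
  have hcov : sphere (0 : Rn (m + 1)) 1 ⊆
      ⋃ i : Fin (m + 1), (((fun v => π (Φ i 1 v)) '' Q) ∪ ((fun v => π (Φ i (-1) v)) '' Q)) := by
    intro u hu
    rw [mem_sphere_zero_iff_norm] at hu
    obtain ⟨i, hi⟩ := Finite.exists_max (fun i => |u i|)
    have hi0 : 0 < |u i| := by
      by_contra hcon
      have : u = 0 := by
        ext j
        have := hi j
        have h3 := abs_nonneg (u j)
        have : |u j| = 0 := by linarith
        simpa using this
      rw [this] at hu
      simp at hu
    have main : ∀ ε : ℝ, u i = ε * |u i| → u ∈ (fun v => π (Φ i ε v)) '' Q := by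
      intro ε hε
      refine ⟨fun k => |u i|⁻¹ * u (i.succAbove k), ?_, ?_⟩
      · simp only [Q, mem_closedBall, dist_zero_right]
        rw [pi_norm_le_iff_of_nonneg zero_le_one]
        intro k
        rw [Real.norm_eq_abs, abs_mul, abs_inv, abs_abs, inv_mul_le_iff₀ hi0, mul_one]
        exact hi _
      · have : Φ i ε (fun k => |u i|⁻¹ * u (i.succAbove k)) = |u i|⁻¹ • u := by
          ext j
          refine Fin.succAboveCases i ?_ ?_ j
          · simp only [Φ, Fin.insertNth_apply_same, PiLp.smul_apply, smul_eq_mul]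
            rw [eq_inv_mul_iff_mul_eq₀ hi0.ne', mul_comm]
            exact hε.symm
          · intro k
            simp [Φ]
        simp only [π, this]
        rw [norm_smul, hu, norm_inv, Real.norm_eq_abs, abs_abs, mul_one, inv_inv, smul_smul,
          mul_inv_cancel₀ hi0.ne', one_smul]
    refine mem_iUnion.2 ⟨i, ?_⟩
    rcases le_total 0 (u i) with h | h
    · left; exact main 1 (by rw [abs_of_nonneg h, one_mul])
    · right; exact main (-1) (by rw [abs_of_nonpos h]; ring)
  refine (measure_mono hcov).trans_lt ?_
  refine (measure_iUnion_le _).trans_lt ?_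
  rw [tsum_fintype]
  refine ENNReal.sum_lt_top.2 fun i _ => ?_
  exact (measure_union_le _ _).trans_lt
    (ENNReal.add_lt_top.2 ⟨hfin i 1 (by simp), hfin i (-1) (by simp)⟩)

lemma aux_sphere_pos {n : ℕ} (hn : 2 ≤ n) :
    0 < (Measure.hausdorffMeasure ((n : ℝ) - 1) : Measure (Rn n)) (sphere 0 1) := by
  obtain ⟨m, rfl⟩ : ∃ m, n = m + 1 := ⟨n - 1, by omega⟩
  have hd : ((m + 1 : ℕ) : ℝ) - 1 = (m : ℝ) := by push_cast; ring
  rw [hd]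
  have hm0 : (0 : ℝ) ≤ m := Nat.cast_nonneg m
  let p : Rn (m + 1) → (Fin m → ℝ) := fun x i => x i.succ
  have hp : LipschitzWith 1 p := by
    refine LipschitzWith.of_dist_le_mul ?_
    intro x y
    rw [NNReal.coe_one, one_mul, dist_pi_le_iff dist_nonneg]
    intro j
    rw [dist_eq_norm, dist_eq_norm]
    exact PiLp.norm_apply_le (x - y) j.succ
  have hsub : ball (0 : Fin m → ℝ) (1 / (m + 1)) ⊆ p '' sphere 0 1 := by
    intro v hv
    rw [mem_ball_zero_iff] at hv
    have hm1 : (0 : ℝ) < m + 1 := by positivity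
    have hs : ∑ i, v i ^ 2 ≤ 1 := by
      have : ∀ i ∈ Finset.univ, v i ^ 2 ≤ 1 / ((m : ℝ) + 1) := by
        intro i _
        have h1 : |v i| ≤ 1 / (m + 1) := (norm_le_pi_norm v i).trans hv.le
        have h2 : 1 / ((m : ℝ) + 1) ≤ 1 := by
          rw [div_le_one hm1]; linarith
        have h3 := abs_nonneg (v i)
        rw [← sq_abs]
        nlinarith
      refine (Finset.sum_le_sum this).trans ?_
      simp only [Finset.sum_const, Finset.card_univ, Fintype.card_fin, nsmul_eq_mul]
      rw [mul_one_div, div_le_one hm1]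
      linarith
    refine ⟨WithLp.toLp 2 (Fin.cons (Real.sqrt (1 - ∑ i, v i ^ 2)) v), ?_, ?_⟩
    · rw [mem_sphere_zero_iff_norm, EuclideanSpace.norm_eq, Fin.sum_univ_succ]
      simp only [Fin.cons_zero, Fin.cons_succ, Real.norm_eq_abs, sq_abs]
      rw [Real.sq_sqrt (by linarith)]
      simp
    · ext i
      simp [p]
  have hv : (Measure.hausdorffMeasure (m : ℝ) : Measure (Fin m → ℝ)) = volume := by
    have := hausdorffMeasure_pi_real (ι := Fin m)
    rwa [Fintype.card_fin] at this
  have h1 := hp.hausdorffMeasure_image_le hm0 (sphere 0 1)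
  rw [hv] at h1
  simp only [ENNReal.coe_one, ENNReal.one_rpow, one_mul] at h1
  refine lt_of_lt_of_le ?_ h1
  exact (measure_ball_pos volume 0 (by positivity)).trans_le (measure_mono hsub)

lemma aux_sphereMeasure_inv {n : ℕ} (e : Rn n ≃ₗᵢ[ℝ] Rn n) (s : Set (Rn n)) (hs : MeasurableSet s) :
    sphereMeasure n (e ⁻¹' s) = sphereMeasure n s := by
  rw [sphereMeasure, Measure.restrict_apply (e.continuous.measurable hs), Measure.restrict_apply hs]
  rw [← e.toIsometryEquiv.hausdorffMeasure_preimage _ (s ∩ sphere 0 1)]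
  congr 1
  ext x
  simp

/-- cone measure -/
def coneM (n : ℕ) : Measure (Rn n) :=
  (volume.restrict (ball (0 : Rn n) 1)).map (fun y => ‖y‖⁻¹ • y)

lemma aux_pimeas {n : ℕ} : Measurable (fun y : Rn n => ‖y‖⁻¹ • y) := by fun_prop

instance aux_cone_fin {n : ℕ} : IsFiniteMeasure (coneM n) := by
  constructor
  rw [coneM, Measure.map_apply aux_pimeas MeasurableSet.univ]
  simp [measure_ball_lt_top]

lemma aux_cone_apply {n : ℕ} {s : Set (Rn n)} (hs : MeasurableSet s) :
    coneM n s = volume ((fun y : Rn n => ‖y‖⁻¹ • y) ⁻¹' s ∩ ball 0 1) := by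
  rw [coneM, Measure.map_apply aux_pimeas hs, Measure.restrict_apply (aux_pimeas hs)]

lemma aux_cone_inv {n : ℕ} (e : Rn n ≃ₗᵢ[ℝ] Rn n) (s : Set (Rn n)) (hs : MeasurableSet s) :
    coneM n (e ⁻¹' s) = coneM n s := by
  rw [aux_cone_apply (e.continuous.measurable hs), aux_cone_apply hs]
  rw [← e.measurePreserving.measure_preimage
    ((aux_pimeas hs).inter measurableSet_ball).nullMeasurableSet]
  congr 1
  ext x
  simp

lemma aux_cone_sphere {n : ℕ} (hn : 2 ≤ n) : ∀ᵐ x ∂(coneM n), x ∈ sphere (0 : Rn n) 1 := by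
  have : Nonempty (Fin n) := ⟨⟨0, by omega⟩⟩
  rw [coneM]
  refine (ae_map_iff aux_pimeas.aemeasurable (p := fun x => x ∈ sphere (0 : Rn n) 1) isClosed_sphere.measurableSet).2 ?_
  refine ae_restrict_of_ae ?_
  have : ∀ᵐ x : Rn n, x ≠ 0 := by
    rw [ae_iff]; simp
  filter_upwards [this] with x hx
  rw [mem_sphere_zero_iff_norm, norm_smul, norm_inv, norm_norm]
  exact inv_mul_cancel₀ (norm_ne_zero_iff.2 hx)

lemma aux_cone_pos {n : ℕ} (x : Rn n) (hx : x ∈ sphere (0 : Rn n) 1) (r : ℝ) (hr : 0 < r) :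
    0 < coneM n (ball x r) := by
  rw [aux_cone_apply measurableSet_ball]
  rw [mem_sphere_zero_iff_norm] at hx
  have hc : ContinuousAt (fun y : Rn n => ‖y‖⁻¹ • y) ((1 / 2 : ℝ) • x) := by
    refine ContinuousAt.smul (continuousAt_id.norm.inv₀ ?_) continuousAt_id
    simp [norm_smul, hx]
  have hv : ‖(1 / 2 : ℝ) • x‖⁻¹ • ((1 / 2 : ℝ) • x) = x := by
    rw [norm_smul, hx, smul_smul]; norm_num
  refine Measure.measure_pos_of_mem_nhds volume (x := (1 / 2 : ℝ) • x) (inter_mem ?_ ?_)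
  · have h1 : ball x r ∈ 𝓝 (‖(1 / 2 : ℝ) • x‖⁻¹ • ((1 / 2 : ℝ) • x)) := by
      rw [hv]
      exact ball_mem_nhds _ hr
    exact hc h1
  · refine isOpen_ball.mem_nhds ?_
    rw [mem_ball_zero_iff, norm_smul, hx]; norm_num

lemma aux_cone_eq {n : ℕ} (hn : 2 ≤ n) :
    ∃ c : ℝ≥0∞, c ≠ ⊤ ∧ coneM n = c • sphereMeasure n := by
  have hfin : IsFiniteMeasure (sphereMeasure n) := ⟨by
    rw [sphereMeasure, Measure.restrict_apply_univ]; exact aux_sphere_finite hn⟩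
  have hpos : sphereMeasure n univ ≠ 0 := by
    rw [sphereMeasure, Measure.restrict_apply_univ]; exact (aux_sphere_pos hn).ne'
  have h := aux_unique hn (sphereMeasure n) (coneM n)
    (ae_restrict_mem isClosed_sphere.measurableSet) (aux_cone_sphere hn)
    aux_sphereMeasure_inv aux_cone_inv (fun x hx r hr => aux_cone_pos x hx r hr)
  refine ⟨(sphereMeasure n univ)⁻¹ * coneM n univ,
    ENNReal.mul_ne_top (ENNReal.inv_ne_top.2 hpos) (measure_ne_top _ _), ?_⟩
  rw [mul_smul, h, smul_smul, ENNReal.inv_mul_cancel hpos (measure_ne_top _ _), one_smul]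

lemma aux_cone_t {n : ℕ} (hn : 2 ≤ n) : ∃ c : ℝ≥0∞, c ≠ ⊤ ∧ ∀ t : ℝ, 0 < t →
    (volume.restrict (ball (0 : Rn n) t)).map (fun y => ‖y‖⁻¹ • y)
      = (ENNReal.ofReal (t ^ n) * c) • sphereMeasure n := by
  obtain ⟨c, hc, h⟩ := aux_cone_eq hn
  refine ⟨c, hc, fun t ht => ?_⟩
  rw [mul_smul, ← h]
  ext s hs
  rw [Measure.map_apply aux_pimeas hs, Measure.restrict_apply (aux_pimeas hs),
    Measure.smul_apply, aux_cone_apply hs, smul_eq_mul]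
  have := Measure.addHaar_smul_of_nonneg (volume : Measure (Rn n)) ht.le
    ((fun y : Rn n => ‖y‖⁻¹ • y) ⁻¹' s ∩ ball 0 1)
  rw [finrank_euclideanSpace_fin] at this
  rw [← this]
  congr 1
  ext y
  rw [mem_smul_set_iff_inv_smul_mem₀ ht.ne']
  simp only [mem_inter_iff, mem_preimage, mem_ball_zero_iff, norm_smul, norm_inv, smul_smul,
    Real.norm_eq_abs, abs_of_pos ht, mul_inv, inv_inv]
  have e1 : t * ‖y‖⁻¹ * t⁻¹ = ‖y‖⁻¹ := by field_simp
  have e2 : t⁻¹ * ‖y‖ < 1 ↔ ‖y‖ < t := by rw [inv_mul_lt_iff₀ ht, mul_one]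
  rw [e1, e2]

lemma aux_Lq {n : ℕ} (hn : 2 ≤ n) (r q : ℝ) (hq : 1 < q) (hqr : q < r)
    (Ω : Rn n → ℝ) (hΩmeas : Measurable Ω) (hΩweak : weakLorentzSphere n r Ω < ⊤) :
    ∫⁻ y, ENNReal.ofReal (|Ω y| ^ q) ∂sphereMeasure n < ⊤ := by
  have hfin : sphereMeasure n univ < ⊤ := by
    rw [sphereMeasure, Measure.restrict_apply_univ]; exact aux_sphere_finite hn
  set W := weakLorentzSphere n r Ω with hW
  have hr0 : 0 < r := by linarith
  have hw : ∀ t : ℝ, 0 < t → sphereMeasure n {y | t < |Ω y|} ≤ W ^ r * ENNReal.ofReal (t ^ (-r)) := by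
    intro t ht
    have h1 : ENNReal.ofReal t * sphereMeasure n {y | t < |Ω y|} ^ (1 / r) ≤ W := by
      rw [hW, weakLorentzSphere]
      exact le_iSup₂ (f := fun (t : ℝ) (_ : 0 < t) =>
        ENNReal.ofReal t * sphereMeasure n {y | t < |Ω y|} ^ (1 / r)) t ht
    have h2 := ENNReal.rpow_le_rpow h1 hr0.le
    rw [ENNReal.mul_rpow_of_nonneg _ _ hr0.le, ← ENNReal.rpow_mul, one_div_mul_cancel hr0.ne',
      ENNReal.rpow_one, ENNReal.ofReal_rpow_of_pos ht] at h2
    calc sphereMeasure n {y | t < |Ω y|}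
        = ENNReal.ofReal (t ^ (-r)) * (ENNReal.ofReal (t ^ r) * sphereMeasure n {y | t < |Ω y|}) := by
          rw [← mul_assoc, ← ENNReal.ofReal_mul (by positivity), ← Real.rpow_add ht]
          simp
      _ ≤ ENNReal.ofReal (t ^ (-r)) * W ^ r := by gcongr
      _ = _ := mul_comm _ _
  rw [lintegral_rpow_eq_lintegral_meas_lt_mul (sphereMeasure n)
    (Eventually.of_forall fun y => abs_nonneg (Ω y)) (hΩmeas.abs.aemeasurable) (by linarith)]
  refine ENNReal.mul_lt_top ENNReal.ofReal_lt_top ?_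
  rw [← Ioc_union_Ioi_eq_Ioi (zero_le_one (α := ℝ))]
  refine (lintegral_union_le _ _ _).trans_lt (ENNReal.add_lt_top.2 ⟨?_, ?_⟩)
  · calc _ ≤ ∫⁻ t in Ioc (0 : ℝ) 1, sphereMeasure n univ := by
          refine setLIntegral_mono' measurableSet_Ioc fun t ht => ?_
          have : ENNReal.ofReal (t ^ (q - 1)) ≤ 1 := by
            rw [ENNReal.ofReal_le_one]
            exact Real.rpow_le_one ht.1.le ht.2 (by linarith)
          exact (mul_le_mul' (measure_mono (subset_univ _)) this).trans (mul_one _).le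
      _ < ⊤ := by
          simp [hfin]
  · calc _ ≤ ∫⁻ t in Ioi (1 : ℝ), W ^ r * ENNReal.ofReal (t ^ (q - 1 - r)) := by
          refine setLIntegral_mono' measurableSet_Ioi fun t ht => ?_
          have ht0 : (0 : ℝ) < t := lt_trans one_pos ht
          refine (mul_le_mul_left (hw t ht0) _).trans (le_of_eq ?_)
          rw [mul_assoc, ← ENNReal.ofReal_mul (by positivity), ← Real.rpow_add ht0]
          congr 3; ring
      _ = W ^ r * ∫⁻ t in Ioi (1 : ℝ), ENNReal.ofReal (t ^ (q - 1 - r)) := by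
          rw [lintegral_const_mul' _ _ (ENNReal.rpow_lt_top_of_nonneg hr0.le hΩweak.ne).ne]
      _ < ⊤ := by
          refine ENNReal.mul_lt_top (ENNReal.rpow_lt_top_of_nonneg hr0.le hΩweak.ne) ?_
          exact (integrableOn_Ioi_rpow_of_lt (a := q - 1 - r) (by linarith) one_pos).lintegral_lt_top

lemma aux_holder {n : ℕ} (hn : 2 ≤ n) (g : Rn n → ℝ≥0∞) (hg : Measurable g) (B : Set (Rn n))
    (a : ℝ) (ha : 0 < a) (v : Rn n) :
    ∫⁻ z in B, g (a • z + v) ≤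
      (volume B) ^ (1 - 1 / (n : ℝ)) * ENNReal.ofReal a⁻¹ * (∫⁻ z, g z ^ (n : ℝ)) ^ (1 / (n : ℝ)) := by
  have hn2 : (2 : ℝ) ≤ n := by exact_mod_cast hn
  have hn0 : (0 : ℝ) < n := by linarith
  have hconj : (n : ℝ).HolderConjugate ((n : ℝ).conjExponent) :=
    Real.HolderConjugate.conjExponent (by linarith)
  have hmz : Measurable fun z : Rn n => a • z + v := by fun_prop
  have h1 := ENNReal.lintegral_mul_le_Lp_mul_Lq (volume.restrict B) hconj
    (f := fun z => g (a • z + v)) (g := fun _ => 1) (hg.comp hmz).aemeasurable aemeasurable_const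
  have h2 : ∫⁻ z in B, g (a • z + v) ^ (n : ℝ) ≤ ENNReal.ofReal (a⁻¹ ^ n) * ∫⁻ z, g z ^ (n : ℝ) := by
    refine (setLIntegral_le_lintegral _ _).trans (le_of_eq ?_)
    have h3 : ∫⁻ z, g (a • z + v) ^ (n : ℝ) = ∫⁻ w, g (w + v) ^ (n : ℝ)
        ∂(Measure.map (a • ·) (volume : Measure (Rn n))) := by
      rw [lintegral_map (by fun_prop) (by fun_prop)]
    rw [h3, Measure.map_addHaar_smul _ ha.ne', lintegral_smul_measure, smul_eq_mul,
      lintegral_add_right_eq_self (fun w => g w ^ (n : ℝ)) v, finrank_euclideanSpace_fin,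
      abs_of_pos (by positivity), inv_pow]
  have h4 : 1 / (n : ℝ).conjExponent = 1 - 1 / (n : ℝ) := by
    have := hconj.inv_add_inv_eq_one
    rw [one_div, one_div]
    linarith
  simp only [Pi.mul_apply, mul_one, ENNReal.one_rpow, lintegral_const, one_mul, h4,
    Measure.restrict_apply_univ] at h1
  refine h1.trans ?_
  calc _ ≤ (ENNReal.ofReal (a⁻¹ ^ n) * ∫⁻ z, g z ^ (n : ℝ)) ^ (1 / (n : ℝ))
        * volume B ^ (1 - 1 / (n : ℝ)) := by gcongr
    _ = _ := by
      rw [ENNReal.mul_rpow_of_nonneg _ _ (by positivity),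
        ENNReal.ofReal_rpow_of_nonneg (by positivity) (by positivity), one_div,
        Real.pow_rpow_inv_natCast (by positivity) (by omega)]
      ring

lemma aux_young (w l : ℝ) (hw : 0 ≤ w) (hl : 0 < l) (q : ℝ) (hq : 1 < q) :
    ENNReal.ofReal w ≤ ENNReal.ofReal l + ENNReal.ofReal (l ^ (1 - q)) * ENNReal.ofReal (w ^ q) := by
  rw [← ENNReal.ofReal_mul (by positivity), ← ENNReal.ofReal_add hl.le (by positivity)]
  apply ENNReal.ofReal_le_ofReal
  rcases le_total w l with h | h
  · have : 0 ≤ l ^ (1 - q) * w ^ q := by positivity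
    linarith
  · have hw0 : 0 < w := by linarith
    have h1 : w ^ (1 - q) ≤ l ^ (1 - q) := Real.rpow_le_rpow_of_nonpos hl h (by linarith)
    have h2 : w = w ^ (1 - q) * w ^ q := by
      rw [← Real.rpow_add hw0]; simp
    have h3 : w ^ (1 - q) * w ^ q ≤ l ^ (1 - q) * w ^ q := by gcongr
    linarith

lemma aux_slice {n : ℕ} (hn : 2 ≤ n) (g : Rn n → ℝ≥0∞) (hg : Measurable g) (B : Set (Rn n))
    (q : ℝ) (hq : 1 < q) (Θ : Rn n → ℝ) (hΘ : Measurable Θ) (hΘ0 : ∀ y, 0 ≤ Θ y) (K : ℝ≥0∞)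
    (hK : ∫⁻ y in B, ENNReal.ofReal (Θ y ^ q) ≤ K * volume B) (hB : volume B ≠ ⊤)
    (s : ℝ) (hs : s ∈ Ioo (0 : ℝ) 1) :
    ∫⁻ y in B, ∫⁻ z in B, ENNReal.ofReal (Θ y) * g ((1 - s) • z + s • y) ≤
      (volume B * (volume B) ^ (1 - 1 / (n : ℝ)) * (∫⁻ z, g z ^ (n : ℝ)) ^ (1 / (n : ℝ))) *
      (2 * ENNReal.ofReal ((1 - s) ^ (-(1 / 2) : ℝ)) +
        K * ENNReal.ofReal ((1 - s) ^ ((q - 1) / 2 - 1))) := by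
  obtain ⟨hs0, hs1⟩ := hs
  have hs1' : 0 < 1 - s := by linarith
  set V := volume B with hV
  set H := V ^ (1 - 1 / (n : ℝ)) with hH
  set N := (∫⁻ z, g z ^ (n : ℝ)) ^ (1 / (n : ℝ)) with hN
  set l : ℝ := (1 - s) ^ (-(1 / 2) : ℝ) with hl
  have hl0 : 0 < l := by positivity
  have hmJ : Measurable fun p : Rn n × Rn n => g ((1 - s) • p.2 + s • p.1) :=
    hg.comp (by fun_prop)
  have hsec : ∀ y, Measurable fun z => g ((1 - s) • z + s • y) := fun y => hg.comp (by fun_prop)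
  have hJm : Measurable fun y => ∫⁻ z in B, g ((1 - s) • z + s • y) :=
    hmJ.lintegral_prod_right'
  have hA : ∀ y, ∫⁻ z in B, g ((1 - s) • z + s • y) ≤ H * ENNReal.ofReal (1 - s)⁻¹ * N :=
    fun y => aux_holder hn g hg B (1 - s) hs1' (s • y)
  have hG : ∫⁻ y in B, ∫⁻ z in B, g ((1 - s) • z + s • y) ≤ 2 * (V * H * N) := by
    rcases le_total s (1 / 2) with h | h
    · calc _ ≤ ∫⁻ y in B, H * 2 * N := by
            refine lintegral_mono fun y => (hA y).trans ?_
            gcongr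
            have : (1 - s)⁻¹ ≤ 2 := by
              rw [inv_le_comm₀ hs1' two_pos]; linarith
            simpa using ENNReal.ofReal_le_ofReal this
        _ = _ := by
            rw [lintegral_const, Measure.restrict_apply_univ]; ring
    · have hsw : ∫⁻ y in B, ∫⁻ z in B, g ((1 - s) • z + s • y)
          = ∫⁻ z in B, ∫⁻ y in B, g ((1 - s) • z + s • y) := by
        have : IsFiniteMeasure (volume.restrict B) := ⟨by simpa using hB.lt_top⟩
        exact lintegral_lintegral_swap hmJ.aemeasurable
      rw [hsw]
      calc _ ≤ ∫⁻ y in B, H * 2 * N := by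
            refine lintegral_mono fun z => ?_
            have h1 := aux_holder hn g hg B s hs0 ((1 - s) • z)
            simp only [add_comm (s • _) _] at h1
            refine h1.trans ?_
            gcongr
            have : s⁻¹ ≤ 2 := by
              rw [inv_le_comm₀ hs0 two_pos]; linarith
            simpa using ENNReal.ofReal_le_ofReal this
        _ = _ := by
            rw [lintegral_const, Measure.restrict_apply_univ]; ring
  have hexp : l ^ (1 - q) * (1 - s)⁻¹ = (1 - s) ^ ((q - 1) / 2 - 1) := by
    rw [hl, ← Real.rpow_mul hs1'.le, ← Real.rpow_neg_one, ← Real.rpow_add hs1']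
    congr 1; ring
  calc ∫⁻ y in B, ∫⁻ z in B, ENNReal.ofReal (Θ y) * g ((1 - s) • z + s • y)
      = ∫⁻ y in B, ENNReal.ofReal (Θ y) * ∫⁻ z in B, g ((1 - s) • z + s • y) := by
        refine lintegral_congr fun y => ?_
        rw [lintegral_const_mul _ (hsec y)]
    _ ≤ ∫⁻ y in B, (ENNReal.ofReal l * (∫⁻ z in B, g ((1 - s) • z + s • y)) +
          ENNReal.ofReal (l ^ (1 - q)) * (H * ENNReal.ofReal (1 - s)⁻¹ * N) *
            ENNReal.ofReal (Θ y ^ q)) := by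
        refine lintegral_mono fun y => ?_
        calc _ ≤ (ENNReal.ofReal l + ENNReal.ofReal (l ^ (1 - q)) * ENNReal.ofReal (Θ y ^ q)) *
              ∫⁻ z in B, g ((1 - s) • z + s • y) := by
                gcongr; exact aux_young _ _ (hΘ0 y) hl0 q hq
          _ = ENNReal.ofReal l * (∫⁻ z in B, g ((1 - s) • z + s • y)) +
              ENNReal.ofReal (l ^ (1 - q)) * (∫⁻ z in B, g ((1 - s) • z + s • y)) *
              ENNReal.ofReal (Θ y ^ q) := by ring
          _ ≤ _ := by gcongr; exact hA y
    _ = ENNReal.ofReal l * (∫⁻ y in B, ∫⁻ z in B, g ((1 - s) • z + s • y)) +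
          ENNReal.ofReal (l ^ (1 - q)) * (H * ENNReal.ofReal (1 - s)⁻¹ * N) *
            ∫⁻ y in B, ENNReal.ofReal (Θ y ^ q) := by
        rw [lintegral_add_left (hJm.const_mul _), lintegral_const_mul _ hJm,
          lintegral_const_mul _ (by fun_prop)]
    _ ≤ ENNReal.ofReal l * (2 * (V * H * N)) +
          ENNReal.ofReal (l ^ (1 - q)) * (H * ENNReal.ofReal (1 - s)⁻¹ * N) * (K * V) := by
        gcongr
    _ = (V * H * N) * (2 * ENNReal.ofReal l +
          K * (ENNReal.ofReal (l ^ (1 - q)) * ENNReal.ofReal (1 - s)⁻¹)) := by ring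
    _ = _ := by
        rw [← ENNReal.ofReal_mul (by positivity), hexp]

lemma aux_rpow_fin (a : ℝ) (ha : -1 < a) :
    ∫⁻ s in Ioo (0 : ℝ) 1, ENNReal.ofReal ((1 - s) ^ a) < ⊤ := by
  have h := (intervalIntegral.intervalIntegrable_rpow' (a := 1) (b := 0) ha).comp_sub_left 1
  simp only [sub_self, sub_zero] at h
  rw [intervalIntegrable_iff_integrableOn_Ioo_of_le zero_le_one] at h
  exact h.lintegral_lt_top

/-- constant -/
def auxD (q : ℝ) (K : ℝ≥0∞) : ℝ≥0∞ :=
  ∫⁻ s in Ioo (0 : ℝ) 1, (2 * ENNReal.ofReal ((1 - s) ^ (-(1 / 2) : ℝ)) +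
        K * ENNReal.ofReal ((1 - s) ^ ((q - 1) / 2 - 1)))

lemma auxD_fin (q : ℝ) (hq : 1 < q) (K : ℝ≥0∞) (hK : K ≠ ⊤) : auxD q K < ⊤ := by
  rw [auxD, lintegral_add_left (by fun_prop), lintegral_const_mul' _ _ (by simp),
    lintegral_const_mul' _ _ hK]
  exact ENNReal.add_lt_top.2 ⟨ENNReal.mul_lt_top (by simp) (aux_rpow_fin _ (by norm_num)),
    ENNReal.mul_lt_top hK.lt_top (aux_rpow_fin _ (by linarith))⟩

lemma aux_gradNorm {n : ℕ} (f : Rn n → ℝ) (y : Rn n) : gradNorm f y = ‖fderiv ℝ f y‖ := by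
  simp [gradNorm, gradient]

lemma aux_ftc {n : ℕ} (f : Rn n → ℝ) (hf : ContDiff ℝ 1 f) (x : Rn n) (t : ℝ)
    (y z : Rn n) (hy : y ∈ ball (0 : Rn n) t) (hz : z ∈ ball (0 : Rn n) t) :
    ENNReal.ofReal |f (x - y) - f (x - z)| ≤ ENNReal.ofReal (2 * t) *
      ∫⁻ s in Ioo (0 : ℝ) 1, ENNReal.ofReal (gradNorm f (x - ((1 - s) • z + s • y))) := by
  let γ : ℝ → ℝ := fun s => f (x - ((1 - s) • z + s • y))
  have hγ : ContDiff ℝ 1 γ := hf.comp (by fun_prop)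
  have h1 := enorm_sub_le_lintegral_deriv_of_contDiffOn_Icc hγ.contDiffOn (zero_le_one (α := ℝ))
  have e0 : γ 0 = f (x - z) := by simp [γ]
  have e1 : γ 1 = f (x - y) := by simp [γ]
  rw [e0, e1, ← restrict_Ioo_eq_restrict_Icc] at h1
  rw [← Real.norm_eq_abs, ofReal_norm]
  refine h1.trans ?_
  rw [← lintegral_const_mul' _ _ ENNReal.ofReal_ne_top]
  refine lintegral_mono fun s => ?_
  have hd : HasDerivAt (fun s : ℝ => x - ((1 - s) • z + s • y)) (-((-1 : ℝ) • z + (1 : ℝ) • y)) s := by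
    have a1 : HasDerivAt (fun s : ℝ => (1 - s) • z) ((-1 : ℝ) • z) s :=
      ((hasDerivAt_id s).const_sub 1).smul_const z
    have a2 : HasDerivAt (fun s : ℝ => s • y) ((1 : ℝ) • y) s := (hasDerivAt_id s).smul_const y
    exact (a1.add a2).const_sub x
  have hd2 : HasDerivAt γ (fderiv ℝ f (x - ((1 - s) • z + s • y)) (-((-1 : ℝ) • z + (1 : ℝ) • y))) s :=
    ((hf.differentiable one_ne_zero).differentiableAt.hasFDerivAt).comp_hasDerivAt s hd
  rw [hd2.deriv, ← ofReal_norm, aux_gradNorm]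
  rw [mem_ball_zero_iff] at hy hz
  have ht : 0 < t := (norm_nonneg _).trans_lt hy
  rw [← ENNReal.ofReal_mul (by positivity)]
  apply ENNReal.ofReal_le_ofReal
  refine (ContinuousLinearMap.le_opNorm _ _).trans ?_
  rw [mul_comm]
  gcongr
  rw [norm_neg]
  refine (norm_add_le _ _).trans ?_
  simp only [neg_smul, one_smul, norm_neg]
  linarith

lemma aux_avg {n : ℕ} (f : Rn n → ℝ) (hf : Continuous f) (x : Rn n) (t : ℝ) (ht : 0 < t) (y : Rn n) :
    ENNReal.ofReal |f (x - y) - ballAvg f x t| ≤ (volume (ball (0 : Rn n) t))⁻¹ *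
      ∫⁻ z in ball (0 : Rn n) t, ENNReal.ofReal |f (x - y) - f (x - z)| := by
  have hV0 : volume (ball (0 : Rn n) t) ≠ 0 := (measure_ball_pos _ _ ht).ne'
  have hVt : volume (ball (0 : Rn n) t) ≠ ⊤ := measure_ball_lt_top.ne
  have hF : Continuous fun z => f (x - z) := by fun_prop
  have hint : IntegrableOn (fun z => f (x - z)) (ball (0 : Rn n) t) :=
    (hF.continuousOn.integrableOn_compact (isCompact_closedBall 0 t)).mono_set ball_subset_closedBall
  have hvol : volume (ball x t) = volume (ball (0 : Rn n) t) :=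
    Measure.addHaar_ball_center volume x t
  have e1 : ∫ u in ball x t, f u = ∫ z in ball (0 : Rn n) t, f (x - z) := by
    have hp : MeasurePreserving (fun z : Rn n => x - z) volume volume :=
      Measure.measurePreserving_sub_left volume x
    have he : MeasurableEmbedding (fun z : Rn n => x - z) :=
      (MeasurableEquiv.subLeft x).measurableEmbedding
    rw [← hp.setIntegral_preimage_emb he]
    congr 2
    ext z
    simp [dist_eq_norm]
  have hreal : (volume (ball (0 : Rn n) t)).toReal ≠ 0 := ENNReal.toReal_ne_zero.2 ⟨hV0, hVt⟩
  have e2 : f (x - y) - ballAvg f x t = (volume (ball (0 : Rn n) t)).toReal⁻¹ *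
      ∫ z in ball (0 : Rn n) t, (f (x - y) - f (x - z)) := by
    have hc : IntegrableOn (fun _ : Rn n => f (x - y)) (ball 0 t) volume := integrableOn_const hVt
    rw [integral_sub hc hint, ballAvg, setAverage_eq, e1, Measure.real, hvol]
    simp only [integral_const, smul_eq_mul, Measure.real, Measure.restrict_apply_univ]
    field_simp
  rw [e2, abs_mul, ENNReal.ofReal_mul (abs_nonneg _), abs_of_nonneg (by positivity),
    ENNReal.ofReal_inv_of_pos (lt_of_le_of_ne ENNReal.toReal_nonneg hreal.symm),
    ENNReal.ofReal_toReal hVt]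
  gcongr
  rw [← Real.norm_eq_abs, ofReal_norm]
  refine (enorm_integral_le_lintegral_enorm _).trans (le_of_eq ?_)
  refine lintegral_congr fun z => ?_
  rw [← Real.norm_eq_abs, ofReal_norm]

lemma aux_sharp {n : ℕ} (hn : 2 ≤ n) (q : ℝ) (hq : 1 < q) (Ω : Rn n → ℝ) (hΩ : Measurable Ω)
    (K : ℝ≥0∞) (f : Rn n → ℝ) (hf : ContDiff ℝ 1 f) (x : Rn n) (t : ℝ) (ht : 0 < t)
    (hK : ∫⁻ y in ball (0 : Rn n) t, ENNReal.ofReal (|Ω (‖y‖⁻¹ • y)| ^ q) ≤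
      K * volume (ball (0 : Rn n) t)) :
    (volume (ball (0 : Rn n) t))⁻¹ *
      ∫⁻ y in ball (0 : Rn n) t,
        ENNReal.ofReal (|Ω (‖y‖⁻¹ • y)| * |f (x - y) - ballAvg f x t|) ≤
    2 * (volume (ball (0 : Rn n) 1)) ^ (-(1 / (n : ℝ))) * auxD q K *
      lqNorm n n (fun x => ENNReal.ofReal (gradNorm f x)) := by
  set B := ball (0 : Rn n) t with hBdef
  set V := volume B with hV
  have hV0 : V ≠ 0 := (measure_ball_pos _ _ ht).ne'
  have hVt : V ≠ ⊤ := measure_ball_lt_top.ne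
  have hBm : MeasurableSet B := measurableSet_ball
  have : IsFiniteMeasure (volume.restrict B) := ⟨by simpa using hVt.lt_top⟩
  have hn2 : (2 : ℝ) ≤ n := by exact_mod_cast hn
  let Θ : Rn n → ℝ := fun y => |Ω (‖y‖⁻¹ • y)|
  have hΘ : Measurable Θ := (hΩ.comp aux_pimeas).abs
  let g : Rn n → ℝ≥0∞ := fun u => ENNReal.ofReal (gradNorm f (x - u))
  have hgc : Continuous fun u => gradNorm f (x - u) := by
    have h1 : Continuous fun u => ‖fderiv ℝ f u‖ := (hf.continuous_fderiv one_ne_zero).norm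
    have h2 : (fun u => gradNorm f (x - u)) = (fun u => ‖fderiv ℝ f u‖) ∘ fun u => x - u := by
      ext u; simp [aux_gradNorm]
    rw [h2]
    exact h1.comp (by fun_prop)
  have hg : Measurable g := hgc.measurable.ennreal_ofReal
  have hN : (∫⁻ z, g z ^ (n : ℝ)) ^ (1 / (n : ℝ))
      = lqNorm n n (fun x => ENNReal.ofReal (gradNorm f x)) := by
    rw [lqNorm]
    congr 1
    exact lintegral_sub_left_eq_self (fun u => ENNReal.ofReal (gradNorm f u) ^ (n : ℝ)) x
  set N := lqNorm n n (fun x => ENNReal.ofReal (gradNorm f x)) with hNdef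
  have hm3 : Measurable fun p : (Rn n × Rn n) × ℝ => g ((1 - p.2) • p.1.2 + p.2 • p.1.1) :=
    hg.comp (by fun_prop)
  have hmy : ∀ y, Measurable fun p : Rn n × ℝ => g ((1 - p.2) • p.1 + p.2 • y) :=
    fun y => hg.comp (by fun_prop)
  have step1 : ∀ y ∈ B, ENNReal.ofReal (Θ y * |f (x - y) - ballAvg f x t|) ≤
      V⁻¹ * ENNReal.ofReal (2 * t) * ∫⁻ s in Ioo (0 : ℝ) 1, ∫⁻ z in B,
        ENNReal.ofReal (Θ y) * g ((1 - s) • z + s • y) := by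
    intro y hy
    rw [ENNReal.ofReal_mul (abs_nonneg _)]
    calc _ ≤ ENNReal.ofReal (Θ y) * (V⁻¹ * ∫⁻ z in B, ENNReal.ofReal (2 * t) *
          ∫⁻ s in Ioo (0 : ℝ) 1, g ((1 - s) • z + s • y)) := by
          gcongr
          refine (aux_avg f hf.continuous x t ht y).trans ?_
          exact mul_le_mul' le_rfl
            (setLIntegral_mono' hBm fun z hz => aux_ftc f hf x t y z hy hz)
      _ = V⁻¹ * ENNReal.ofReal (2 * t) * (ENNReal.ofReal (Θ y) * ∫⁻ z in B,
          ∫⁻ s in Ioo (0 : ℝ) 1, g ((1 - s) • z + s • y)) := by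
          rw [lintegral_const_mul' _ _ ENNReal.ofReal_ne_top]; ring
      _ = V⁻¹ * ENNReal.ofReal (2 * t) * (ENNReal.ofReal (Θ y) * ∫⁻ s in Ioo (0 : ℝ) 1,
          ∫⁻ z in B, g ((1 - s) • z + s • y)) := by
          rw [lintegral_lintegral_swap (hmy y).aemeasurable]
      _ = _ := by
          rw [← lintegral_const_mul' _ _ ENNReal.ofReal_ne_top]
          simp_rw [← lintegral_const_mul' _ _ ENNReal.ofReal_ne_top]
  have hsw : ∫⁻ y in B, ∫⁻ s in Ioo (0 : ℝ) 1, ∫⁻ z in B,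
        ENNReal.ofReal (Θ y) * g ((1 - s) • z + s • y) =
      ∫⁻ s in Ioo (0 : ℝ) 1, ∫⁻ y in B, ∫⁻ z in B,
        ENNReal.ofReal (Θ y) * g ((1 - s) • z + s • y) := by
    refine lintegral_lintegral_swap (Measurable.aemeasurable ?_)
    refine Measurable.lintegral_prod_right'
      (f := fun p : (Rn n × ℝ) × Rn n => ENNReal.ofReal (Θ p.1.1) * g ((1 - p.1.2) • p.2 + p.1.2 • p.1.1)) ?_
    exact (hΘ.comp (by fun_prop)).ennreal_ofReal.mul (hg.comp (by fun_prop))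
  have hVe : V = ENNReal.ofReal (t ^ n) * volume (ball (0 : Rn n) 1) := by
    have := Measure.addHaar_ball_of_pos (volume : Measure (Rn n)) 0 ht
    rwa [finrank_euclideanSpace_fin] at this
  have hscale : V⁻¹ * V ^ (1 - 1 / (n : ℝ)) * ENNReal.ofReal t =
      (volume (ball (0 : Rn n) 1)) ^ (-(1 / (n : ℝ))) := by
    have h1 : V⁻¹ * V ^ (1 - 1 / (n : ℝ)) = V ^ (-(1 / (n : ℝ))) := by
      rw [← ENNReal.rpow_neg_one, ← ENNReal.rpow_add _ _ hV0 hVt]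
      congr 1; ring
    rw [h1, hVe, ENNReal.mul_rpow_of_ne_top ENNReal.ofReal_ne_top measure_ball_lt_top.ne,
      ENNReal.ofReal_rpow_of_pos (by positivity)]
    have h2 : (t ^ n) ^ (-(1 / (n : ℝ))) = t⁻¹ := by
      rw [Real.rpow_neg (by positivity), one_div, Real.pow_rpow_inv_natCast ht.le (by omega)]
    rw [h2, mul_right_comm, ← ENNReal.ofReal_mul (by positivity), inv_mul_cancel₀ ht.ne']
    simp
  calc V⁻¹ * ∫⁻ y in B, ENNReal.ofReal (Θ y * |f (x - y) - ballAvg f x t|)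
      ≤ V⁻¹ * ∫⁻ y in B, V⁻¹ * ENNReal.ofReal (2 * t) * ∫⁻ s in Ioo (0 : ℝ) 1, ∫⁻ z in B,
        ENNReal.ofReal (Θ y) * g ((1 - s) • z + s • y) := by
        exact mul_le_mul' le_rfl (setLIntegral_mono' hBm step1)
    _ = V⁻¹ * (V⁻¹ * ENNReal.ofReal (2 * t) * ∫⁻ s in Ioo (0 : ℝ) 1, ∫⁻ y in B, ∫⁻ z in B,
        ENNReal.ofReal (Θ y) * g ((1 - s) • z + s • y)) := by
        rw [lintegral_const_mul' _ _ (ENNReal.mul_ne_top (ENNReal.inv_ne_top.2 hV0)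
          ENNReal.ofReal_ne_top), hsw]
    _ ≤ V⁻¹ * (V⁻¹ * ENNReal.ofReal (2 * t) * ((V * V ^ (1 - 1 / (n : ℝ)) * N) * auxD q K)) := by
        gcongr
        rw [auxD, ← lintegral_const_mul _ (by fun_prop)]
        refine setLIntegral_mono' measurableSet_Ioo fun s hs => ?_
        rw [← hN]
        exact aux_slice hn g hg B q hq Θ hΘ (fun _ => abs_nonneg _) K hK hVt s hs
    _ = (V⁻¹ * V) * (V⁻¹ * V ^ (1 - 1 / (n : ℝ)) * ENNReal.ofReal t) * 2 * auxD q K * N := by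
        rw [ENNReal.ofReal_mul zero_le_two, ENNReal.ofReal_ofNat]
        ring
    _ = _ := by
        rw [ENNReal.inv_mul_cancel hV0 hVt, hscale]
        ring

lemma aux_natural {n : ℕ} (Ω f : Rn n → ℝ) (hf : Continuous f) (hΩ : Measurable Ω)
    (c : ℝ≥0∞) (hc : c ≠ ⊤)
    (hcone : ∀ t : ℝ, 0 < t → (volume.restrict (ball (0 : Rn n) t)).map (fun y => ‖y‖⁻¹ • y)
      = (ENNReal.ofReal (t ^ n) * c) • sphereMeasure n)
    (hΩint : Integrable Ω (sphereMeasure n))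
    (hΩmean : ∫ y, Ω y ∂sphereMeasure n = 0) (x : Rn n) :
    roughMaxNatural n Ω f x ≤ roughMaxSharp n 1 Ω f x := by
  rw [roughMaxNatural, roughMaxSharp]
  refine iSup₂_mono fun t ht => ?_
  have hV0 : volume (ball (0 : Rn n) t) ≠ 0 := (measure_ball_pos _ _ ht).ne'
  have hVt : volume (ball (0 : Rn n) t) ≠ ⊤ := measure_ball_lt_top.ne
  have hI : IntegrableOn (fun y => Ω (‖y‖⁻¹ • y)) (ball (0 : Rn n) t) := by
    have h1 : Integrable Ω ((volume.restrict (ball (0 : Rn n) t)).map (fun y => ‖y‖⁻¹ • y)) := by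
      rw [hcone t ht]
      exact hΩint.smul_measure (ENNReal.mul_ne_top ENNReal.ofReal_ne_top hc)
    exact h1.comp_measurable aux_pimeas
  have hz : ∫ y in ball (0 : Rn n) t, Ω (‖y‖⁻¹ • y) = 0 := by
    have := integral_map (μ := volume.restrict (ball (0 : Rn n) t)) aux_pimeas.aemeasurable
      hΩ.aestronglyMeasurable (f := Ω)
    rw [← this, hcone t ht, integral_smul_measure, hΩmean, smul_zero]
  set a := ballAvg f x t
  have hF : Continuous fun z => f (x - z) := by fun_prop
  have hIF : IntegrableOn (fun y => Ω (‖y‖⁻¹ • y) * f (x - y)) (ball (0 : Rn n) t) := by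
    obtain ⟨M, hM⟩ := (isCompact_closedBall (0 : Rn n) t).exists_bound_of_continuousOn hF.continuousOn
    refine Integrable.mul_bdd (c := M) hI hF.aestronglyMeasurable ?_
    filter_upwards [ae_restrict_mem measurableSet_ball] with y hy
    exact hM y (ball_subset_closedBall hy)
  have e : ∫ y in ball (0 : Rn n) t, Ω (‖y‖⁻¹ • y) * f (x - y) =
      ∫ y in ball (0 : Rn n) t, Ω (‖y‖⁻¹ • y) * (f (x - y) - a) := by
    simp_rw [mul_sub]
    rw [integral_sub hIF (hI.mul_const a), integral_mul_const, hz]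
    simp
  have hreal : (volume (ball (0 : Rn n) t)).toReal ≠ 0 := ENNReal.toReal_ne_zero.2 ⟨hV0, hVt⟩
  rw [setAverage_eq, e, smul_eq_mul, abs_mul, ENNReal.ofReal_mul (abs_nonneg _), Measure.real,
    abs_of_nonneg (by positivity),
    ENNReal.ofReal_inv_of_pos (lt_of_le_of_ne ENNReal.toReal_nonneg hreal.symm),
    ENNReal.ofReal_toReal hVt, sub_self, Real.rpow_zero, ENNReal.ofReal_one, one_mul]
  gcongr
  rw [← Real.norm_eq_abs, ofReal_norm]
  refine (enorm_integral_le_lintegral_enorm _).trans (le_of_eq ?_)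
  refine lintegral_congr fun z => ?_
  rw [← abs_mul, ← Real.norm_eq_abs, ofReal_norm]

/-- For `Ω ∈ L^{r,∞}(𝕊^{n-1})`, `1 < r < ∞`, of mean zero:
`‖M^♮_Ω f‖_∞ ≤ ‖M^#_Ω f‖_∞ ≤ C ‖∇f‖_{L^n}` for `f ∈ C_c^∞`. -/
theorem statement14 (n : ℕ) (hn : 2 ≤ n) (r : ℝ) (hr : 1 < r)
    (Ω : Rn n → ℝ) (hΩmeas : Measurable Ω)
    (hΩweak : weakLorentzSphere n r Ω < ⊤)
    (hΩint : Integrable Ω (sphereMeasure n))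
    (hΩmean : ∫ y, Ω y ∂sphereMeasure n = 0) :
    ∃ C > (0 : ℝ), ∀ f : Rn n → ℝ, IsCcSmooth f →
      essSup (roughMaxNatural n Ω f) volume ≤ essSup (roughMaxSharp n 1 Ω f) volume ∧
      essSup (roughMaxSharp n 1 Ω f) volume ≤
        ENNReal.ofReal C * lqNorm n n (fun x => ENNReal.ofReal (gradNorm f x)) := by
  obtain ⟨c, hc, hcone⟩ := aux_cone_t hn
  set q : ℝ := (1 + r) / 2 with hqdef
  have hq : 1 < q := by rw [hqdef]; linarith
  have hqr : q < r := by rw [hqdef]; linarith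
  have hJ := aux_Lq hn r q hq hqr Ω hΩmeas hΩweak
  set J := ∫⁻ y, ENNReal.ofReal (|Ω y| ^ q) ∂sphereMeasure n with hJdef
  set v := volume (ball (0 : Rn n) 1) with hv
  have hv0 : v ≠ 0 := (measure_ball_pos _ _ one_pos).ne'
  have hvt : v ≠ ⊤ := measure_ball_lt_top.ne
  set K : ℝ≥0∞ := c * J * v⁻¹ with hKdef
  have hKt : K ≠ ⊤ := ENNReal.mul_ne_top (ENNReal.mul_ne_top hc hJ.ne) (ENNReal.inv_ne_top.2 hv0)
  have hK : ∀ t : ℝ, 0 < t →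
      ∫⁻ y in ball (0 : Rn n) t, ENNReal.ofReal (|Ω (‖y‖⁻¹ • y)| ^ q) ≤
        K * volume (ball (0 : Rn n) t) := by
    intro t ht
    have h1 : Measurable fun y => ENNReal.ofReal (|Ω y| ^ q) :=
      (hΩmeas.abs.pow_const q).ennreal_ofReal
    have h2 := lintegral_map (μ := volume.restrict (ball (0 : Rn n) t)) h1 aux_pimeas
    rw [← h2, hcone t ht, lintegral_smul_measure, smul_eq_mul]
    have h3 := Measure.addHaar_ball_of_pos (volume : Measure (Rn n)) 0 ht
    rw [finrank_euclideanSpace_fin] at h3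
    rw [h3, hKdef]
    apply le_of_eq
    calc _ = ENNReal.ofReal (t ^ n) * c * J * 1 := by rw [mul_one]
      _ = ENNReal.ofReal (t ^ n) * c * J * (v⁻¹ * v) := by rw [ENNReal.inv_mul_cancel hv0 hvt]
      _ = _ := by ring
  set A : ℝ≥0∞ := 2 * v ^ (-(1 / (n : ℝ))) * auxD q K with hA
  have hAt : A ≠ ⊤ := by
    refine ENNReal.mul_ne_top (ENNReal.mul_ne_top (by simp) ?_) (auxD_fin q hq K hKt).ne
    rw [ENNReal.rpow_neg]
    refine ENNReal.inv_ne_top.2 ?_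
    exact (ENNReal.rpow_pos (pos_iff_ne_zero.2 hv0) hvt).ne'
  refine ⟨A.toReal + 1, by positivity, fun f hf => ⟨?_, ?_⟩⟩
  · exact essSup_mono_ae (Eventually.of_forall fun x =>
      aux_natural Ω f hf.1.continuous hΩmeas c hc hcone hΩint hΩmean x)
  · refine essSup_le_of_ae_le _ (Eventually.of_forall fun x => ?_)
    rw [roughMaxSharp]
    refine iSup₂_le fun t ht => ?_
    rw [sub_self, Real.rpow_zero, ENNReal.ofReal_one, one_mul]
    refine (aux_sharp hn q hq Ω hΩmeas K f (hf.1.of_le (by exact_mod_cast le_top)) x t ht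
      (hK t ht)).trans ?_
    refine mul_le_mul' ?_ le_rfl
    change A ≤ _
    calc A = ENNReal.ofReal A.toReal := (ENNReal.ofReal_toReal hAt).symm
      _ ≤ _ := ENNReal.ofReal_le_ofReal (by linarith)

end
end
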